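/- Let q be a prime number. Every continuous map f : Δ_1^{3(q-1)} → ℝ² admits at least (1/((q−1)!)²) · (q/2)^{2(q−1)} winding partitions (with d = 2); i.e. the cardinality of the set of winding partitions of f is at least the real number (1/((q−1)!)²) · (q/2)^{2(q−1)}. -/

import Mathlib

open scoped BigOperators

noncomputable section

/-- Euclidean space `ℝ^d`. -/
abbrev Euc (d : ℕ) : Type := EuclideanSpace ℝ (Fin d)

/-- The standard `N`-simplex `Δ^N ⊆ ℝ^{N+1}`. -/
def stdSimp (N : ℕ) : Set (Fin (N+1) → ℝ) :=
  {x | (∀ i, 0 ≤ x i) ∧ ∑ i, x i = 1}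

/-- The face `σ_S` of `Δ^N` spanned by the vertices in `S`. -/
def simpFace {N : ℕ} (S : Finset (Fin (N+1))) : Set (Fin (N+1) → ℝ) :=
  {x ∈ stdSimp N | ∀ i ∉ S, x i = 0}

/-- The `k`-skeleton `Δ_k^N` of the standard `N`-simplex. -/
def skel (N k : ℕ) : Set (Fin (N+1) → ℝ) :=
  {x ∈ stdSimp N | {i | x i ≠ 0}.ncard ≤ k + 1}

/-- A Tverberg partition for (the relevant restriction of) `f`: a set of `q`
pairwise disjoint nonempty vertex subsets whose faces have images with a common point. -/
def IsTverbergPartition (q : ℕ) {N d : ℕ}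
    (f : (Fin (N+1) → ℝ) → Euc d) (P : Finset (Finset (Fin (N+1)))) : Prop :=
  P.card = q ∧ (∀ S ∈ P, S.Nonempty) ∧
  (∀ S ∈ P, ∀ T ∈ P, S ≠ T → Disjoint S T) ∧
  (⋂ S ∈ P, f '' simpFace S).Nonempty

/-- The boundary `∂σ_S` of the face `σ_S`. -/
def simpFaceBoundary {N : ℕ} (S : Finset (Fin (N+1))) : Set (Fin (N+1) → ℝ) :=
  {x ∈ simpFace S | ∃ i ∈ S, x i = 0}

/-- `p ∈ W_{≠0}(f|_{∂σ_S})`: either `p` is in the image of the boundary, or the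
corestriction of `f|_{∂σ_S}` to `ℝ^d \ {p}` is not nullhomotopic (there is no
continuous map agreeing with `f` on `∂σ_S` that is homotopic to a constant). -/
def InWne (d : ℕ) {N : ℕ} (f : (Fin (N+1) → ℝ) → Euc d)
    (S : Finset (Fin (N+1))) (p : Euc d) : Prop :=
  p ∈ f '' simpFaceBoundary S ∨
  ¬ ∃ (g : C(↥(simpFaceBoundary S), ↥({p}ᶜ : Set (Euc d))))
      (y : ↥({p}ᶜ : Set (Euc d))),
      (∀ x : ↥(simpFaceBoundary S), (g x : Euc d) = f ↑x) ∧
      g.Homotopic (ContinuousMap.const _ y)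

/-- A winding partition (in dimension `d`) for `f` defined on the `(d-1)`-skeleton:
`q` pairwise disjoint nonempty vertex subsets, each of size at most `d+1`, together
with a winding point `p`. -/
def IsWindingPartition (d q : ℕ) {N : ℕ}
    (f : (Fin (N+1) → ℝ) → Euc d) (P : Finset (Finset (Fin (N+1)))) : Prop :=
  P.card = q ∧ (∀ S ∈ P, S.Nonempty) ∧ (∀ S ∈ P, S.card ≤ d + 1) ∧
  (∀ S ∈ P, ∀ T ∈ P, S ≠ T → Disjoint S T) ∧
  ∃ p : Euc d, ∀ S ∈ P,
    (S.card ≤ d → p ∈ f '' simpFace S) ∧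
    (S.card = d + 1 → InWne d f S p)

/-!
Put `m = q - 1`, so that the simplex has `3 m + 1` vertices, and give `m` of them each of three
colors, leaving one apex uncolored. A drawing of the complete graph on the vertices is recorded on
a fine integer grid by discrete differential forms with values in an exterior algebra: a vertex by
a two-form concentrated at its position, an edge by the Poincaré dual one-form of its path, and a
triangle by the winding numbers of its boundary. Take the sum of these forms in `q` copies, with
separate generators for each color in each copy, and multiply the copies. The top coefficient of
this product, summed over the grid, counts, with signs and winding numbers as multiplicities, the
`q`-tuples of disjoint rainbow faces that meet in a grid point.

Moving one vertex changes the product of the copies by a homotopy consisting of `q` terms, which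
are permuted by the cyclic shift of the copies. Hence all `q` terms contribute the same, so that
the count modulo `q` does not depend on the drawing. For one explicit drawing it is `± (m !) ^ 3`,
which is nonzero modulo the prime `q`. So every grid drawing has a rainbow `q`-tuple with a common
point, and sampling `f` more and more finely produces, by compactness, a winding partition of `f`
that is rainbow for the given coloring.

This holds for all `(3 m + 1) !` ways of distributing the colors by renaming the vertices, and a
single winding partition is rainbow for at most `(m !) ^ 3 * (3 m + 1) * 6 ^ (m + 1)` of them. For
`q ≥ 5` the quotient is at least the claimed bound, which is at most `1` for `q = 2` and less than
`2` for `q = 3`.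
-/

/-! ### Finite differences on the integer grid -/

/-- The backward difference of a function on the integer grid in the direction `v`. -/
def gridDiff {A : Type*} [AddCommGroup A] (v : ℤ × ℤ) :
    (ℤ × ℤ → A) →+ (ℤ × ℤ → A) where
  toFun F p := F p - F (p - v)
  map_zero' := by ext; simp
  map_add' F G := by ext p; simp only [Pi.add_apply]; abel

local notation "∂₁" => gridDiff (1, 0)
local notation "∂₂" => gridDiff (0, 1)

section Grid

variable {A B : Type*} [AddCommGroup A] [AddCommGroup B]

/-- The half-open box `[-R, R) × [-R, R)` of grid points. -/
def gridBox (R : ℤ) : Finset (ℤ × ℤ) := Finset.Ico (-R) R ×ˢ Finset.Ico (-R) R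

/-- The functions on the grid vanishing outside the box. -/
def boxSupported (R : ℤ) (A : Type*) [AddCommGroup A] : AddSubgroup (ℤ × ℤ → A) where
  carrier := {F | ∀ p ∉ gridBox R, F p = 0}
  zero_mem' _ _ := rfl
  add_mem' hF hG p hp := by simp [hF p hp, hG p hp]
  neg_mem' hF p hp := by simp [hF p hp]

/-- The sum of a function over the closed box `[-R, R] × [-R, R]`, which contains the supports of
the differences of the functions supported in the half-open box. -/
def gridSum (R : ℤ) : (ℤ × ℤ → A) →+ A where
  toFun F := ∑ p ∈ Finset.Icc (-R) R ×ˢ Finset.Icc (-R) R, F p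
  map_zero' := by simp
  map_add' F G := by simp [Finset.sum_add_distrib]

/-- Summation along rows, a right inverse of `∂₁` on the functions supported in the box. -/
def rowPrimitive (R : ℤ) : (ℤ × ℤ → A) →+ (ℤ × ℤ → A) where
  toFun F p := ∑ i ∈ Finset.Ico (-R) (p.1 + 1), F (i, p.2)
  map_zero' := by ext; simp
  map_add' F G := by ext; simp [Finset.sum_add_distrib]

lemma gridDiff_apply (v : ℤ × ℤ) (F : ℤ × ℤ → A) (p : ℤ × ℤ) :
    gridDiff v F p = F p - F (p - v) := rfl

lemma gridDiff_comp (φ : A →+ B) (v : ℤ × ℤ) (F : ℤ × ℤ → A) :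
    gridDiff v (fun p => φ (F p)) = fun p => φ (gridDiff v F p) := by
  ext; simp [gridDiff_apply]

lemma gridDiff_const (v : ℤ × ℤ) (a : A) : gridDiff v (fun _ => a) = 0 := by
  ext; simp [gridDiff_apply]

lemma gridDiff_mul {S : Type*} [Ring S] (v : ℤ × ℤ) (F G : ℤ × ℤ → S) :
    gridDiff v (F * G) =
      gridDiff v F * G + F * gridDiff v G - gridDiff v F * gridDiff v G := by
  ext p; simp only [gridDiff_apply, Pi.mul_apply, Pi.add_apply, Pi.sub_apply]; noncomm_ring

lemma mem_gridBox {R : ℤ} {p : ℤ × ℤ} :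
    p ∈ gridBox R ↔ (-R ≤ p.1 ∧ p.1 < R) ∧ -R ≤ p.2 ∧ p.2 < R := by
  simp [gridBox]

lemma comp_mem_boxSupported (φ : A →+ B) {R : ℤ} {F : ℤ × ℤ → A} (hF : F ∈ boxSupported R A) :
    (fun p => φ (F p)) ∈ boxSupported R B :=
  fun p hp => by simp [hF p hp]

lemma map_gridSum (φ : A →+ B) (R : ℤ) (F : ℤ × ℤ → A) :
    φ (gridSum R F) = gridSum R (fun p => φ (F p)) :=
  map_sum φ _ _

lemma gridSum_gridDiff {R : ℤ} {F : ℤ × ℤ → A} (hF : F ∈ boxSupported R A) {v : ℤ × ℤ}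
    (hv : 0 ≤ v) (hv' : v ≤ 1) : gridSum R (gridDiff v F) = 0 := by
  have hsum : ∀ u : ℤ × ℤ, 0 ≤ u → u ≤ 1 →
      ∑ p ∈ Finset.Icc (-R) R ×ˢ Finset.Icc (-R) R, F (p - u) = ∑ᶠ p, F p := by
    intro u hu hu'
    rw [← finsum_comp_equiv (Equiv.subRight u)]
    refine (finsum_eq_sum_of_support_subset _ fun p hp => ?_).symm
    have hp' := mem_gridBox.mp (not_not.mp (mt (hF _) hp))
    simp only [Prod.le_def, Prod.fst_sub, Prod.snd_sub, Prod.fst_zero,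
      Prod.snd_zero, Prod.fst_one, Prod.snd_one] at hu hu' hp'
    simp only [Finset.coe_product, Finset.coe_Icc, Set.mem_prod, Set.mem_Icc]
    omega
  calc gridSum R (gridDiff v F)
      = ∑ p ∈ Finset.Icc (-R) R ×ˢ Finset.Icc (-R) R, (F (p - 0) - F (p - v)) := by
        simp [gridSum, gridDiff_apply]
    _ = 0 := by
        rw [Finset.sum_sub_distrib, hsum 0 le_rfl zero_le_one, hsum v hv hv', sub_self]

lemma sum_Ico_sub_pred {g : ℤ → A} {a b : ℤ} (h : ∀ i < a, g i = 0) :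
    ∑ i ∈ Finset.Ico a (b + 1), (g i - g (i - 1)) = g b := by
  rcases le_or_gt a (b + 1) with hab | hab
  · obtain ⟨n, hn⟩ := Int.le.dest hab
    obtain rfl : b = a + n - 1 := by omega
    clear hab hn
    induction n with
    | zero => simp [h (a - 1) (by omega)]
    | succ n ih =>
      rw [sub_add_cancel] at ih ⊢
      rw [Nat.cast_succ, ← add_assoc, ← Order.succ_eq_add_one (a + n : ℤ),
        ← Finset.insert_Ico_right_eq_Ico_succ (by omega), Finset.sum_insert (by simp), ih]
      simp
  · rw [Finset.Ico_eq_empty (by omega), Finset.sum_empty, h b (by omega)]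

lemma rowPrimitive_apply (R : ℤ) (F : ℤ × ℤ → A) (p : ℤ × ℤ) :
    rowPrimitive R F p = ∑ i ∈ Finset.Ico (-R) (p.1 + 1), F (i, p.2) := rfl

lemma map_rowPrimitive (φ : A →+ B) (R : ℤ) (F : ℤ × ℤ → A) (p : ℤ × ℤ) :
    φ (rowPrimitive R F p) = rowPrimitive R (fun p => φ (F p)) p := by
  simp [rowPrimitive_apply]

lemma rowPrimitive_mem {σ : Type*} [SetLike σ A] [AddSubmonoidClass σ A] {S : σ} {R : ℤ}
    {F : ℤ × ℤ → A} (hF : ∀ p, F p ∈ S) (p : ℤ × ℤ) : rowPrimitive R F p ∈ S := by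
  rw [rowPrimitive_apply]; exact sum_mem fun _ _ => hF _

lemma rowPrimitive_gridDiff_fst {R : ℤ} {F : ℤ × ℤ → A} (hF : F ∈ boxSupported R A) :
    rowPrimitive R (∂₁ F) = F := by
  ext ⟨x, y⟩
  simpa [rowPrimitive_apply, gridDiff_apply] using
    sum_Ico_sub_pred (g := fun i => F (i, y)) (a := -R) (b := x)
      fun i hi => hF _ (by simp [mem_gridBox]; omega)

lemma gridDiff_fst_rowPrimitive {R : ℤ} {F : ℤ × ℤ → A} (hF : F ∈ boxSupported R A) :
    ∂₁ (rowPrimitive R F) = F := by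
  ext ⟨x, y⟩
  simp only [rowPrimitive_apply, gridDiff_apply, Prod.mk_sub_mk, sub_zero, sub_add_cancel]
  rcases le_or_gt (-R) x with h | h
  · rw [← Order.succ_eq_add_one x, ← Finset.insert_Ico_right_eq_Ico_succ h,
      Finset.sum_insert (by simp), add_sub_cancel_right]
  · rw [Finset.Ico_eq_empty (by omega), Finset.Ico_eq_empty (by omega),
      hF _ (by simp [mem_gridBox]; omega), sub_self]

lemma gridDiff_snd_rowPrimitive {R : ℤ} {F G : ℤ × ℤ → A} (hG : G ∈ boxSupported R A)
    (h : ∂₂ F = ∂₁ G) : ∂₂ (rowPrimitive R F) = G := by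
  rw [← rowPrimitive_gridDiff_fst hG, ← h]
  ext p; simp [rowPrimitive_apply, gridDiff_apply]

lemma rowPrimitive_mem_boxSupported {R : ℤ} {F G : ℤ × ℤ → A} (hF : F ∈ boxSupported R A)
    (hG : G ∈ boxSupported R A) (h : ∂₂ F = ∂₁ G) : rowPrimitive R F ∈ boxSupported R A := by
  have hrow : ∀ x y : ℤ, (y < -R ∨ R ≤ y) → rowPrimitive R F (x, y) = 0 := fun x y hy => by
    rw [rowPrimitive_apply]
    exact Finset.sum_eq_zero fun i _ => hF (i, y) (by simp [mem_gridBox]; omega)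
  rintro ⟨x, y⟩ hp
  simp only [mem_gridBox, not_and_or, not_le, not_lt] at hp
  rcases hp with (hx | hx) | hy
  · rw [rowPrimitive_apply, Finset.Ico_eq_empty (by dsimp only; omega), Finset.sum_empty]
  · rw [← sum_Ico_sub_pred (g := fun j => rowPrimitive R F (x, j)) (a := -R)
      fun j hj => hrow x j (.inl hj)]
    refine Finset.sum_eq_zero fun j _ => ?_
    have hdiff := congrFun (gridDiff_snd_rowPrimitive hG h) (x, j)
    rw [hG _ (by simp [mem_gridBox]; omega), gridDiff_apply] at hdiff
    simpa using hdiff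
  · exact hrow x y hy

lemma eq_zero_of_gridDiff_fst_eq_zero {R : ℤ} {F : ℤ × ℤ → A} (hF : F ∈ boxSupported R A)
    (h : ∂₁ F = 0) : F = 0 := by
  rw [← rowPrimitive_gridDiff_fst hF, h, map_zero]

end Grid

/-! ### Parity in the exterior algebra -/

section Parity

open CliffordAlgebra

variable {k M : Type*} [CommRing k] [AddCommGroup M] [Module k M]

local notation "Λ" => ExteriorAlgebra k M
local notation "ε" => ExteriorAlgebra.ι k

/-- The even part of the exterior algebra. -/
abbrev evenPart (k M : Type*) [CommRing k] [AddCommGroup M] [Module k M] :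
    Submodule k (ExteriorAlgebra k M) :=
  evenOdd (0 : QuadraticForm k M) 0

/-- The odd part of the exterior algebra. -/
abbrev oddPart (k M : Type*) [CommRing k] [AddCommGroup M] [Module k M] :
    Submodule k (ExteriorAlgebra k M) :=
  evenOdd (0 : QuadraticForm k M) 1

/-- The involution of the exterior algebra that is `1` on the even part and `-1` on the odd
part. -/
abbrev parityInv (k M : Type*) [CommRing k] [AddCommGroup M] [Module k M] :
    ExteriorAlgebra k M →ₐ[k] ExteriorAlgebra k M :=
  involute (Q := (0 : QuadraticForm k M))

lemma ι_mem_oddPart (m : M) : ε m ∈ oddPart k M := ι_mem_evenOdd_one _ m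

variable {a b : ExteriorAlgebra k M}

lemma mul_mem_oddPart_of_odd_even (ha : a ∈ oddPart k M) (hb : b ∈ evenPart k M) :
    a * b ∈ oddPart k M :=
  evenOdd_mul_le _ 1 0 (Submodule.mul_mem_mul ha hb)

lemma mul_mem_evenPart (ha : a ∈ oddPart k M) (hb : b ∈ oddPart k M) : a * b ∈ evenPart k M :=
  evenOdd_mul_le _ 1 1 (Submodule.mul_mem_mul ha hb)

lemma ι_mul_eq_parityInv_mul_ι (m : M) (b : Λ) : ε m * b = parityInv k M b * ε m := by
  induction b using ExteriorAlgebra.induction with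
  | algebraMap r => rw [AlgHom.commutes, Algebra.commutes]
  | ι x =>
    rw [ExteriorAlgebra.ι, involute_ι, neg_mul, eq_neg_iff_add_eq_zero]
    exact ExteriorAlgebra.ι_add_mul_swap m x
  | mul a b ha hb => rw [map_mul, ← mul_assoc, ha, mul_assoc, hb, mul_assoc]
  | add a b ha hb => rw [map_add, mul_add, add_mul, ha, hb]

lemma mul_ι_eq_ι_mul_parityInv (m : M) (b : Λ) : b * ε m = ε m * parityInv k M b := by
  rw [ι_mul_eq_parityInv_mul_ι, involute_involute]

lemma mul_comm_of_mem_evenPart (ha : a ∈ evenPart k M) (b : Λ) : a * b = b * a := by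
  induction a, ha using even_induction with
  | algebraMap r => exact Algebra.commutes r b
  | add a a' ha ha' ih ih' => rw [add_mul, mul_add, ih, ih']
  | ι_mul_ι_mul m n a _ ih =>
    change ε m * ε n * a * b = b * (ε m * ε n * a)
    rw [mul_assoc, ih, ← mul_assoc, mul_assoc (ε m), ι_mul_eq_parityInv_mul_ι n, ← mul_assoc,
      ι_mul_eq_parityInv_mul_ι m, involute_involute]
    simp only [mul_assoc]

lemma anticomm_of_mem_oddPart (ha : a ∈ oddPart k M) (hb : b ∈ oddPart k M) :
    a * b = -(b * a) := by
  induction a, ha using odd_induction with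
  | ι m =>
    change ε m * b = -(b * ε m)
    rw [ι_mul_eq_parityInv_mul_ι, involute_eq_of_mem_odd hb, neg_mul]
  | add a a' ha ha' ih ih' => rw [add_mul, mul_add, ih, ih', neg_add]
  | ι_mul_ι_mul m n a _ ih =>
    have hmn : ε m * ε n ∈ evenPart k M := mul_mem_evenPart (ι_mem_oddPart m) (ι_mem_oddPart n)
    change ε m * ε n * a * b = -(b * (ε m * ε n * a))
    rw [mul_assoc, ih, mul_neg, ← mul_assoc, mul_comm_of_mem_evenPart hmn, mul_assoc]

lemma ι_mul_ι_mul_cancel (m : M) (a : Λ) : ε m * (ε m * a) = 0 := by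
  rw [← mul_assoc, ExteriorAlgebra.ι_sq_zero, zero_mul]

end Parity

/-! ### Exterior calculus on the grid -/

section Fields

variable {k M V : Type*} [CommRing k] [AddCommGroup M] [Module k M]

local notation "Λ" => ExteriorAlgebra k M
local notation "ε" => ExteriorAlgebra.ι k

/-- The discrete exterior derivative, with the vectors `x` and `y` playing the roles of `dx` and
`dy`. -/
def extD (x y : M) : (ℤ × ℤ → ExteriorAlgebra k M) →+ (ℤ × ℤ → ExteriorAlgebra k M) where
  toFun F p := ε x * ∂₁ F p + ε y * ∂₂ F p
  map_zero' := by ext; simp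
  map_add' F G := by ext; simp only [map_add, Pi.add_apply, mul_add]; abel

/-- The ideal generated by a scalar `c` and a vector `m`. It is two-sided, although it is
introduced as a left ideal. -/
abbrev labelIdeal (c : k) (m : M) : Ideal (ExteriorAlgebra k M) :=
  Ideal.span {algebraMap k _ c, ε m}

section LabelIdeal

variable {c : k} {m : M} {a b : ExteriorAlgebra k M}

lemma smul_mem_labelIdeal (a : Λ) : c • a ∈ labelIdeal c m := by
  rw [Algebra.smul_def, Algebra.commutes]
  exact Ideal.mul_mem_left _ _ (Ideal.subset_span (by simp))

lemma mul_ι_mem_labelIdeal (a : Λ) : a * ε m ∈ labelIdeal c m :=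
  Ideal.mul_mem_left _ _ (Ideal.subset_span (by simp))

lemma ι_mul_mem_labelIdeal (a : Λ) : ε m * a ∈ labelIdeal c m := by
  rw [ι_mul_eq_parityInv_mul_ι]; exact mul_ι_mem_labelIdeal _

lemma exists_of_mem_labelIdeal (ha : a ∈ labelIdeal c m) : ∃ u v : Λ, a = c • u + v * ε m := by
  obtain ⟨u, v, rfl⟩ := Ideal.mem_span_pair.mp ha
  exact ⟨u, v, by rw [Algebra.smul_def, Algebra.commutes]⟩

lemma mul_mem_labelIdeal_right (ha : a ∈ labelIdeal c m) (b : Λ) : a * b ∈ labelIdeal c m := by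
  obtain ⟨u, v, rfl⟩ := exists_of_mem_labelIdeal ha
  rw [add_mul, smul_mul_assoc, mul_assoc]
  exact add_mem (smul_mem_labelIdeal _) (Ideal.mul_mem_left _ _ (ι_mul_mem_labelIdeal _))

lemma ι_mul_mul_eq_zero_of_mem_labelIdeal (hc : c * c = 0) (ha : a ∈ labelIdeal c m)
    (hb : b ∈ labelIdeal c m) : ε m * (a * b) = 0 := by
  obtain ⟨u, v, rfl⟩ := exists_of_mem_labelIdeal ha
  obtain ⟨u', v', rfl⟩ := exists_of_mem_labelIdeal hb
  have hι : ∀ z w : Λ, ε m * (z * (ε m * w)) = 0 := fun z w => by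
    rw [← mul_assoc z, mul_ι_eq_ι_mul_parityInv, mul_assoc, ι_mul_ι_mul_cancel]
  have hι' : ε m * (u * (v' * ε m)) = 0 := by
    rw [← mul_assoc u, mul_ι_eq_ι_mul_parityInv, ι_mul_ι_mul_cancel]
  simp [mul_add, add_mul, smul_smul, hc, mul_assoc, hι, hι']

end LabelIdeal

/-- The algebra of fields whose differences at each point lie in the ideals of the labels `κ` of the
grid lines through that point, with scalars `t`: on these fields the discrete Leibniz rule is
exact. -/
def adaptedFields (t : V → k) (κ : ℤ → V) (x y : M) :
    Subalgebra k (ℤ × ℤ → ExteriorAlgebra k M) where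
  carrier := {F | ∀ p : ℤ × ℤ,
    ∂₁ F p ∈ labelIdeal (t (κ p.1)) x ∧ ∂₂ F p ∈ labelIdeal (t (κ p.2)) y}
  add_mem' hF hG p := by
    simp only [map_add, Pi.add_apply]
    exact ⟨add_mem (hF p).1 (hG p).1, add_mem (hF p).2 (hG p).2⟩
  mul_mem' hF hG p := by
    simp only [gridDiff_mul, Pi.add_apply, Pi.sub_apply, Pi.mul_apply]
    exact ⟨sub_mem (add_mem (mul_mem_labelIdeal_right (hF p).1 _)
        (Ideal.mul_mem_left _ _ (hG p).1)) (mul_mem_labelIdeal_right (hF p).1 _),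
      sub_mem (add_mem (mul_mem_labelIdeal_right (hF p).2 _)
        (Ideal.mul_mem_left _ _ (hG p).2)) (mul_mem_labelIdeal_right (hF p).2 _)⟩
  algebraMap_mem' r p := by
    have hconst : algebraMap k (ℤ × ℤ → Λ) r = fun _ => algebraMap k Λ r := rfl
    simp [hconst, gridDiff_const]

variable {t : V → k} {κ : ℤ → V} {x y : M} {R : ℤ}

lemma extD_apply (F : ℤ × ℤ → Λ) (p : ℤ × ℤ) :
    extD x y F p = ε x * ∂₁ F p + ε y * ∂₂ F p := rfl

lemma extD_const (a : Λ) : extD x y (fun _ => a) = 0 := by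
  ext; simp [extD_apply, gridDiff_const]

lemma extD_mul {F G : ℤ × ℤ → ExteriorAlgebra k M} (ht : ∀ v, t v * t v = 0)
    (hF : F ∈ adaptedFields t κ x y) (hG : G ∈ adaptedFields t κ x y) (p : ℤ × ℤ) :
    extD x y (F * G) p = extD x y F p * G p + parityInv k M (F p) * extD x y G p := by
  have hx := ι_mul_mul_eq_zero_of_mem_labelIdeal (ht _) (hF p).1 (hG p).1
  have hy := ι_mul_mul_eq_zero_of_mem_labelIdeal (ht _) (hF p).2 (hG p).2
  simp only [extD_apply, gridDiff_mul, Pi.add_apply, Pi.sub_apply, Pi.mul_apply, mul_sub, hx, hy]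
  simp only [mul_add, add_mul, sub_zero, ← mul_assoc, ι_mul_eq_parityInv_mul_ι _ (F p)]
  abel

lemma gridSum_extD {F : ℤ × ℤ → ExteriorAlgebra k M} (hF : F ∈ boxSupported R Λ) :
    gridSum R (extD x y F) = 0 := by
  have hdiff : extD x y F =
    (fun p => AddMonoidHom.mulLeft (ε x) (∂₁ F p)) + fun p => AddMonoidHom.mulLeft (ε y) (∂₂ F p) :=
    rfl
  rw [hdiff, map_add, ← map_gridSum, ← map_gridSum, gridSum_gridDiff hF (by decide) (by decide),
    gridSum_gridDiff hF (by decide) (by decide), map_zero, map_zero, add_zero]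

end Fields

/-! ### Homotopies of products -/

section ListProducts

variable {I S : Type*} [Ring S]

/-- The signed sum of the products along a list in which one factor `D i` is replaced by `h i`, for
`D i` of odd degree and `h i` of even degree. -/
def homotopyProd (D h : I → S) : List I → S
  | [] => 0
  | i :: l => h i * (l.map D).prod - D i * homotopyProd D h l

/-- The sum of the products along a list in which one factor `D i` is replaced by `e i`. -/
def variationProd (D e : I → S) : List I → S
  | [] => 0
  | i :: l => e i * (l.map D).prod + D i * variationProd D e l

lemma map_homotopyProd {T : Type*} [Ring T] (φ : S →+* T) (D h : I → S) (l : List I) :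
    φ (homotopyProd D h l) = homotopyProd (fun i => φ (D i)) (fun i => φ (h i)) l := by
  induction l with
  | nil => exact map_zero φ
  | cons i l ih => simp [homotopyProd, ih, map_list_prod, Function.comp_def]

lemma prod_sub_prod_eq_variationProd {D D' : I → S}
    (h : ∀ i j a, (D' i - D i) * a * (D' j - D j) = 0) (l : List I) :
    (l.map D').prod - (l.map D).prod = variationProd D (fun i => D' i - D i) l := by
  have hvar : ∀ (i : I) (l : List I) (a : S),
      (D' i - D i) * a * variationProd D (fun i => D' i - D i) l = 0 := by
    intro i l
    induction l with
    | nil => simp [variationProd]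
    | cons j l ih =>
      intro a
      rw [variationProd, mul_add, ← mul_assoc, h, zero_mul, zero_add, ← mul_assoc, mul_assoc _ a,
        ih]
  induction l with
  | nil => simp [variationProd]
  | cons i l ih =>
    have hi := hvar i l 1
    rw [mul_one] at hi
    rw [List.map_cons, List.map_cons, List.prod_cons, List.prod_cons, variationProd, ← ih] at *
    rw [mul_sub, sub_mul, sub_mul] at hi
    rw [← sub_eq_zero, ← hi]
    noncomm_ring

end ListProducts

section Homotopy

variable {k M V I : Type*} [CommRing k] [AddCommGroup M] [Module k M]

local notation "Λ" => ExteriorAlgebra k M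
local notation "ε" => ExteriorAlgebra.ι k

/-- An odd adapted field that is closed for the exterior derivative twisted by the vector `ξ`. -/
structure IsTwistedCocycle (t : V → k) (κ : ℤ → V) (x y ξ : M)
    (F : ℤ × ℤ → ExteriorAlgebra k M) : Prop where
  adapted : F ∈ adaptedFields t κ x y
  odd : ∀ p, F p ∈ oddPart k M
  extD_eq : ∀ p, extD x y F p = ε ξ * F p

/-- An even adapted field whose derivative twisted by the vector `ξ` is the difference of `F'` and
`F`. -/
structure IsTwistedHomotopy (t : V → k) (κ : ℤ → V) (x y ξ : M)
    (F F' h : ℤ × ℤ → ExteriorAlgebra k M) : Prop where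
  adapted : h ∈ adaptedFields t κ x y
  even : ∀ p, h p ∈ evenPart k M
  extD_eq : ∀ p, extD x y h p = ε ξ * h p + (F' p - F p)

variable {t : V → k} {κ : ℤ → V} {x y : M} {ξ : I → M} {R : ℤ}
  {D D' h : I → ℤ × ℤ → ExteriorAlgebra k M}

lemma list_prod_mem_adaptedFields (hD : ∀ i, D i ∈ adaptedFields t κ x y) (l : List I) :
    (l.map D).prod ∈ adaptedFields t κ x y :=
  list_prod_mem fun F hF => by obtain ⟨i, -, rfl⟩ := List.mem_map.mp hF; exact hD i

lemma homotopyProd_mem_adaptedFields (hD : ∀ i, D i ∈ adaptedFields t κ x y)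
    (hh : ∀ i, h i ∈ adaptedFields t κ x y) (l : List I) :
    homotopyProd D h l ∈ adaptedFields t κ x y := by
  induction l with
  | nil => exact zero_mem _
  | cons i l ih =>
    exact sub_mem (mul_mem (hh i) (list_prod_mem_adaptedFields hD l)) (mul_mem (hD i) ih)

lemma homotopyProd_mem_boxSupported (hD : ∀ i, D i ∈ boxSupported R Λ)
    (hh : ∀ i, h i ∈ boxSupported R Λ) (l : List I) :
    homotopyProd D h l ∈ boxSupported R Λ := by
  intro p hp
  cases l with
  | nil => rfl
  | cons i l => simp [homotopyProd, hh i p hp, hD i p hp]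

lemma extD_list_prod (ht : ∀ v, t v * t v = 0)
    (hD : ∀ i, IsTwistedCocycle t κ x y (ξ i) (D i)) (l : List I) (p : ℤ × ℤ) :
    extD x y (l.map D).prod p = ε (l.map ξ).sum * (l.map D).prod p := by
  induction l with
  | nil => simp [show (1 : ℤ × ℤ → Λ) = fun _ => 1 from rfl, extD_const]
  | cons i l ih =>
    have hcomm : D i p * ε (l.map ξ).sum = -(ε (l.map ξ).sum * D i p) :=
      anticomm_of_mem_oddPart ((hD i).odd p) (ι_mem_oddPart _)
    rw [List.map_cons, List.prod_cons, extD_mul ht (hD i).adapted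
      (list_prod_mem_adaptedFields (fun i => (hD i).adapted) l), (hD i).extD_eq, ih,
      CliffordAlgebra.involute_eq_of_mem_odd ((hD i).odd p)]
    simp only [List.map_cons, List.sum_cons, map_add, add_mul, Pi.mul_apply, ← mul_assoc,
      neg_mul, hcomm, neg_neg]

lemma extD_homotopyProd (ht : ∀ v, t v * t v = 0)
    (hD : ∀ i, IsTwistedCocycle t κ x y (ξ i) (D i))
    (hh : ∀ i, IsTwistedHomotopy t κ x y (ξ i) (D i) (D' i) (h i)) (l : List I) (p : ℤ × ℤ) :
    extD x y (homotopyProd D h l) p = ε (l.map ξ).sum * homotopyProd D h l p +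
      variationProd D (fun i => D' i - D i) l p := by
  induction l with
  | nil => simp [homotopyProd, variationProd]
  | cons i l ih =>
    have hanti : D i p * ε (l.map ξ).sum = -(ε (l.map ξ).sum * D i p) :=
      anticomm_of_mem_oddPart ((hD i).odd p) (ι_mem_oddPart _)
    have hcomm : h i p * ε (l.map ξ).sum = ε (l.map ξ).sum * h i p :=
      mul_comm_of_mem_evenPart ((hh i).even p) _
    rw [homotopyProd, map_sub, Pi.sub_apply, extD_mul ht (hh i).adapted
      (list_prod_mem_adaptedFields (fun i => (hD i).adapted) l), extD_mul ht (hD i).adapted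
      (homotopyProd_mem_adaptedFields (fun i => (hD i).adapted) (fun i => (hh i).adapted) l),
      (hh i).extD_eq, (hD i).extD_eq, ih, extD_list_prod ht hD,
      CliffordAlgebra.involute_eq_of_mem_odd ((hD i).odd p),
      CliffordAlgebra.involute_eq_of_mem_even ((hh i).even p)]
    simp only [List.map_cons, List.sum_cons, map_add, variationProd, Pi.sub_apply, Pi.mul_apply,
      Pi.add_apply, add_mul, mul_sub, mul_add, neg_mul, ← mul_assoc, hanti, hcomm]
    abel

lemma gridSum_list_prod_sub (ht : ∀ v, t v * t v = 0)
    (hD : ∀ i, IsTwistedCocycle t κ x y (ξ i) (D i))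
    (hh : ∀ i, IsTwistedHomotopy t κ x y (ξ i) (D i) (D' i) (h i))
    (hsD : ∀ i, D i ∈ boxSupported R Λ) (hsh : ∀ i, h i ∈ boxSupported R Λ)
    (hnil : ∀ i j a, (D' i - D i) * a * (D' j - D j) = 0) (l : List I) :
    gridSum R (l.map D').prod - gridSum R (l.map D).prod =
      -(ε (l.map ξ).sum * gridSum R (homotopyProd D h l)) := by
  have hextD : extD x y (homotopyProd D h l) =
      (fun p => AddMonoidHom.mulLeft (ε (l.map ξ).sum) (homotopyProd D h l p)) +
        variationProd D (fun i => D' i - D i) l := by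
    ext p; exact extD_homotopyProd ht hD hh l p
  have hsum := gridSum_extD (x := x) (y := y) (homotopyProd_mem_boxSupported hsD hsh l)
  rw [hextD, map_add, ← map_gridSum, add_comm] at hsum
  rw [← map_sub, prod_sub_prod_eq_variationProd hnil]
  exact eq_neg_of_add_eq_zero_left hsum

end Homotopy

/-! ### Drawings of the complete graph on the grid -/

/-- A drawing of the complete graph on `V`: the vertices are grid points, and the edge from `u`
to `v` is the Poincaré dual one-form `α dx + β dy` of a chain from `pt u` to `pt v`. The labelling
`κ` of grid lines records which edges may use a given line. -/
structure GridDrawing (V : Type*) (κ : ℤ → V) (R : ℤ) where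
  pt : V → ℤ × ℤ
  α : V → V → ℤ × ℤ → ℤ
  β : V → V → ℤ × ℤ → ℤ
  closed : ∀ u v, ∂₁ (β u v) - ∂₂ (α u v) = Pi.single (pt v) 1 - Pi.single (pt u) 1
  label_pt : ∀ v, κ (pt v).1 = v ∧ κ (pt v).2 = v
  label_α : ∀ u v p, α u v p ≠ 0 → κ p.1 = u ∨ κ p.1 = v
  label_dα : ∀ u v p, ∂₂ (α u v) p ≠ 0 → κ p.2 = u ∨ κ p.2 = v
  label_β : ∀ u v p, β u v p ≠ 0 → κ p.2 = u ∨ κ p.2 = v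
  label_dβ : ∀ u v p, ∂₁ (β u v) p ≠ 0 → κ p.1 = u ∨ κ p.1 = v
  pt_mem : ∀ v, pt v ∈ gridBox R
  α_mem : ∀ u v, α u v ∈ boxSupported R ℤ
  β_mem : ∀ u v, β u v ∈ boxSupported R ℤ

section OneForm

variable {k M V : Type*} [CommRing k] [AddCommGroup M] [Module k M]
variable {t : V → k} {κ : ℤ → V} {R : ℤ} {x y : M} {A B : ℤ × ℤ → ExteriorAlgebra k M}

local notation "Λ" => ExteriorAlgebra k M
local notation "ε" => ExteriorAlgebra.ι k

/-- The one-form `A dx + B dy`, with the vectors `x` and `y` playing the roles of `dx` and `dy`. -/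
def oneForm (x y : M) (A B : ℤ × ℤ → ExteriorAlgebra k M) : ℤ × ℤ → ExteriorAlgebra k M :=
  fun p => ε x * A p + ε y * B p

lemma single_mem_boxSupported {a : ℤ × ℤ} (ha : a ∈ gridBox R) :
    Pi.single a 1 ∈ boxSupported R ℤ :=
  fun _ hp => Pi.single_eq_of_ne (ne_of_mem_of_not_mem ha hp).symm 1

lemma gridDiff_ι_mul (v : ℤ × ℤ) (m : M) (F : ℤ × ℤ → Λ) :
    gridDiff v (fun p => ε m * F p) = fun p => ε m * gridDiff v F p :=
  gridDiff_comp (AddMonoidHom.mulLeft (ε m)) v F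

lemma gridDiff_zsmul (v : ℤ × ℤ) (c : ℤ × ℤ → ℤ) (a : Λ) :
    gridDiff v (fun p => c p • a) = fun p => gridDiff v c p • a :=
  gridDiff_comp ((zmultiplesHom Λ) a) v c

lemma gridDiff_oneForm (v : ℤ × ℤ) (A B : ℤ × ℤ → Λ) :
    gridDiff v (oneForm x y A B) = oneForm x y (gridDiff v A) (gridDiff v B) := by
  ext p; simp only [gridDiff_apply, oneForm]; noncomm_ring

lemma ι_mul_ι_swap (m n : M) (a : Λ) : ε m * (ε n * a) = -(ε n * (ε m * a)) := by
  rw [← mul_assoc, anticomm_of_mem_oddPart (ι_mem_oddPart m) (ι_mem_oddPart n), neg_mul, mul_assoc]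

lemma extD_ι_mul_ι_mul (F : ℤ × ℤ → Λ) : extD x y (fun p => ε x * (ε y * F p)) = 0 := by
  ext p
  simp only [extD_apply, gridDiff_ι_mul]
  rw [ι_mul_ι_mul_cancel, ι_mul_ι_swap y, ι_mul_ι_mul_cancel]
  simp

lemma extD_oneForm (A B : ℤ × ℤ → Λ) (p : ℤ × ℤ) :
    extD x y (oneForm x y A B) p = ε x * (ε y * (∂₁ B - ∂₂ A) p) := by
  simp only [extD_apply, gridDiff_oneForm]
  simp only [oneForm, mul_add, ι_mul_ι_mul_cancel, ι_mul_ι_swap y x, Pi.sub_apply, mul_sub]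
  abel

lemma extD_eq_oneForm {W : ℤ × ℤ → ExteriorAlgebra k M} (hA : ∂₁ W = A) (hB : ∂₂ W = B) :
    extD x y W = oneForm x y A B := by
  subst hA hB; rfl

lemma ι_mul_oneForm (m : M) (A B : ℤ × ℤ → Λ) (p : ℤ × ℤ) :
    ε m * oneForm x y A B p =
      -oneForm x y (fun p => ε m * A p) (fun p => ε m * B p) p := by
  simp only [oneForm, mul_add, ι_mul_ι_swap m]; abel

lemma oneForm_mem_adaptedFields (hA : ∀ p : ℤ × ℤ, ∂₂ A p ∈ labelIdeal (t (κ p.2)) y)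
    (hB : ∀ p : ℤ × ℤ, ∂₁ B p ∈ labelIdeal (t (κ p.1)) x) :
    oneForm x y A B ∈ adaptedFields t κ x y := by
  intro p
  simp only [gridDiff_oneForm]
  exact ⟨add_mem (ι_mul_mem_labelIdeal _) (Ideal.mul_mem_left _ _ (hB p)),
    add_mem (Ideal.mul_mem_left _ _ (hA p)) (ι_mul_mem_labelIdeal _)⟩

lemma ι_mul_ι_mul_mem_adaptedFields (F : ℤ × ℤ → Λ) :
    (fun p => ε x * (ε y * F p)) ∈ adaptedFields t κ x y := fun p => by
  simp only [gridDiff_ι_mul]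
  exact ⟨ι_mul_mem_labelIdeal _, Ideal.mul_mem_left _ _ (ι_mul_mem_labelIdeal _)⟩

lemma ι_mul_mem_boxSupported (m : M) (hA : A ∈ boxSupported R Λ) :
    (fun p => ε m * A p) ∈ boxSupported R Λ :=
  comp_mem_boxSupported (AddMonoidHom.mulLeft (ε m)) hA

lemma zsmul_mem_boxSupported {c : ℤ × ℤ → ℤ} (hc : c ∈ boxSupported R ℤ) (a : Λ) :
    (fun p => c p • a) ∈ boxSupported R Λ :=
  comp_mem_boxSupported ((zmultiplesHom Λ) a) hc

lemma oneForm_mem_boxSupported (hA : A ∈ boxSupported R Λ) (hB : B ∈ boxSupported R Λ) :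
    oneForm x y A B ∈ boxSupported R Λ :=
  add_mem (ι_mul_mem_boxSupported x hA) (ι_mul_mem_boxSupported y hB)

end OneForm

section Forms

variable {k M N V : Type*} [CommRing k] [AddCommGroup M] [Module k M] [AddCommGroup N] [Module k N]
  [Fintype V]

local notation "Λ" => ExteriorAlgebra k M
local notation "ε" => ExteriorAlgebra.ι k

variable (k) in
/-- The vector with coefficients `d v` on the vertices, placed at the vectors `s v`. -/
def vertexForm (s : V → M) : (V → ℤ) →+ ExteriorAlgebra k M where
  toFun d := ∑ v, d v • ε (s v)
  map_zero' := by simp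
  map_add' d d' := by simp [add_smul, Finset.sum_add_distrib]

lemma vertexForm_mem_oddPart (s : V → M) (d : V → ℤ) : vertexForm k s d ∈ oddPart k M :=
  sum_mem fun _ _ => zsmul_mem (ι_mem_oddPart _) _

lemma map_vertexForm (g : M →ₗ[k] N) (s : V → M) (d : V → ℤ) :
    ExteriorAlgebra.map g (vertexForm k s d) = vertexForm k (fun v => g (s v)) d := by
  simp [vertexForm]

namespace GridDrawing

variable {κ : ℤ → V} {R : ℤ} (D : GridDrawing V κ R)

variable (k) in
/-- The vector-valued two-form of the vertices of a drawing, as a multiple of `dx dy`. -/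
def ptForm (s : V → M) (p : ℤ × ℤ) : ExteriorAlgebra k M :=
  vertexForm k s fun v => (Pi.single (D.pt v) 1 : ℤ × ℤ → ℤ) p

lemma ptForm_mem_boxSupported (s : V → M) : D.ptForm k s ∈ boxSupported R Λ := fun p hp => by
  rw [ptForm, show (fun v => (Pi.single (D.pt v) 1 : ℤ × ℤ → ℤ) p) = 0 from
    funext fun v => single_mem_boxSupported (D.pt_mem v) p hp, map_zero]

end GridDrawing

variable [LinearOrder V]

variable (k) in
/-- The bivector with coefficients `c u v` on the edges `u < v`, placed at the vectors `s v`. -/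
def edgeForm (s : V → M) : (V → V → ℤ) →+ ExteriorAlgebra k M where
  toFun c := ∑ u, ∑ v, (if u < v then c u v else 0) • (ε (s u) * ε (s v))
  map_zero' := by simp
  map_add' c c' := by
    simp only [← Finset.sum_add_distrib, ← add_smul, Pi.add_apply, ite_add_zero]

lemma edgeForm_mem_evenPart (s : V → M) (c : V → V → ℤ) : edgeForm k s c ∈ evenPart k M :=
  sum_mem fun _ _ => sum_mem fun _ _ =>
    zsmul_mem (mul_mem_evenPart (ι_mem_oddPart _) (ι_mem_oddPart _)) _

lemma map_edgeForm (g : M →ₗ[k] N) (s : V → M) (c : V → V → ℤ) :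
    ExteriorAlgebra.map g (edgeForm k s c) = edgeForm k (fun v => g (s v)) c := by
  simp only [edgeForm, AddMonoidHom.coe_mk, ZeroHom.coe_mk, map_sum, map_zsmul, map_mul,
    ExteriorAlgebra.map_apply_ι]

lemma edgeForm_coboundary (s : V → M) (d : V → ℤ) :
    edgeForm k s (fun u v => d v - d u) = ε (∑ v, s v) * vertexForm k s d := by
  have hsplit : edgeForm k s (fun u v => d v - d u) =
      (∑ u, ∑ v, (if u < v then d v else 0) • (ε (s u) * ε (s v))) -
        ∑ u, ∑ v, (if u < v then d u else 0) • (ε (s u) * ε (s v)) := by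
    rw [show (fun u v => d v - d u) = (fun _ v => d v) - fun u _ => d u from rfl, map_sub]; rfl
  rw [hsplit, Finset.sum_comm (f := fun u v => (if u < v then d u else 0) • (ε (s u) * ε (s v))),
    ← Finset.sum_sub_distrib, map_sum, Finset.sum_mul]
  refine Finset.sum_congr rfl fun u _ => ?_
  rw [vertexForm, AddMonoidHom.coe_mk, ZeroHom.coe_mk, Finset.mul_sum, ← Finset.sum_sub_distrib]
  refine Finset.sum_congr rfl fun v _ => ?_
  rw [mul_smul_comm]
  rcases lt_trichotomy u v with h | rfl | h
  · simp [h, h.not_gt]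
  · simp
  · rw [if_neg h.not_gt, if_pos h, zero_smul, zero_sub,
      anticomm_of_mem_oddPart (ι_mem_oddPart (k := k) (s v)) (ι_mem_oddPart (s u)), smul_neg,
      neg_neg]

lemma edgeForm_mem_labelIdeal {t : V → k} {e s : V → M} (hs : ∀ v, s v = t v • e v) {w : V}
    (m : M) {c : V → V → ℤ} (hc : ∀ u v, c u v ≠ 0 → w = u ∨ w = v) :
    edgeForm k s c ∈ labelIdeal (t w) m := by
  refine sum_mem fun u _ => sum_mem fun v _ => ?_
  split_ifs with huv
  · by_cases h0 : c u v = 0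
    · simp [h0]
    · refine zsmul_mem ?_ _
      rcases hc u v h0 with rfl | rfl
      · rw [hs w, map_smul, smul_mul_assoc]; exact smul_mem_labelIdeal _
      · rw [hs w, map_smul, mul_smul_comm]; exact smul_mem_labelIdeal _
  · simp

namespace GridDrawing

variable {κ : ℤ → V} {R : ℤ} (D : GridDrawing V κ R)

variable (k) in
/-- The `dx`-part of the bivector-valued one-form of the edges of a drawing. -/
def dxForm (s : V → M) (p : ℤ × ℤ) : ExteriorAlgebra k M :=
  edgeForm k s fun u v => D.α u v p

variable (k) in
/-- The `dy`-part of the bivector-valued one-form of the edges of a drawing. -/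
def dyForm (s : V → M) (p : ℤ × ℤ) : ExteriorAlgebra k M :=
  edgeForm k s fun u v => D.β u v p

variable (k) in
/-- The trivector-valued function recording winding numbers of triangles. -/
def windForm (s : V → M) : ℤ × ℤ → ExteriorAlgebra k M :=
  rowPrimitive R fun p => ε (-∑ v, s v) * D.dxForm k s p

variable (k) in
/-- The total form of a drawing: vertices, edges and triangles. -/
def totalForm (x y : M) (s : V → M) : ℤ × ℤ → ExteriorAlgebra k M :=
  (fun p => ε x * (ε y * D.ptForm k s p)) + oneForm x y (D.dxForm k s) (D.dyForm k s) +
    D.windForm k s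

lemma gridDiff_dxForm (v : ℤ × ℤ) (s : V → M) (p : ℤ × ℤ) :
    gridDiff v (D.dxForm k s) p = edgeForm k s fun u w => gridDiff v (D.α u w) p :=
  (map_sub (edgeForm k s) _ _).symm

lemma gridDiff_dyForm (v : ℤ × ℤ) (s : V → M) (p : ℤ × ℤ) :
    gridDiff v (D.dyForm k s) p = edgeForm k s fun u w => gridDiff v (D.β u w) p :=
  (map_sub (edgeForm k s) _ _).symm

lemma gridDiff_dyForm_sub_gridDiff_dxForm (s : V → M) (p : ℤ × ℤ) :
    (∂₁ (D.dyForm k s) - ∂₂ (D.dxForm k s)) p = ε (∑ v, s v) * D.ptForm k s p := by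
  rw [ptForm, ← edgeForm_coboundary, Pi.sub_apply, gridDiff_dxForm, gridDiff_dyForm, ← map_sub]
  congr 1
  ext u v
  exact congrFun (D.closed u v) p

lemma dxForm_mem_boxSupported (s : V → M) : D.dxForm k s ∈ boxSupported R Λ := fun p hp => by
  rw [dxForm, show (fun u v => D.α u v p) = 0 from
    funext fun u => funext fun v => D.α_mem u v p hp, map_zero]

lemma dyForm_mem_boxSupported (s : V → M) : D.dyForm k s ∈ boxSupported R Λ := fun p hp => by
  rw [dyForm, show (fun u v => D.β u v p) = 0 from
    funext fun u => funext fun v => D.β_mem u v p hp, map_zero]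

lemma gridDiff_ι_mul_dxForm (s : V → M) :
    ∂₂ (fun p => ε (-∑ v, s v) * D.dxForm k s p) =
      ∂₁ fun p => ε (-∑ v, s v) * D.dyForm k s p := by
  ext p
  have h := D.gridDiff_dyForm_sub_gridDiff_dxForm (k := k) s p
  simp only [gridDiff_ι_mul]
  rw [eq_comm, ← sub_eq_zero, ← mul_sub, ← Pi.sub_apply, h, map_neg, neg_mul, ι_mul_ι_mul_cancel,
    neg_zero]

lemma gridDiff_fst_windForm (s : V → M) :
    ∂₁ (D.windForm k s) = fun p => ε (-∑ v, s v) * D.dxForm k s p :=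
  gridDiff_fst_rowPrimitive (ι_mul_mem_boxSupported _ (D.dxForm_mem_boxSupported s))

lemma gridDiff_snd_windForm (s : V → M) :
    ∂₂ (D.windForm k s) = fun p => ε (-∑ v, s v) * D.dyForm k s p :=
  gridDiff_snd_rowPrimitive (ι_mul_mem_boxSupported _ (D.dyForm_mem_boxSupported s))
    (D.gridDiff_ι_mul_dxForm s)

lemma windForm_mem_boxSupported (s : V → M) : D.windForm k s ∈ boxSupported R Λ :=
  rowPrimitive_mem_boxSupported (ι_mul_mem_boxSupported _ (D.dxForm_mem_boxSupported s))
    (ι_mul_mem_boxSupported _ (D.dyForm_mem_boxSupported s)) (D.gridDiff_ι_mul_dxForm s)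

lemma ι_mul_windForm (s : V → M) (p : ℤ × ℤ) : ε (∑ v, s v) * D.windForm k s p = 0 := by
  refine congrFun (eq_zero_of_gridDiff_fst_eq_zero
    (ι_mul_mem_boxSupported (∑ v, s v) (D.windForm_mem_boxSupported (k := k) s)) ?_) p
  rw [gridDiff_ι_mul, gridDiff_fst_windForm]
  ext p
  simp only [map_neg, neg_mul, mul_neg, ι_mul_ι_mul_cancel, neg_zero, Pi.zero_apply]

lemma totalForm_mem_boxSupported (x y : M) (s : V → M) :
    D.totalForm k x y s ∈ boxSupported R Λ :=
  add_mem (add_mem (ι_mul_mem_boxSupported x (ι_mul_mem_boxSupported y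
    (D.ptForm_mem_boxSupported s))) (oneForm_mem_boxSupported (D.dxForm_mem_boxSupported s)
      (D.dyForm_mem_boxSupported s))) (D.windForm_mem_boxSupported s)

lemma map_windForm (g : M →ₗ[k] N) (s : V → M) (p : ℤ × ℤ) :
    ExteriorAlgebra.map g (D.windForm k s p) = D.windForm k (fun v => g (s v)) p := by
  simp [windForm, rowPrimitive_apply, dxForm, map_edgeForm]

lemma map_totalForm (g : M →ₗ[k] N) (x y : M) (s : V → M) (p : ℤ × ℤ) :
    ExteriorAlgebra.map g (D.totalForm k x y s p) =
      D.totalForm k (g x) (g y) (fun v => g (s v)) p := by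
  simp [totalForm, map_windForm, ptForm, dxForm, dyForm, map_vertexForm, map_edgeForm,
    oneForm]

lemma windForm_mem_oddPart (s : V → M) (p : ℤ × ℤ) : D.windForm k s p ∈ oddPart k M :=
  rowPrimitive_mem (S := oddPart k M) (fun p =>
    mul_mem_oddPart_of_odd_even (ι_mem_oddPart (-∑ v, s v))
      (edgeForm_mem_evenPart s fun u v => D.α u v p)) p

lemma totalForm_mem_oddPart (x y : M) (s : V → M) (p : ℤ × ℤ) :
    D.totalForm k x y s p ∈ oddPart k M :=
  add_mem (add_mem
    (mul_mem_oddPart_of_odd_even (ι_mem_oddPart x)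
      (mul_mem_evenPart (ι_mem_oddPart y) (vertexForm_mem_oddPart s _)))
    (add_mem (mul_mem_oddPart_of_odd_even (ι_mem_oddPart x) (edgeForm_mem_evenPart s _))
      (mul_mem_oddPart_of_odd_even (ι_mem_oddPart y) (edgeForm_mem_evenPart s _))))
    (D.windForm_mem_oddPart s p)

lemma extD_totalForm (x y : M) (s : V → M) (p : ℤ × ℤ) :
    extD x y (D.totalForm k x y s) p = ε (∑ v, s v) * D.totalForm k x y s p := by
  have hwind : extD x y (D.windForm k s) p =
      ε (∑ v, s v) * oneForm x y (D.dxForm k s) (D.dyForm k s) p := by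
    rw [extD_eq_oneForm (D.gridDiff_fst_windForm s) (D.gridDiff_snd_windForm s), ← neg_inj,
      ← neg_mul, ← map_neg, ι_mul_oneForm]
  have hpt : ε x * (ε y * (ε (∑ v, s v) * D.ptForm k s p)) =
      ε (∑ v, s v) * (ε x * (ε y * D.ptForm k s p)) := by
    rw [ι_mul_ι_swap y, mul_neg, ι_mul_ι_swap x, neg_neg]
  simp only [totalForm, map_add, Pi.add_apply, extD_ι_mul_ι_mul, extD_oneForm, hwind,
    gridDiff_dyForm_sub_gridDiff_dxForm, mul_add, ι_mul_windForm, hpt, zero_add, add_zero]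

variable {t : V → k} {e s : V → M}

lemma totalForm_mem_adaptedFields (hs : ∀ v, s v = t v • e v) (x y : M) :
    D.totalForm k x y s ∈ adaptedFields t κ x y := by
  refine add_mem (add_mem (ι_mul_ι_mul_mem_adaptedFields _)
    (oneForm_mem_adaptedFields (fun p => ?_) fun p => ?_)) fun p => ⟨?_, ?_⟩
  · rw [gridDiff_dxForm]
    exact edgeForm_mem_labelIdeal hs y fun u v => D.label_dα u v p
  · rw [gridDiff_dyForm]
    exact edgeForm_mem_labelIdeal hs x fun u v => D.label_dβ u v p
  · rw [gridDiff_fst_windForm]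
    exact Ideal.mul_mem_left _ _ (edgeForm_mem_labelIdeal hs x fun u v => D.label_α u v p)
  · rw [gridDiff_snd_windForm]
    exact Ideal.mul_mem_left _ _ (edgeForm_mem_labelIdeal hs y fun u v => D.label_β u v p)

lemma isTwistedCocycle_totalForm (hs : ∀ v, s v = t v • e v) (x y : M) :
    IsTwistedCocycle t κ x y (∑ v, s v) (D.totalForm k x y s) where
  adapted := D.totalForm_mem_adaptedFields hs x y
  odd := D.totalForm_mem_oddPart x y s
  extD_eq := D.extD_totalForm x y s

end GridDrawing

end Forms

/-! ### L-shaped paths and vertex moves -/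

section LPath

variable {a b p : ℤ × ℤ} {R : ℤ}

/-- The `dx`-part of the dual form of the path going horizontally and then vertically. -/
def lpathα (a b p : ℤ × ℤ) : ℤ :=
  if p.1 = b.1 then (if a.2 ≤ p.2 then 1 else 0) - (if b.2 ≤ p.2 then 1 else 0) else 0

/-- The `dy`-part of the dual form of the path going horizontally and then vertically. -/
def lpathβ (a b p : ℤ × ℤ) : ℤ :=
  if p.2 = a.2 then (if b.1 ≤ p.1 then 1 else 0) - (if a.1 ≤ p.1 then 1 else 0) else 0

lemma gridDiff_lpathβ_sub_gridDiff_lpathα (a b : ℤ × ℤ) :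
    ∂₁ (lpathβ a b) - ∂₂ (lpathα a b) = Pi.single b 1 - Pi.single a 1 := by
  obtain ⟨a₁, a₂⟩ := a
  obtain ⟨b₁, b₂⟩ := b
  ext ⟨x, y⟩
  simp only [Pi.sub_apply, gridDiff_apply, lpathα, lpathβ, Pi.single_apply, Prod.mk_sub_mk,
    Prod.mk.injEq]
  grind

lemma fst_eq_of_lpathα_ne_zero (h : lpathα a b p ≠ 0) : p.1 = b.1 := by
  by_contra h'; exact h (if_neg h')

lemma snd_eq_of_lpathβ_ne_zero (h : lpathβ a b p ≠ 0) : p.2 = a.2 := by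
  by_contra h'; exact h (if_neg h')

lemma snd_eq_or_eq_of_gridDiff_lpathα_ne_zero (h : ∂₂ (lpathα a b) p ≠ 0) :
    p.2 = a.2 ∨ p.2 = b.2 := by
  contrapose! h
  simp only [gridDiff_apply, lpathα, Prod.fst_sub, Prod.snd_sub]
  split_ifs <;> omega

lemma fst_eq_or_eq_of_gridDiff_lpathβ_ne_zero (h : ∂₁ (lpathβ a b) p ≠ 0) :
    p.1 = a.1 ∨ p.1 = b.1 := by
  contrapose! h
  simp only [gridDiff_apply, lpathβ, Prod.fst_sub, Prod.snd_sub]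
  split_ifs <;> omega

lemma lpathα_mem_boxSupported (ha : a ∈ gridBox R) (hb : b ∈ gridBox R) :
    lpathα a b ∈ boxSupported R ℤ := by
  intro p hp
  rw [mem_gridBox] at ha hb hp
  simp only [lpathα]
  split_ifs <;> omega

lemma lpathβ_mem_boxSupported (ha : a ∈ gridBox R) (hb : b ∈ gridBox R) :
    lpathβ a b ∈ boxSupported R ℤ := by
  intro p hp
  rw [mem_gridBox] at ha hb hp
  simp only [lpathβ]
  split_ifs <;> omega

end LPath

section VertexMove

variable {k M N V : Type*} [CommRing k] [AddCommGroup M] [Module k M] [AddCommGroup N] [Module k N]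

local notation "Λ" => ExteriorAlgebra k M
local notation "ε" => ExteriorAlgebra.ι k

namespace GridDrawing

variable {κ : ℤ → V} {R : ℤ} {D D' : GridDrawing V κ R} {w : V}

/-- Two drawings that differ only in the position of `w` and the edges at `w`. -/
structure AgreeOff (D D' : GridDrawing V κ R) (w : V) : Prop where
  pt : ∀ v, v ≠ w → D'.pt v = D.pt v
  α : ∀ u v, u ≠ w → v ≠ w → D'.α u v = D.α u v
  β : ∀ u v, u ≠ w → v ≠ w → D'.β u v = D.β u v

variable (k) in
/-- The field `α ε (s w)`, or `β ε (s w)`, of the L-shaped path that moves `w`, as selected by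
`c`. -/
def pathForm (D D' : GridDrawing V κ R) (w : V) (c : ℤ × ℤ → ℤ × ℤ → ℤ × ℤ → ℤ) (s : V → M)
    (p : ℤ × ℤ) : ExteriorAlgebra k M :=
  c (D.pt w) (D'.pt w) p • ε (s w)

lemma pathForm_lpathα_mem_boxSupported (s : V → M) :
    pathForm k D D' w lpathα s ∈ boxSupported R Λ :=
  zsmul_mem_boxSupported (lpathα_mem_boxSupported (D.pt_mem w) (D'.pt_mem w)) _

lemma pathForm_lpathβ_mem_boxSupported (s : V → M) :
    pathForm k D D' w lpathβ s ∈ boxSupported R Λ :=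
  zsmul_mem_boxSupported (lpathβ_mem_boxSupported (D.pt_mem w) (D'.pt_mem w)) _

lemma gridDiff_pathForm (v : ℤ × ℤ) (c : ℤ × ℤ → ℤ × ℤ → ℤ × ℤ → ℤ) (s : V → M) :
    gridDiff v (pathForm k D D' w c s) =
      fun p => gridDiff v (c (D.pt w) (D'.pt w)) p • ε (s w) :=
  gridDiff_zsmul v _ _

variable [Fintype V]

lemma AgreeOff.ptForm_sub (h : AgreeOff D D' w) (s : V → M) (p : ℤ × ℤ) :
    D'.ptForm k s p - D.ptForm k s p =
      (∂₁ (pathForm k D D' w lpathβ s) - ∂₂ (pathForm k D D' w lpathα s)) p := by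
  simp only [Pi.sub_apply, gridDiff_pathForm]
  rw [← sub_smul, ← Pi.sub_apply (∂₁ _), gridDiff_lpathβ_sub_gridDiff_lpathα, ptForm, ptForm,
    ← map_sub]
  refine (Finset.sum_eq_single w (fun v _ hv => ?_) (by simp)).trans rfl
  simp [h.pt v hv]

variable [LinearOrder V]

variable (k) in
/-- The `dx`-part of the one-form whose primitive enters the homotopy of a vertex move. -/
def moveDx (D D' : GridDrawing V κ R) (w : V) (s : V → M) : ℤ × ℤ → ExteriorAlgebra k M :=
  D'.dxForm k s - D.dxForm k s - fun p => ε (∑ v, s v) * pathForm k D D' w lpathα s p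

variable (k) in
/-- The `dy`-part of the one-form whose primitive enters the homotopy of a vertex move. -/
def moveDy (D D' : GridDrawing V κ R) (w : V) (s : V → M) : ℤ × ℤ → ExteriorAlgebra k M :=
  D'.dyForm k s - D.dyForm k s - fun p => ε (∑ v, s v) * pathForm k D D' w lpathβ s p

variable (k) in
/-- The homotopy between the total forms of two drawings differing by a vertex move. -/
def moveForm (D D' : GridDrawing V κ R) (w : V) (x y : M) (s : V → M) :
    ℤ × ℤ → ExteriorAlgebra k M :=
  oneForm x y (pathForm k D D' w lpathα s) (pathForm k D D' w lpathβ s) +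
    rowPrimitive R (moveDx k D D' w s)

lemma map_moveForm (g : M →ₗ[k] N) (x y : M) (s : V → M) (p : ℤ × ℤ) :
    ExteriorAlgebra.map g (moveForm k D D' w x y s p) =
      moveForm k D D' w (g x) (g y) (fun v => g (s v)) p := by
  simp [moveForm, oneForm, rowPrimitive_apply, moveDx, pathForm, dxForm, map_edgeForm]

lemma moveForm_mem_evenPart (x y : M) (s : V → M) (p : ℤ × ℤ) :
    moveForm k D D' w x y s p ∈ evenPart k M := by
  have hpath : ∀ (m : M) c, ε m * pathForm k D D' w c s p ∈ evenPart k M := fun m c =>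
    mul_mem_evenPart (ι_mem_oddPart m) (zsmul_mem (ι_mem_oddPart _) _)
  refine add_mem (add_mem (hpath x _) (hpath y _)) (rowPrimitive_mem (S := evenPart k M) ?_ p)
  exact fun p => sub_mem (sub_mem (edgeForm_mem_evenPart _ _) (edgeForm_mem_evenPart _ _))
    (mul_mem_evenPart (ι_mem_oddPart _) (zsmul_mem (ι_mem_oddPart _) _))

lemma moveDx_mem_boxSupported (s : V → M) : moveDx k D D' w s ∈ boxSupported R Λ :=
  sub_mem (sub_mem (D'.dxForm_mem_boxSupported s) (D.dxForm_mem_boxSupported s))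
    (ι_mul_mem_boxSupported _ (pathForm_lpathα_mem_boxSupported s))

lemma moveDy_mem_boxSupported (s : V → M) : moveDy k D D' w s ∈ boxSupported R Λ :=
  sub_mem (sub_mem (D'.dyForm_mem_boxSupported s) (D.dyForm_mem_boxSupported s))
    (ι_mul_mem_boxSupported _ (pathForm_lpathβ_mem_boxSupported s))

lemma AgreeOff.gridDiff_moveDx (h : AgreeOff D D' w) (s : V → M) :
    ∂₂ (moveDx k D D' w s) = ∂₁ (moveDy k D D' w s) := by
  ext p
  have hD := D.gridDiff_dyForm_sub_gridDiff_dxForm (k := k) s p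
  have hD' := D'.gridDiff_dyForm_sub_gridDiff_dxForm (k := k) s p
  have hpt := congrArg (ε (∑ v, s v) * ·) (h.ptForm_sub (k := k) s p)
  simp only [mul_sub, ← hD, ← hD', Pi.sub_apply] at hpt
  simp only [moveDx, moveDy, map_sub, Pi.sub_apply, gridDiff_ι_mul]
  rw [← sub_eq_zero] at hpt ⊢
  rw [← neg_eq_zero, ← hpt]
  abel

lemma gridDiff_fst_rowPrimitive_moveDx (s : V → M) :
    ∂₁ (rowPrimitive R (moveDx k D D' w s)) = moveDx k D D' w s :=
  gridDiff_fst_rowPrimitive (moveDx_mem_boxSupported s)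

lemma AgreeOff.gridDiff_snd_rowPrimitive_moveDx (h : AgreeOff D D' w) (s : V → M) :
    ∂₂ (rowPrimitive R (moveDx k D D' w s)) = moveDy k D D' w s :=
  gridDiff_snd_rowPrimitive (moveDy_mem_boxSupported s) (h.gridDiff_moveDx s)

lemma AgreeOff.rowPrimitive_moveDx_mem_boxSupported (h : AgreeOff D D' w) (s : V → M) :
    rowPrimitive R (moveDx k D D' w s) ∈ boxSupported R Λ :=
  rowPrimitive_mem_boxSupported (moveDx_mem_boxSupported s) (moveDy_mem_boxSupported s)
    (h.gridDiff_moveDx s)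

lemma AgreeOff.moveForm_mem_boxSupported (h : AgreeOff D D' w) (x y : M) (s : V → M) :
    moveForm k D D' w x y s ∈ boxSupported R Λ :=
  add_mem (oneForm_mem_boxSupported (pathForm_lpathα_mem_boxSupported s)
    (pathForm_lpathβ_mem_boxSupported s)) (h.rowPrimitive_moveDx_mem_boxSupported s)

lemma AgreeOff.ι_mul_rowPrimitive_moveDx (h : AgreeOff D D' w) (s : V → M) (p : ℤ × ℤ) :
    ε (∑ v, s v) * rowPrimitive R (moveDx k D D' w s) p =
      D.windForm k s p - D'.windForm k s p := by
  rw [← sub_eq_zero]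
  refine congrFun (eq_zero_of_gridDiff_fst_eq_zero (F := (fun p =>
    ε (∑ v, s v) * rowPrimitive R (moveDx k D D' w s) p) - (D.windForm k s - D'.windForm k s))
    (sub_mem (ι_mul_mem_boxSupported _ (h.rowPrimitive_moveDx_mem_boxSupported s))
      (sub_mem (D.windForm_mem_boxSupported s) (D'.windForm_mem_boxSupported s))) ?_) p
  ext p
  rw [map_sub, map_sub, gridDiff_ι_mul, gridDiff_fst_rowPrimitive_moveDx, gridDiff_fst_windForm,
    gridDiff_fst_windForm]
  simp only [moveDx, Pi.sub_apply, mul_sub, ι_mul_ι_mul_cancel, Pi.zero_apply, map_neg, neg_mul]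
  abel

lemma AgreeOff.extD_moveForm (h : AgreeOff D D' w) (x y : M) (s : V → M) (p : ℤ × ℤ) :
    extD x y (moveForm k D D' w x y s) p = ε (∑ v, s v) * moveForm k D D' w x y s p +
      (D'.totalForm k x y s p - D.totalForm k x y s p) := by
  have hprim : extD x y (rowPrimitive R (moveDx k D D' w s)) =
      oneForm x y (moveDx k D D' w s) (moveDy k D D' w s) :=
    extD_eq_oneForm (gridDiff_fst_rowPrimitive_moveDx s) (h.gridDiff_snd_rowPrimitive_moveDx s)
  simp only [moveForm, totalForm, map_add, Pi.add_apply, extD_oneForm, hprim, mul_add,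
    ι_mul_oneForm, h.ι_mul_rowPrimitive_moveDx, ← h.ptForm_sub, mul_sub]
  simp only [oneForm, moveDx, moveDy, Pi.sub_apply, mul_sub]
  abel

variable {t : V → k} {e s : V → M}

lemma AgreeOff.moveForm_mem_adaptedFields (h : AgreeOff D D' w) (hs : ∀ v, s v = t v • e v)
    (x y : M) : moveForm k D D' w x y s ∈ adaptedFields t κ x y := by
  have hzsmul : ∀ {z : ℤ} {v : V} (m : M), (z ≠ 0 → v = w) →
      z • ε (s w) ∈ labelIdeal (t v) m := by
    intro z v m hv
    by_cases hz : z = 0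
    · simp [hz]
    · rw [hv hz, hs w, map_smul]; exact zsmul_mem (smul_mem_labelIdeal _) _
  have hl := D.label_pt w
  have hl' := D'.label_pt w
  refine add_mem (oneForm_mem_adaptedFields (fun p => ?_) fun p => ?_) fun p => ⟨?_, ?_⟩
  · rw [gridDiff_pathForm]
    refine hzsmul y fun h => ?_
    rcases snd_eq_or_eq_of_gridDiff_lpathα_ne_zero h with h | h <;> rw [h]
    exacts [hl.2, hl'.2]
  · rw [gridDiff_pathForm]
    refine hzsmul x fun h => ?_
    rcases fst_eq_or_eq_of_gridDiff_lpathβ_ne_zero h with h | h <;> rw [h]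
    exacts [hl.1, hl'.1]
  · rw [gridDiff_fst_rowPrimitive_moveDx]
    refine sub_mem (sub_mem (edgeForm_mem_labelIdeal hs x fun u v => D'.label_α u v p)
      (edgeForm_mem_labelIdeal hs x fun u v => D.label_α u v p))
      (Ideal.mul_mem_left _ _ (hzsmul x fun h => ?_))
    rw [fst_eq_of_lpathα_ne_zero h]; exact hl'.1
  · rw [h.gridDiff_snd_rowPrimitive_moveDx]
    refine sub_mem (sub_mem (edgeForm_mem_labelIdeal hs y fun u v => D'.label_β u v p)
      (edgeForm_mem_labelIdeal hs y fun u v => D.label_β u v p))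
      (Ideal.mul_mem_left _ _ (hzsmul y fun h => ?_))
    rw [snd_eq_of_lpathβ_ne_zero h]; exact hl.2

lemma AgreeOff.isTwistedHomotopy_moveForm (h : AgreeOff D D' w) (hs : ∀ v, s v = t v • e v)
    (x y : M) : IsTwistedHomotopy t κ x y (∑ v, s v) (D.totalForm k x y s) (D'.totalForm k x y s)
      (moveForm k D D' w x y s) where
  adapted := h.moveForm_mem_adaptedFields hs x y
  even := moveForm_mem_evenPart x y s
  extD_eq := h.extD_moveForm x y s

lemma exists_edgeForm_sub_eq_smul (hs : ∀ v, s v = t v • e v) {c c' : V → V → ℤ}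
    (h : ∀ u v, u ≠ w → v ≠ w → c' u v = c u v) :
    ∃ a : Λ, edgeForm k s c' - edgeForm k s c = t w • a := by
  have hmem : edgeForm k s (c' - c) ∈ labelIdeal (t w) (0 : M) :=
    edgeForm_mem_labelIdeal hs 0 fun u v huv => by
      by_contra! hne
      exact huv (by simp [h u v hne.1.symm hne.2.symm])
  obtain ⟨a, b, hab⟩ := exists_of_mem_labelIdeal hmem
  exact ⟨a, by rw [← map_sub, hab, map_zero, mul_zero, add_zero]⟩

lemma AgreeOff.exists_totalForm_sub_eq_smul (h : AgreeOff D D' w) (hs : ∀ v, s v = t v • e v)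
    (x y : M) (p : ℤ × ℤ) :
    ∃ a : Λ, D'.totalForm k x y s p - D.totalForm k x y s p = t w • a := by
  have hdx : ∀ p, ∃ a : Λ, D'.dxForm k s p - D.dxForm k s p = t w • a := fun p =>
    exists_edgeForm_sub_eq_smul hs fun u v hu hv => congrFun (h.α u v hu hv) p
  obtain ⟨b, hb⟩ : ∃ b : Λ, D'.dyForm k s p - D.dyForm k s p = t w • b :=
    exists_edgeForm_sub_eq_smul hs fun u v hu hv => congrFun (h.β u v hu hv) p
  choose a ha using hdx
  obtain ⟨c, hc⟩ : ∃ c : Λ, D'.ptForm k s p - D.ptForm k s p = t w • c := by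
    simp only [h.ptForm_sub, Pi.sub_apply, gridDiff_pathForm, ← sub_smul, hs w, map_smul]
    exact ⟨_, smul_comm _ _ _⟩
  have hwind : D'.windForm k s p - D.windForm k s p =
      t w • rowPrimitive R (fun p => ε (-∑ v, s v) * a p) p := by
    rw [← Pi.sub_apply, windForm, windForm, ← map_sub]
    simp only [rowPrimitive_apply, Pi.sub_apply, ← mul_sub, ha, mul_smul_comm, Finset.smul_sum]
  refine ⟨ε x * (ε y * c) + (ε x * a p + ε y * b) +
    rowPrimitive R (fun p => ε (-∑ v, s v) * a p) p, ?_⟩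
  simp only [smul_add, ← hwind, ← mul_smul_comm, ← hc, ← ha, ← hb, totalForm, oneForm,
    Pi.add_apply, mul_sub]
  abel

end GridDrawing

end VertexMove

/-! ### Cyclic symmetry -/

section Residues

variable (q : ℕ)

/-- The residues `0, 1, …, q - 1` in order. -/
def residues : List (ZMod q) := (List.range q).map Nat.cast

lemma length_residues : (residues q).length = q := by simp [residues]

lemma nodup_residues : (residues q).Nodup := by
  refine List.Nodup.map_on (fun a ha b hb h => ?_) List.nodup_range
  rw [List.mem_range] at ha hb
  rwa [ZMod.natCast_eq_natCast_iff', Nat.mod_eq_of_lt ha, Nat.mod_eq_of_lt hb] at h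

variable {q} [NeZero q]

lemma mem_residues (i : ZMod q) : i ∈ residues q :=
  List.mem_map.mpr ⟨i.val, List.mem_range.mpr (ZMod.val_lt i), ZMod.natCast_zmod_val i⟩

lemma sum_map_residues {A : Type*} [AddCommMonoid A] (g : ZMod q → A) :
    ((residues q).map g).sum = ∑ i, g i := by
  rw [← List.sum_toFinset g (nodup_residues q),
    Finset.eq_univ_of_forall fun i => List.mem_toFinset.mpr (mem_residues i)]

variable (q) in
lemma exists_residues_eq_cons : ∃ l : List (ZMod q), l.length = q - 1 ∧
    residues q = 0 :: l ∧ (residues q).map (· + 1) = l ++ [0] := by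
  obtain ⟨m, rfl⟩ : ∃ m, q = m + 1 := ⟨q - 1, (Nat.succ_pred (NeZero.ne q)).symm⟩
  refine ⟨(List.range m).map fun i => ((i + 1 : ℕ) : ZMod (m + 1)), by simp, ?_, ?_⟩
  · simp [residues, List.range_succ_eq_map, Function.comp_def]
  · have hm : (m : ZMod (m + 1)) + 1 = 0 := by exact_mod_cast ZMod.natCast_self (m + 1)
    simp [residues, List.range_succ, hm]

end Residues

lemma neg_one_pow_smul_zmod {q : ℕ} (hq : q.Prime) (a : ZMod q) : (-1 : ℤ) ^ (q - 1) • a = a := by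
  rcases hq.eq_two_or_odd' with rfl | hodd
  · exact (one_smul ℤ a).symm ▸ by simp [ZMod.neg_eq_self_mod_two]
  · rw [(Nat.Odd.sub_odd hodd odd_one).neg_one_pow, one_smul]

section Cyclic

variable {I S : Type*} [Ring S] {D h : I → S}

lemma mul_list_prod_of_anticomm (hD : ∀ i j, D i * D j = -(D j * D i)) (i : I) (l : List I) :
    D i * (l.map D).prod = (-1 : ℤ) ^ l.length • ((l.map D).prod * D i) := by
  induction l with
  | nil => simp
  | cons j l ih =>
    rw [List.map_cons, List.prod_cons, List.length_cons, ← mul_assoc, hD i j, neg_mul, mul_assoc,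
      ih, mul_smul_comm, pow_succ, mul_neg_one, neg_smul, mul_assoc]

lemma mul_homotopyProd_of_anticomm (hD : ∀ i j, D i * D j = -(D j * D i))
    (hh : ∀ i a, h i * a = a * h i) (i : I) (l : List I) :
    D i * homotopyProd D h l = (-1 : ℤ) ^ (l.length + 1) • (homotopyProd D h l * D i) := by
  induction l with
  | nil => simp [homotopyProd]
  | cons j l ih =>
    have hhead : D i * (h j * (l.map D).prod) =
        (-1 : ℤ) ^ l.length • (h j * (l.map D).prod * D i) := by
      rw [← mul_assoc, ← hh, mul_assoc, mul_list_prod_of_anticomm hD, mul_smul_comm, mul_assoc]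
    have htail : D i * (D j * homotopyProd D h l) =
        (-1 : ℤ) ^ l.length • (D j * homotopyProd D h l * D i) := by
      rw [← mul_assoc, hD i j, neg_mul, mul_assoc, ih, mul_smul_comm, pow_succ, mul_neg_one,
        neg_smul, neg_neg, mul_assoc]
    rw [homotopyProd, mul_sub, hhead, htail, ← smul_sub, ← sub_mul, List.length_cons,
      pow_succ _ (l.length + 1), pow_succ _ l.length, mul_assoc _ (-1 : ℤ), neg_mul_neg, one_mul,
      mul_one]

lemma homotopyProd_concat (D h : I → S) (l : List I) (i : I) :
    homotopyProd D h (l ++ [i]) =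
      homotopyProd D h l * D i + (-1 : ℤ) ^ l.length • ((l.map D).prod * h i) := by
  induction l with
  | nil => simp [homotopyProd]
  | cons j l ih =>
    simp only [List.cons_append, homotopyProd, List.map_append, List.prod_append, ih,
      List.map_cons, List.map_nil, List.prod_cons, List.prod_nil, mul_one, List.length_cons,
      pow_succ, mul_neg_one, neg_smul, mul_add, mul_smul_comm, sub_mul, mul_assoc]
    abel

lemma homotopyProd_cons_eq_concat (hD : ∀ i j, D i * D j = -(D j * D i))
    (hh : ∀ i a, h i * a = a * h i) (i : I) (l : List I) :
    homotopyProd D h (i :: l) = (-1 : ℤ) ^ l.length • homotopyProd D h (l ++ [i]) := by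
  rw [homotopyProd_concat, homotopyProd, mul_homotopyProd_of_anticomm hD hh, hh, smul_add,
    smul_smul, ← mul_pow, neg_one_mul, neg_neg, one_pow, one_smul, pow_succ, mul_neg_one, neg_smul]
  abel

lemma homotopyProd_map {J : Type*} (f : J → I) (D h : I → S) (l : List J) :
    homotopyProd D h (l.map f) = homotopyProd (fun j => D (f j)) (fun j => h (f j)) l := by
  induction l with
  | nil => rfl
  | cons j l ih => simp [homotopyProd, ih, Function.comp_def]

lemma sum_homotopyProd_single [Fintype I] [DecidableEq I] (D h : I → S) (l : List I) :
    ∑ j, homotopyProd D (Pi.single j (h j)) l = homotopyProd D h l := by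
  induction l with
  | nil => simp [homotopyProd]
  | cons i l ih =>
    have hsingle : ∑ j, (Pi.single j (h j) : I → S) i = h i := by
      rw [← Finset.sum_apply, Finset.univ_sum_single]
    simp only [homotopyProd, Finset.sum_sub_distrib, ← Finset.mul_sum, ih, ← Finset.sum_mul,
      hsingle]

/-- Moving the factor `h j` once around the cycle shows that all `q` choices of `j` contribute the
same amount. -/
lemma map_homotopyProd_residues_eq_zero {q : ℕ} (hq : q.Prime) {D h : ZMod q → S}
    (hD : ∀ i j, D i * D j = -(D j * D i)) (hh : ∀ i a, h i * a = a * h i) (σ : S →+* S)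
    (hσD : ∀ i, σ (D i) = D (i + 1)) (hσh : ∀ i, σ (h i) = h (i + 1)) (φ : S →+ ZMod q)
    (hφ : ∀ a, φ (σ a) = φ a) : φ (homotopyProd D h (residues q)) = 0 := by
  have : NeZero q := ⟨hq.ne_zero⟩
  obtain ⟨l, hl, hl0, hl1⟩ := exists_residues_eq_cons q
  set T : ZMod q → S := fun j => homotopyProd D (Pi.single j (h j)) (residues q) with hT
  have hcentral (j i : ZMod q) (a : S) :
      (Pi.single j (h j) : ZMod q → S) i * a = a * (Pi.single j (h j) : ZMod q → S) i := by
    by_cases hij : i = j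
    · subst hij; simp [hh]
    · simp [hij]
  have hshift : ∀ j, φ (T (j + 1)) = φ (T j) := fun j => by
    have hσ : σ (T j) = homotopyProd D (Pi.single (j + 1) (h (j + 1))) (l ++ [0]) := by
      rw [← hl1, homotopyProd_map, hT, map_homotopyProd]
      congr 1 <;> ext i
      · exact hσD i
      · by_cases hij : i = j
        · subst hij; simp [hσh]
        · simp [hij]
    rw [← hφ (T j), hσ, hT, hl0]
    simp only []
    rw [homotopyProd_cons_eq_concat hD (hcentral _), hl, map_zsmul, neg_one_pow_smul_zmod hq]
  have hconst : ∀ j, φ (T j) = φ (T 0) := fun j => by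
    rw [← ZMod.natCast_zmod_val j]
    induction j.val with
    | zero => rw [Nat.cast_zero]
    | succ n ih => rw [Nat.cast_succ, hshift, ih]
  rw [← sum_homotopyProd_single, map_sum, Finset.sum_congr rfl fun j _ => hconst j]
  simp [ZMod.card]

end Cyclic

/-! ### The top coefficient -/

section TopForm

variable {k J : Type*} [CommRing k] [Fintype J] [DecidableEq J]

local notation "ε" => ExteriorAlgebra.ι k

variable (k J) in
/-- The determinant of a family of `card J` vectors of `J → k`. -/
def detFin : (J → k) [⋀^Fin (Fintype.card J)]→ₗ[k] k :=
  (Matrix.detRowAlternating (n := J) (R := k)).domDomCongr (Fintype.equivFin J)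

variable (k J) in
/-- The top-degree coefficient on the exterior algebra of `J → k`; it depends on an enumeration of
`J` through a sign. -/
def topForm : ExteriorAlgebra k (J → k) →ₗ[k] k :=
  ExteriorAlgebra.liftAlternating
    (Pi.single (M := fun i => (J → k) [⋀^Fin i]→ₗ[k] k) _ (detFin k J))

lemma topForm_ιMulti (v : Fin (Fintype.card J) → J → k) :
    topForm k J (ExteriorAlgebra.ιMulti k _ v) =
      Matrix.det (Matrix.of fun i => v (Fintype.equivFin J i)) := by
  rw [topForm, ExteriorAlgebra.liftAlternating_apply_ιMulti, Pi.single_eq_same, detFin]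
  rfl

lemma topForm_ιMulti_of_ne {n : ℕ} (hn : n ≠ Fintype.card J) (v : Fin n → J → k) :
    topForm k J (ExteriorAlgebra.ιMulti k n v) = 0 := by
  rw [topForm, ExteriorAlgebra.liftAlternating_apply_ιMulti, Pi.single_eq_of_ne hn,
    AlternatingMap.zero_apply]

lemma topForm_map_funLeft (π : Equiv.Perm J) (a : ExteriorAlgebra k (J → k)) :
    topForm k J (ExteriorAlgebra.map (LinearMap.funLeft k k π) a) =
      (Equiv.Perm.sign π : ℤ) • topForm k J a := by
  have h : topForm k J ∘ₗ (ExteriorAlgebra.map (LinearMap.funLeft k k π)).toLinearMap =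
      (Equiv.Perm.sign π : ℤ) • topForm k J := by
    refine ExteriorAlgebra.lhom_ext fun n => AlternatingMap.ext fun v => ?_
    simp only [LinearMap.compAlternatingMap_apply, LinearMap.coe_comp, Function.comp_apply,
      AlgHom.toLinearMap_apply, ExteriorAlgebra.map_apply_ιMulti, LinearMap.smul_apply]
    by_cases hn : n = Fintype.card J
    · subst hn
      rw [topForm_ιMulti, topForm_ιMulti, zsmul_eq_mul]
      exact Matrix.det_permute' π (Matrix.of fun i => v (Fintype.equivFin J i))
    · rw [topForm_ιMulti_of_ne hn, topForm_ιMulti_of_ne hn, smul_zero]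
  exact LinearMap.congr_fun h a

lemma exists_topForm_prod_single_eq {L : List J} (hL : L.Nodup)
    (hlen : L.length = Fintype.card J) :
    ∃ s : ℤˣ, topForm k J (L.map fun j => ε (Pi.single j 1)).prod = ((s : ℤ) : k) := by
  obtain ⟨v, rfl⟩ : ∃ v : Fin (Fintype.card J) → J, L = List.ofFn v :=
    ⟨fun i => L.get (Fin.cast hlen.symm i), by rw [List.ofFn_congr hlen.symm]; simp⟩
  have hv : Function.Bijective (v ∘ Fintype.equivFin J) :=
    Finite.injective_iff_bijective.mp
      ((List.nodup_ofFn.mp hL).comp (Fintype.equivFin _).injective)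
  refine ⟨Equiv.Perm.sign (Equiv.ofBijective _ hv), ?_⟩
  have hprod : (List.ofFn v).map (fun j => ε (Pi.single j 1 : J → k)) =
      List.ofFn fun i => ε (Pi.single (v i) 1 : J → k) := by
    rw [List.map_ofFn, Function.comp_def]
  rw [hprod, ← ExteriorAlgebra.ιMulti_apply (R := k), topForm_ιMulti, ← Matrix.det_permutation]
  congr 1
  ext i j
  simp [Equiv.Perm.permMatrix, PEquiv.toMatrix_apply, Pi.single_apply, eq_comm]

end TopForm

/-! ### The colored degree -/

section Apex

variable {k M : Type*} [CommRing k] [AddCommGroup M] [Module k M]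

local notation "ε" => ExteriorAlgebra.ι k

lemma ι_mul_map_eq {f : M →ₗ[k] M} {m : M} (hf : ∀ v, ∃ r : k, v = f v + r • m)
    (a : ExteriorAlgebra k M) : ε m * ExteriorAlgebra.map f a = ε m * a := by
  induction a using ExteriorAlgebra.induction with
  | algebraMap r => simp
  | ι v =>
    obtain ⟨r, hr⟩ := hf v
    conv_rhs => rw [hr]
    simp [mul_add]
  | mul a b ha hb =>
    rw [map_mul, ← mul_assoc, ha, ι_mul_eq_parityInv_mul_ι, mul_assoc, hb, ← mul_assoc,
      ← ι_mul_eq_parityInv_mul_ι, mul_assoc]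
  | add a b ha hb => rw [map_add, mul_add, mul_add, ha, hb]

lemma ι_mul_mul_ι_mul_cancel (m : M) (a b : ExteriorAlgebra k M) :
    ε m * (b * (ε m * a)) = 0 := by
  rw [← mul_assoc, ι_mul_eq_parityInv_mul_ι, mul_assoc, ι_mul_ι_mul_cancel, mul_zero]

end Apex

/-- Indices of the generators of the exterior algebra that records the pieces of a `q`-tuple of
faces: the two coordinate forms, one generator for the apex, and one generator for each color in
each of the `q` parts. -/
abbrev GenIdx (q : ℕ) : Type := Fin 3 ⊕ (Fin 3 × ZMod q)

namespace GenIdx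

variable {q : ℕ}

/-- The index of the first coordinate form. -/
abbrev dx : GenIdx q := Sum.inl 0

/-- The index of the second coordinate form. -/
abbrev dy : GenIdx q := Sum.inl 1

/-- The index of the generator attached to the apex, the only vertex without a color. -/
abbrev apex : GenIdx q := Sum.inl 2

/-- The index of the generator of color `c` in part `i`. -/
abbrev color (c : Fin 3) (i : ZMod q) : GenIdx q := Sum.inr (c, i)

/-- The cyclic shift of the parts. -/
def shift (q : ℕ) : Equiv.Perm (GenIdx q) :=
  Equiv.sumCongr (Equiv.refl _) (Equiv.prodCongr (Equiv.refl _) (Equiv.addRight 1))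

lemma shift_color (c : Fin 3) (i : ZMod q) : shift q (color c i) = color c (i + 1) := rfl

lemma shift_pow_apply (n : ℕ) (j : GenIdx q) :
    (shift q ^ n) j = Sum.map id (Prod.map id (· + (n : ZMod q))) j := by
  induction n with
  | zero => rcases j with j | ⟨c, i⟩ <;> simp
  | succ n ih =>
    rw [pow_succ', Equiv.Perm.mul_apply, ih]
    rcases j with j | ⟨c, i⟩ <;> simp [shift, add_assoc]

/-- For odd `q` the shift is an even permutation, because its order divides `q`; for `q = 2` signs
do not matter. -/
lemma sign_shift_smul (hq : q.Prime) [NeZero q] (a : ZMod q) :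
    (Equiv.Perm.sign (shift q) : ℤ) • a = a := by
  have hpow : shift q ^ q = 1 := by
    ext j : 1; rw [shift_pow_apply]; rcases j with j | ⟨c, i⟩ <;> simp
  rcases Int.units_eq_one_or (Equiv.Perm.sign (shift q)) with h | h
  · simp [h]
  · rcases hq.eq_two_or_odd' with rfl | hodd
    · rw [h, Units.val_neg, Units.val_one, neg_smul, one_smul, ZMod.neg_eq_self_mod_two]
    · have hsign := congrArg Equiv.Perm.sign hpow
      rw [map_pow, map_one, h, hodd.neg_one_pow] at hsign
      exact absurd hsign (by decide)

end GenIdx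

section ColorVec

variable {k V : Type*} [CommRing k] {q : ℕ}

local notation "ε" => ExteriorAlgebra.ι k

open GenIdx

variable (k) in
/-- The basis vector with index `j`. -/
abbrev gen (j : GenIdx q) : GenIdx q → k := Pi.single j 1

variable (k) in
/-- The vector recording that the vertex `v` lies in part `i`. A vertex with color `none` is the
apex, which is only recorded in part `0`. -/
def colorVec (col : V → Option (Fin 3)) (v : V) (i : ZMod q) : GenIdx q → k :=
  match col v with
  | none => if i = 0 then gen k apex else 0
  | some c => gen k (color c i)

variable (k q) in
/-- The linear map forgetting the apex coordinate. -/
def dropApex : (GenIdx q → k) →ₗ[k] (GenIdx q → k) :=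
  LinearMap.id - LinearMap.single k (fun _ => k) apex ∘ₗ LinearMap.proj apex

lemma dropApex_gen {j : GenIdx q} (hj : j ≠ apex) : dropApex k q (gen k j) = gen k j := by
  simp [dropApex, Pi.single_eq_of_ne hj.symm]

lemma dropApex_gen_apex : dropApex k q (gen k apex) = 0 := by
  simp [dropApex]

lemma ι_apex_mul_map_dropApex (a : ExteriorAlgebra k (GenIdx q → k)) :
    ε (gen k apex) * ExteriorAlgebra.map (dropApex k q) a = ε (gen k apex) * a := by
  refine ι_mul_map_eq (fun v => ⟨v apex, ?_⟩) a
  simp [dropApex, ← Pi.single_smul]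

variable (k q) in
/-- The linear automorphism induced by the cyclic shift of the parts. -/
def shiftMap : (GenIdx q → k) →ₗ[k] (GenIdx q → k) :=
  LinearMap.funLeft k k (shift q).symm

lemma shiftMap_gen (j : GenIdx q) : shiftMap k q (gen k j) = gen k (shift q j) := by
  ext i
  simp only [shiftMap, LinearMap.funLeft_apply, Pi.single_apply, Equiv.symm_apply_eq]

lemma shiftMap_dropApex_colorVec (col : V → Option (Fin 3)) (v : V) (i : ZMod q) :
    shiftMap k q (dropApex k q (colorVec k col v i)) =
      dropApex k q (colorVec k col v (i + 1)) := by
  unfold colorVec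
  cases col v with
  | none =>
    have hdrop (P : Prop) [Decidable P] : dropApex k q (if P then gen k apex else 0) = 0 := by
      split_ifs
      exacts [dropApex_gen_apex, map_zero _]
    simp only [hdrop, map_zero]
  | some c => rw [dropApex_gen (by simp), dropApex_gen (by simp), shiftMap_gen, shift_color]

variable [NeZero q]

variable (k q) in
/-- The sum of all generators of color `c`. -/
def colorSum (c : Fin 3) : GenIdx q → k :=
  ∑ i : ZMod q, gen k (color c i)

lemma sum_colorVec (col : V → Option (Fin 3)) (v : V) :
    ∑ i : ZMod q, colorVec k col v i =
      match col v with
      | none => gen k apex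
      | some c => colorSum k q c := by
  unfold colorVec
  cases col v with
  | none => simp
  | some c => rfl

lemma shiftMap_colorSum (c : Fin 3) : shiftMap k q (colorSum k q c) = colorSum k q c := by
  simp only [colorSum, map_sum, shiftMap_gen, shift_color]
  exact Fintype.sum_equiv (Equiv.addRight 1) _ _ fun i => rfl

variable (k q) in
/-- The product of the three color sums. -/
def colorProd : ExteriorAlgebra k (GenIdx q → k) :=
  ε (colorSum k q 0) * ε (colorSum k q 1) * ε (colorSum k q 2)

variable (k q) in
/-- The top coefficient after multiplication by the three color sums, so that it vanishes on the
ideal generated by them. -/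
def colorTop : ExteriorAlgebra k (GenIdx q → k) →ₗ[k] k :=
  topForm k (GenIdx q) ∘ₗ LinearMap.mulLeft k (colorProd k q)

lemma colorTop_ι_colorSum_mul (c : Fin 3) (a : ExteriorAlgebra k (GenIdx q → k)) :
    colorTop k q (ε (colorSum k q c) * a) = 0 := by
  have h : colorProd k q * (ε (colorSum k q c) * a) = 0 := by
    rw [colorProd, mul_assoc, mul_assoc]
    fin_cases c
    · rw [← mul_assoc (ε _) (ε _) (ε _ * a)]
      exact ι_mul_mul_ι_mul_cancel _ _ _
    · exact (congrArg _ (ι_mul_mul_ι_mul_cancel _ _ _)).trans (mul_zero _)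
    · exact (congrArg _ (congrArg _ (ι_mul_ι_mul_cancel _ _))).trans (by simp)
  rw [colorTop, LinearMap.comp_apply, LinearMap.mulLeft_apply, h, map_zero]

lemma colorTop_map_shiftMap (a : ExteriorAlgebra k (GenIdx q → k)) :
    colorTop k q (ExteriorAlgebra.map (shiftMap k q) a) =
      (Equiv.Perm.sign (shift q) : ℤ) • colorTop k q a := by
  have hprod : ExteriorAlgebra.map (shiftMap k q) (colorProd k q) = colorProd k q := by
    simp [colorProd, shiftMap_colorSum]
  rw [colorTop, LinearMap.comp_apply, LinearMap.mulLeft_apply, LinearMap.comp_apply,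
    LinearMap.mulLeft_apply, ← Equiv.Perm.sign_symm, ← topForm_map_funLeft, ← shiftMap,
    map_mul (ExteriorAlgebra.map _), hprod]

end ColorVec

section Degree

variable {k V : Type*} [CommRing k] {q : ℕ} [Fintype V] [LinearOrder V] {κ : ℤ → V} {R : ℤ}

local notation "ε" => ExteriorAlgebra.ι k

open GenIdx

namespace GridDrawing

/-- The total form of a drawing whose faces are put into part `i`, each vertex `v` being weighted
by `t v`. -/
def colorForm (D : GridDrawing V κ R) (col : V → Option (Fin 3)) (t : V → k) (i : ZMod q) :
    ℤ × ℤ → ExteriorAlgebra k (GenIdx q → k) :=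
  D.totalForm k (gen k dx) (gen k dy) fun v => t v • colorVec k col v i

/-- The homotopy between the colored forms of two drawings that agree off the vertex `w`. -/
def colorMoveForm (D D' : GridDrawing V κ R) (w : V) (col : V → Option (Fin 3)) (t : V → k)
    (i : ZMod q) : ℤ × ℤ → ExteriorAlgebra k (GenIdx q → k) :=
  moveForm k D D' w (gen k dx) (gen k dy) fun v => t v • colorVec k col v i

/-- The weighted number, modulo `q`, of the `q`-tuples of faces of the drawing that use every
generator and meet at a common grid point. The weight is read off by an additive map `c`. -/
def degree (D : GridDrawing V κ R) (q : ℕ) [NeZero q] (col : V → Option (Fin 3))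
    (t : V → k) (c : k →+ ZMod q) : ZMod q :=
  c (colorTop k q (gridSum R ((residues q).map (D.colorForm col t)).prod))

variable {D D' : GridDrawing V κ R} {w : V} (col : V → Option (Fin 3)) (t : V → k)

lemma map_shiftMap_dropApex_colorForm (D : GridDrawing V κ R) (i : ZMod q) (p : ℤ × ℤ) :
    ExteriorAlgebra.map (shiftMap k q) (ExteriorAlgebra.map (dropApex k q)
      (D.colorForm col t i p)) =
      ExteriorAlgebra.map (dropApex k q) (D.colorForm col t (i + 1) p) := by
  simp only [colorForm, map_totalForm, map_smul, shiftMap_dropApex_colorVec]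
  rw [dropApex_gen (by simp), dropApex_gen (by simp), shiftMap_gen, shiftMap_gen]
  rfl

lemma map_shiftMap_dropApex_colorMoveForm (i : ZMod q) (p : ℤ × ℤ) :
    ExteriorAlgebra.map (shiftMap k q) (ExteriorAlgebra.map (dropApex k q)
      (colorMoveForm D D' w col t i p)) =
      ExteriorAlgebra.map (dropApex k q) (colorMoveForm D D' w col t (i + 1) p) := by
  simp only [colorMoveForm, map_moveForm, map_smul, shiftMap_dropApex_colorVec]
  rw [dropApex_gen (by simp), dropApex_gen (by simp), shiftMap_gen, shiftMap_gen]
  rfl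

lemma map_gridSum_homotopyProd_eq_zero (hq : q.Prime)
    (ψ : ExteriorAlgebra k (GenIdx q → k) →+ ZMod q)
    (hdrop : ∀ a, ψ (ExteriorAlgebra.map (dropApex k q) a) = ψ a)
    (hshift : ∀ a, ψ (ExteriorAlgebra.map (shiftMap k q) a) = ψ a) :
    ψ (gridSum R (homotopyProd (D.colorForm col t) (colorMoveForm D D' w col t)
      (residues q))) = 0 := by
  set K := (ExteriorAlgebra.map (dropApex k q)).toRingHom.compLeft (ℤ × ℤ)
  set σ := (ExteriorAlgebra.map (shiftMap k q)).toRingHom.compLeft (ℤ × ℤ)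
  have hdrop' (F : ℤ × ℤ → ExteriorAlgebra k (GenIdx q → k)) :
      ψ (gridSum R (K F)) = ψ (gridSum R F) := by
    rw [map_gridSum, map_gridSum]
    exact congrArg _ (funext fun p => hdrop _)
  rw [← hdrop', map_homotopyProd]
  refine map_homotopyProd_residues_eq_zero hq (fun i j => funext fun p => ?_)
    (fun i F => funext fun p => ?_) σ (fun i => funext fun p => ?_) (fun i => funext fun p => ?_)
    (ψ.comp (gridSum R)) fun F => ?_
  · refine anticomm_of_mem_oddPart ?_ ?_ <;>
    · change ExteriorAlgebra.map _ (D.totalForm k _ _ _ p) ∈ _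
      rw [map_totalForm]
      exact D.totalForm_mem_oddPart _ _ _ p
  · refine mul_comm_of_mem_evenPart ?_ _
    change ExteriorAlgebra.map _ (moveForm k D D' w _ _ _ p) ∈ _
    rw [map_moveForm]
    exact moveForm_mem_evenPart _ _ _ p
  · exact map_shiftMap_dropApex_colorForm col t D i p
  · exact map_shiftMap_dropApex_colorMoveForm col t i p
  · change ψ (gridSum R (σ F)) = ψ (gridSum R F)
    rw [map_gridSum, map_gridSum]
    exact congrArg _ (funext fun p => hshift _)

variable [NeZero q]

lemma colorTop_ι_apex_mul_gridSum_homotopyProd (hq : q.Prime) (c : k →+ ZMod q) :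
    c (colorTop k q (ε (gen k apex) * gridSum R (homotopyProd (D.colorForm col t)
      (colorMoveForm D D' w col t) (residues q)))) = 0 := by
  set ψ : ExteriorAlgebra k (GenIdx q → k) →+ ZMod q :=
    c.comp ((colorTop k q).toAddMonoidHom.comp (AddMonoidHom.mulLeft (ε (gen k apex))))
  have hψ (a) : ψ a = c (colorTop k q (ε (gen k apex) * a)) := rfl
  have hapex : ExteriorAlgebra.map (shiftMap k q) (ε (gen k apex)) = ε (gen k apex) := by
    rw [ExteriorAlgebra.map_apply_ι, shiftMap_gen]; rfl
  rw [← hψ]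
  refine map_gridSum_homotopyProd_eq_zero col t hq ψ (fun a => ?_) fun a => ?_
  · rw [hψ, hψ, ι_apex_mul_map_dropApex]
  · rw [hψ, hψ, ← congrArg (· * ExteriorAlgebra.map (shiftMap k q) a) hapex, ← map_mul,
      colorTop_map_shiftMap, map_zsmul, sign_shift_smul hq]

variable {col t}

lemma AgreeOff.gridSum_prod_colorForm_sub (h : AgreeOff D D' w) (ht : ∀ v, t v * t v = 0) :
    gridSum R ((residues q).map (D'.colorForm col t)).prod -
        gridSum R ((residues q).map (D.colorForm col t)).prod =
      -∑ v, t v • (ε (∑ i : ZMod q, colorVec k col v i) * gridSum R (homotopyProd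
        (D.colorForm col t) (colorMoveForm D D' w col t) (residues q))) := by
  have hcocycle (i : ZMod q) : IsTwistedCocycle t κ (gen k dx) (gen k dy)
      (∑ v, t v • colorVec k col v i) (D.colorForm col t i) :=
    D.isTwistedCocycle_totalForm (fun v => rfl) _ _
  have hhomotopy (i : ZMod q) : IsTwistedHomotopy t κ (gen k dx) (gen k dy)
      (∑ v, t v • colorVec k col v i) (D.colorForm col t i) (D'.colorForm col t i)
      (colorMoveForm D D' w col t i) :=
    h.isTwistedHomotopy_moveForm (fun v => rfl) _ _
  have hsub (i : ZMod q) (p : ℤ × ℤ) :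
      ∃ a, D'.colorForm col t i p - D.colorForm col t i p = t w • a :=
    h.exists_totalForm_sub_eq_smul (fun v => rfl) _ _ p
  rw [gridSum_list_prod_sub ht hcocycle hhomotopy
    (fun i => D.totalForm_mem_boxSupported _ _ _) (fun i => h.moveForm_mem_boxSupported _ _ _)
    fun i j a => funext fun p => ?_]
  · rw [sum_map_residues, Finset.sum_comm]
    simp only [← Finset.smul_sum, map_sum, map_smul, Finset.sum_mul, smul_mul_assoc]
  · obtain ⟨b, hb⟩ := hsub i p
    obtain ⟨b', hb'⟩ := hsub j p
    rw [Pi.mul_apply, Pi.mul_apply, Pi.sub_apply, Pi.sub_apply, hb, hb', Pi.zero_apply]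
    simp only [smul_mul_assoc, mul_smul_comm, smul_smul, ht, zero_smul]

theorem AgreeOff.degree_eq (h : AgreeOff D D' w) (hq : q.Prime) (ht : ∀ v, t v * t v = 0)
    (c : k →+ ZMod q) : D'.degree q col t c = D.degree q col t c := by
  rw [← sub_eq_zero, degree, degree, ← map_sub, ← map_sub, h.gridSum_prod_colorForm_sub ht,
    map_neg, map_neg, neg_eq_zero, map_sum, map_sum]
  refine Finset.sum_eq_zero fun v _ => ?_
  rw [sum_colorVec, map_smul]
  cases hv : col v with
  | none =>
    simpa using colorTop_ι_apex_mul_gridSum_homotopyProd (D' := D') (w := w) col t hq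
      (c.comp (AddMonoidHom.mulLeft (t v)))
  | some b => rw [colorTop_ι_colorSum_mul, smul_zero, map_zero]

end GridDrawing

end Degree

/-! ### Expansion of the total form into terms -/

section Expansion

variable {k M V : Type*} [CommRing k] [AddCommGroup M] [Module k M]

local notation "Λ" => ExteriorAlgebra k M
local notation "ε" => ExteriorAlgebra.ι k

/-- A term of the total form: a vertex, an edge together with a coordinate form (`dy` if the flag
is `true`), or a triangle. -/
abbrev GridTerm (V : Type*) : Type _ := V ⊕ (Bool × V × V) ⊕ (V × V × V)

namespace GridTerm

/-- The vectors whose product is the monomial of a term. -/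
def vecs (x y : M) (s : V → M) : GridTerm V → List M
  | Sum.inl v => [x, y, s v]
  | Sum.inr (Sum.inl (b, u, v)) => [if b then y else x, s u, s v]
  | Sum.inr (Sum.inr (u, v, w)) => [s u, s v, s w]

/-- The vertices of a term. -/
def verts [DecidableEq V] : GridTerm V → Finset V
  | Sum.inl v => {v}
  | Sum.inr (Sum.inl (_, u, v)) => {u, v}
  | Sum.inr (Sum.inr (u, v, w)) => {u, v, w}

end GridTerm

variable [LinearOrder V]

lemma ι_mul_ite_smul_ι_mul_ι (s : V → M) (c : ℤ) (z u v : V) :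
    ε (s z) * ((if u < v then c else 0) • (ε (s u) * ε (s v))) =
      (if z < u ∧ u < v then c else 0) • (ε (s z) * (ε (s u) * ε (s v))) -
      (if u < z ∧ z < v then c else 0) • (ε (s u) * (ε (s z) * ε (s v))) +
      (if u < v ∧ v < z then c else 0) • (ε (s u) * (ε (s v) * ε (s z))) := by
  have hswap : ε (s u) * (ε (s z) * ε (s v)) = -(ε (s z) * (ε (s u) * ε (s v))) :=
    ι_mul_ι_swap _ _ _
  have hcycle : ε (s u) * (ε (s v) * ε (s z)) = ε (s z) * (ε (s u) * ε (s v)) := by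
    rw [anticomm_of_mem_oddPart (ι_mem_oddPart (s v)) (ι_mem_oddPart (s z)), mul_neg, hswap,
      neg_neg]
  rw [hswap, hcycle]
  by_cases huv : u < v
  · rw [if_pos huv, mul_smul_comm]
    rcases lt_trichotomy z u with h | rfl | h
    · simp [h, huv, h.not_gt, (h.trans huv).not_gt]
    · rw [ι_mul_ι_mul_cancel]; simp
    · rcases lt_trichotomy z v with h' | rfl | h'
      · simp [h, h', h.not_gt, h'.not_gt]
      · rw [← hcycle, ExteriorAlgebra.ι_sq_zero]; simp
      · simp [h, h', h.not_gt, h'.not_gt, huv]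
  · have hz : ¬ (u < z ∧ z < v) := fun h => huv (h.1.trans h.2)
    simp [huv, hz]

variable [Fintype V]

lemma ι_sum_mul_edgeForm (s : V → M) (c : V → V → ℤ) :
    ε (∑ v, s v) * edgeForm k s c = ∑ u, ∑ v, ∑ w,
      (if u < v ∧ v < w then c v w - c u w + c u v else 0) •
        (ε (s u) * (ε (s v) * ε (s w))) := by
  have hexpand : ε (∑ v, s v) * edgeForm k s c = ∑ z, ∑ u, ∑ v,
      ((if z < u ∧ u < v then c u v else 0) • (ε (s z) * (ε (s u) * ε (s v))) -
      (if u < z ∧ z < v then c u v else 0) • (ε (s u) * (ε (s z) * ε (s v))) +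
      (if u < v ∧ v < z then c u v else 0) • (ε (s u) * (ε (s v) * ε (s z)))) := by
    rw [map_sum, Finset.sum_mul]
    refine Finset.sum_congr rfl fun z _ => ?_
    simp only [edgeForm, AddMonoidHom.coe_mk, ZeroHom.coe_mk, Finset.mul_sum,
      ι_mul_ite_smul_ι_mul_ι]
  have hrotate (F : V → V → V → Λ) : ∑ z, ∑ u, ∑ v, F u v z = ∑ u, ∑ v, ∑ z, F u v z :=
    Finset.sum_comm.trans (Finset.sum_congr rfl fun _ _ => Finset.sum_comm)
  rw [hexpand]
  simp only [Finset.sum_add_distrib, Finset.sum_sub_distrib]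
  rw [Finset.sum_comm (f := fun z u => ∑ v, (if u < z ∧ z < v then c u v else 0) •
      (ε (s u) * (ε (s z) * ε (s v)))),
    hrotate fun u v z => (if u < v ∧ v < z then c u v else 0) •
      (ε (s u) * (ε (s v) * ε (s z)))]
  simp only [← Finset.sum_add_distrib, ← Finset.sum_sub_distrib]
  refine Finset.sum_congr rfl fun u _ => ?_
  refine Finset.sum_congr rfl fun v _ => Finset.sum_congr rfl fun w _ => ?_
  split_ifs
  · rw [add_smul, sub_smul]
  · simp

namespace GridDrawing

variable {κ : ℤ → V} {R : ℤ} (D : GridDrawing V κ R)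

/-- The winding numbers of the boundary of the triangle `u v w` around the grid points. -/
def triWind (u v w : V) : ℤ × ℤ → ℤ :=
  rowPrimitive R fun p => -(D.α v w p - D.α u w p + D.α u v p)

/-- The coefficient of a term in the total form. -/
def coef (p : ℤ × ℤ) : GridTerm V → ℤ
  | Sum.inl v => (Pi.single (D.pt v) 1 : ℤ × ℤ → ℤ) p
  | Sum.inr (Sum.inl (b, u, v)) => if u < v then (if b then D.β u v p else D.α u v p) else 0
  | Sum.inr (Sum.inr (u, v, w)) => if u < v ∧ v < w then D.triWind u v w p else 0

lemma windForm_eq_sum (s : V → M) (p : ℤ × ℤ) :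
    D.windForm k s p = ∑ u, ∑ v, ∑ w,
      (if u < v ∧ v < w then D.triWind u v w p else 0) • (ε (s u) * (ε (s v) * ε (s w))) := by
  have hterm (F : ℤ × ℤ → ℤ) (a : Λ) :
      rowPrimitive R (fun p => F p • a) p = rowPrimitive R F p • a :=
    (map_rowPrimitive ((smulAddHom ℤ Λ).flip a) R F p).symm
  have hrow : (fun p => ε (-∑ v, s v) * D.dxForm k s p) = ∑ u, ∑ v, ∑ w, fun p =>
      (if u < v ∧ v < w then -(D.α v w p - D.α u w p + D.α u v p) else 0) •
        (ε (s u) * (ε (s v) * ε (s w))) := by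
    funext p
    rw [map_neg, neg_mul, dxForm, ι_sum_mul_edgeForm]
    simp only [Finset.sum_apply, ← Finset.sum_neg_distrib, ← neg_smul, apply_ite Neg.neg, neg_zero]
  rw [windForm, hrow]
  simp only [map_sum, Finset.sum_apply, hterm]
  refine Finset.sum_congr rfl fun u _ => Finset.sum_congr rfl fun v _ =>
    Finset.sum_congr rfl fun w _ => ?_
  split_ifs
  · rfl
  · rw [show (fun _ : ℤ × ℤ => (0 : ℤ)) = 0 from rfl, map_zero, Pi.zero_apply]

lemma totalForm_eq_sum (x y : M) (s : V → M) (p : ℤ × ℤ) :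
    D.totalForm k x y s p = ∑ T : GridTerm V, D.coef p T • ((T.vecs x y s).map ε).prod := by
  simp only [totalForm, oneForm, ptForm, vertexForm, dxForm, dyForm, edgeForm, AddMonoidHom.coe_mk,
    ZeroHom.coe_mk, Pi.add_apply, windForm_eq_sum, Finset.mul_sum, mul_smul_comm,
    Fintype.sum_sum_type, Fintype.sum_prod_type, Fintype.sum_bool, coef, GridTerm.vecs, if_true,
    Bool.false_eq_true, if_false, List.map_cons, List.map_nil, List.prod_cons, List.prod_nil,
    mul_one]
  abel

end GridDrawing

end Expansion

/-! ### Colorful families of terms -/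

lemma map_list_prod_sum_congr {I T A B : Type*} [Ring A] [AddCommMonoid B] [Fintype T]
    [Nonempty T] {l : List I} (hl : l.Nodup) (g g' : I → T → A) (φ φ' : A →+ B)
    (h : ∀ S : I → T, φ (l.map fun i => g i (S i)).prod = φ' (l.map fun i => g' i (S i)).prod) :
    φ (l.map fun i => ∑ a, g i a).prod = φ' (l.map fun i => ∑ a, g' i a).prod := by
  classical
  induction l generalizing φ φ' with
  | nil => exact h fun _ => Classical.arbitrary T
  | cons i l ih =>
    rw [List.nodup_cons] at hl
    simp only [List.map_cons, List.prod_cons, Finset.sum_mul, map_sum]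
    refine Finset.sum_congr rfl fun a _ => ?_
    refine ih hl.2 (φ.comp (AddMonoidHom.mulLeft (g i a)))
      (φ'.comp (AddMonoidHom.mulLeft (g' i a))) fun S => ?_
    have hupdate (f : I → T → A) : (l.map fun j => f j (Function.update S i a j)) =
        l.map fun j => f j (S j) :=
      List.map_congr_left fun j hj => by
        rw [Function.update_of_ne (ne_of_mem_of_not_mem hj hl.1)]
    simpa only [List.map_cons, List.prod_cons, Function.update_self, hupdate,
      AddMonoidHom.comp_apply, AddMonoidHom.coe_mulLeft] using h (Function.update S i a)

lemma list_prod_map_zsmul {I A : Type*} [Ring A] (l : List I) (c : I → ℤ) (g : I → A) :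
    (l.map fun i => c i • g i).prod = (l.map c).prod • (l.map g).prod := by
  induction l with
  | nil => simp
  | cons i l ih => simp only [List.map_cons, List.prod_cons, ih, smul_mul_smul_comm]

section NonzeroMonomial

variable {k M T : Type*} [CommRing k] [AddCommGroup M] [Module k M]

local notation "ε" => ExteriorAlgebra.ι k

variable {f : T → M} {L : List T}

lemma pairwise_ι_mul_ι_ne_zero (h : (L.map fun a => ε (f a)).prod ≠ 0) :
    L.Pairwise fun a b => ε (f a) * ε (f b) ≠ 0 := by
  induction L with
  | nil => simp
  | cons a L ih =>
    rw [List.map_cons, List.prod_cons] at h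
    refine List.pairwise_cons.mpr ⟨fun b hb hab => h ?_, ih (right_ne_zero_of_mul h)⟩
    obtain ⟨L₁, L₂, rfl⟩ := List.append_of_mem hb
    rw [List.map_append, List.map_cons, List.prod_append, List.prod_cons, ← mul_assoc,
      ι_mul_eq_parityInv_mul_ι, mul_assoc, ← mul_assoc (ε (f a)), hab, zero_mul, mul_zero]

lemma nodup_of_prod_ι_ne_zero (h : (L.map fun a => ε (f a)).prod ≠ 0) : L.Nodup :=
  (pairwise_ι_mul_ι_ne_zero h).imp fun hab heq =>
    hab (by rw [heq, ExteriorAlgebra.ι_sq_zero])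

lemma ι_mul_ι_ne_zero_of_prod_ι_ne_zero (h : (L.map fun a => ε (f a)).prod ≠ 0) {a b : T}
    (ha : a ∈ L) (hb : b ∈ L) (hab : a ≠ b) : ε (f a) * ε (f b) ≠ 0 := by
  have : Std.Symm fun a b => ε (f a) * ε (f b) ≠ 0 := ⟨fun a b hab hba => hab (by
    rw [anticomm_of_mem_oddPart (ι_mem_oddPart _) (ι_mem_oddPart _), hba, neg_zero])⟩
  exact (pairwise_ι_mul_ι_ne_zero h).forall ha hb hab

lemma ne_zero_of_prod_ι_ne_zero (h : (L.map fun a => ε (f a)).prod ≠ 0) {a : T} (ha : a ∈ L) :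
    f a ≠ 0 := fun h0 =>
  h (List.prod_eq_zero (List.mem_map.mpr ⟨a, ha, by rw [h0, map_zero]⟩))

end NonzeroMonomial

section Colorful

variable {k V : Type*} [CommRing k] {q : ℕ}

local notation "ε" => ExteriorAlgebra.ι k

open GenIdx

/-- A partition into rainbow parts indexed by `ZMod q`, with the uncolored vertices in part `0`. -/
structure IsColorful (col : V → Option (Fin 3)) (P : ZMod q → Finset V) : Prop where
  disjoint : ∀ i j, i ≠ j → Disjoint (P i) (P j)
  cover : ∀ v, ∃ i, v ∈ P i
  rainbow : ∀ i, ∀ u ∈ P i, ∀ v ∈ P i, u ≠ v → col u ≠ col v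
  apex : ∀ i, ∀ v ∈ P i, col v = none → i = 0

/-- A factor of the monomial of a term in some part: a coordinate form (`dy` if the flag is
`true`), or a vertex in a part. -/
abbrev Token (q : ℕ) (V : Type*) : Type _ := Bool ⊕ (V × ZMod q)

/-- The vector of a factor. -/
def Token.vec (col : V → Option (Fin 3)) (t : V → k) : Token q V → GenIdx q → k
  | Sum.inl b => if b then gen k dy else gen k dx
  | Sum.inr (v, i) => t v • colorVec k col v i

namespace GridTerm

/-- The factors of the monomial of a term placed in part `i`. -/
def tokens (i : ZMod q) : GridTerm V → List (Token q V)
  | Sum.inl v => [Sum.inl false, Sum.inl true, Sum.inr (v, i)]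
  | Sum.inr (Sum.inl (b, u, v)) => [Sum.inl b, Sum.inr (u, i), Sum.inr (v, i)]
  | Sum.inr (Sum.inr (u, v, w)) => [Sum.inr (u, i), Sum.inr (v, i), Sum.inr (w, i)]

lemma vecs_eq_map_tokens (col : V → Option (Fin 3)) (t : V → k) (i : ZMod q) (T : GridTerm V) :
    T.vecs (gen k dx) (gen k dy) (fun v => t v • colorVec k col v i) =
      (T.tokens i).map (Token.vec col t) := by
  rcases T with v | ⟨b, u, v⟩ | ⟨u, v, w⟩ <;> simp [vecs, tokens, Token.vec]

lemma length_tokens (i : ZMod q) (T : GridTerm V) : (T.tokens i).length = 3 := by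
  rcases T with v | ⟨b, u, v⟩ | ⟨u, v, w⟩ <;> rfl

lemma mem_tokens [DecidableEq V] {i j : ZMod q} {T : GridTerm V} {v : V} :
    Sum.inr (v, j) ∈ T.tokens i ↔ v ∈ T.verts ∧ j = i := by
  rcases T with w | ⟨b, u, w⟩ | ⟨u, w, w'⟩ <;> simp [verts, tokens] <;> tauto

/-- The monomial of a term placed in part `i`. -/
def mono (col : V → Option (Fin 3)) (t : V → k) (i : ZMod q) (T : GridTerm V) :
    ExteriorAlgebra k (GenIdx q → k) :=
  ((T.tokens i).map fun a => ExteriorAlgebra.ι k (Token.vec col t a)).prod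

end GridTerm

/-- The factors of the product of the monomials of a family of terms. -/
def familyTokens (S : ZMod q → GridTerm V) : List (Token q V) :=
  (residues q).flatMap fun i => (S i).tokens i

variable {col : V → Option (Fin 3)} {t : V → k} {S : ZMod q → GridTerm V}

lemma prod_mono_eq_prod_familyTokens (col : V → Option (Fin 3)) (t : V → k)
    (S : ZMod q → GridTerm V) :
    ((residues q).map fun i => (S i).mono col t i).prod =
      ((familyTokens S).map fun a => ε (Token.vec col t a)).prod := by
  rw [familyTokens, List.map_flatMap, List.flatMap, List.prod_flatten, List.map_map]
  rfl

lemma length_familyTokens (S : ZMod q → GridTerm V) : (familyTokens S).length = 3 * q := by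
  simp [familyTokens, List.length_flatMap, GridTerm.length_tokens, length_residues, mul_comm]

lemma eq_of_mem_familyTokens (ht : ∀ v, t v * t v = 0)
    (h : ((familyTokens S).map fun a => ε (Token.vec col t a)).prod ≠ 0) {v : V} {i j : ZMod q}
    (hi : Sum.inr (v, i) ∈ familyTokens S) (hj : Sum.inr (v, j) ∈ familyTokens S) : i = j := by
  by_contra hij
  refine ι_mul_ι_ne_zero_of_prod_ι_ne_zero h hi hj (by simpa using hij) ?_
  simp only [Token.vec, map_smul, smul_mul_smul_comm, ht, zero_smul]

/-- The factors of a nonzero product are distinct, so counting them shows that every vertex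
occurs. -/
lemma exists_mem_familyTokens [Fintype V] (ht : ∀ v, t v * t v = 0)
    (hcard : Fintype.card V + 2 = 3 * q)
    (h : ((familyTokens S).map fun a => ε (Token.vec col t a)).prod ≠ 0) (v : V) :
    ∃ i, Sum.inr (v, i) ∈ familyTokens S := by
  classical
  have hinj : Set.InjOn (Sum.map id Prod.fst : Token q V → Bool ⊕ V)
      (familyTokens S).toFinset := by
    rintro (a | ⟨u, i⟩) ha (b | ⟨v, j⟩) hb hab
    · simpa using hab
    · simp at hab
    · simp at hab
    · obtain rfl : u = v := by simpa using hab
      rw [Finset.mem_coe, List.mem_toFinset] at ha hb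
      rw [eq_of_mem_familyTokens ht h ha hb]
  have himage : (familyTokens S).toFinset.image (Sum.map id Prod.fst) = Finset.univ := by
    rw [← Finset.card_eq_iff_eq_univ, Finset.card_image_of_injOn hinj,
      List.toFinset_card_of_nodup (nodup_of_prod_ι_ne_zero h), length_familyTokens,
      Fintype.card_sum, Fintype.card_bool, add_comm, hcard]
  have hv : Sum.inr v ∈ (familyTokens S).toFinset.image (Sum.map id Prod.fst) :=
    himage ▸ Finset.mem_univ _
  obtain ⟨b | ⟨u, i⟩, hmem, huv⟩ := Finset.mem_image.mp hv
  · simp at huv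
  · obtain rfl : u = v := by simpa using huv
    exact ⟨i, List.mem_toFinset.mp hmem⟩

variable [NeZero q]

lemma mem_familyTokens [DecidableEq V] {v : V} {i : ZMod q} :
    Sum.inr (v, i) ∈ familyTokens S ↔ v ∈ (S i).verts := by
  simp [familyTokens, List.mem_flatMap, GridTerm.mem_tokens, mem_residues]

variable [Fintype V] [LinearOrder V]

lemma isColorful_of_prod_mono_ne_zero (ht : ∀ v, t v * t v = 0)
    (hcard : Fintype.card V + 2 = 3 * q)
    (h : ((residues q).map fun i => (S i).mono col t i).prod ≠ 0) :
    IsColorful col fun i => (S i).verts := by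
  rw [prod_mono_eq_prod_familyTokens] at h
  constructor
  · exact fun i j hij => Finset.disjoint_left.mpr fun v hi hj =>
      hij (eq_of_mem_familyTokens ht h (mem_familyTokens.mpr hi) (mem_familyTokens.mpr hj))
  · exact fun v => (exists_mem_familyTokens ht hcard h v).imp fun i => mem_familyTokens.mp
  · intro i u hu v hv huv hc
    refine ι_mul_ι_ne_zero_of_prod_ι_ne_zero h (mem_familyTokens.mpr hu) (mem_familyTokens.mpr hv)
      (by simpa using huv) ?_
    have hvec : colorVec k col u i = colorVec k col v i := by simp only [colorVec, hc]
    simp only [Token.vec, map_smul, smul_mul_smul_comm, hvec, ExteriorAlgebra.ι_sq_zero, smul_zero]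
  · intro i v hv hc
    by_contra hi
    exact ne_zero_of_prod_ι_ne_zero h (mem_familyTokens.mpr hv)
      (by simp [Token.vec, colorVec, hc, hi])

namespace GridDrawing

variable {κ : ℤ → V} {R : ℤ}

omit [NeZero q] in
lemma prod_colorForm_apply (D : GridDrawing V κ R) (col : V → Option (Fin 3)) (t : V → k)
    (l : List (ZMod q)) (p : ℤ × ℤ) :
    (l.map (D.colorForm col t)).prod p =
      (l.map fun i => ∑ T : GridTerm V, D.coef p T • T.mono col t i).prod := by
  rw [Pi.list_prod_apply, List.map_map]
  refine congrArg _ (List.map_congr_left fun i _ => (D.totalForm_eq_sum _ _ _ _).trans ?_)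
  simp only [GridTerm.vecs_eq_map_tokens, List.map_map]
  rfl

theorem exists_isColorful [Nonempty V] (D : GridDrawing V κ R) (ht : ∀ v, t v * t v = 0)
    (hcard : Fintype.card V + 2 = 3 * q) {c : k →+ ZMod q} (h : D.degree q col t c ≠ 0) :
    ∃ (p : ℤ × ℤ) (S : ZMod q → GridTerm V),
      IsColorful col (fun i => (S i).verts) ∧ ∀ i, D.coef p (S i) ≠ 0 := by
  by_contra! hcon
  have hprod : ((residues q).map (D.colorForm col t)).prod = 0 := funext fun p => by
    rw [prod_colorForm_apply]
    refine map_list_prod_sum_congr (nodup_residues q) _ (fun _ _ => 0) (AddMonoidHom.id _) 0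
      fun S => ?_
    rw [AddMonoidHom.id_apply, AddMonoidHom.zero_apply, list_prod_map_zsmul]
    by_contra hne
    obtain ⟨i, hi⟩ := hcon p S
      (isColorful_of_prod_mono_ne_zero ht hcard (right_ne_zero_of_smul hne))
    exact left_ne_zero_of_smul hne
      (List.prod_eq_zero (List.mem_map.mpr ⟨i, mem_residues i, hi⟩))
  exact h (by rw [degree, hprod, map_zero, map_zero, map_zero])

end GridDrawing

end Colorful

/-! ### Invariance of the degree -/

section Mix

variable {V : Type*} {κ : ℤ → V} {R : ℤ}

/-- The drawing with prescribed vertices whose edges are L-shaped. -/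
def lDrawing (pt : V → ℤ × ℤ) (hpt : ∀ v, κ (pt v).1 = v ∧ κ (pt v).2 = v)
    (hbox : ∀ v, pt v ∈ gridBox R) : GridDrawing V κ R where
  pt := pt
  α u v := lpathα (pt u) (pt v)
  β u v := lpathβ (pt u) (pt v)
  closed u v := gridDiff_lpathβ_sub_gridDiff_lpathα _ _
  label_pt := hpt
  label_α u v p h := Or.inr (by rw [fst_eq_of_lpathα_ne_zero h, (hpt v).1])
  label_dα u v p h := (snd_eq_or_eq_of_gridDiff_lpathα_ne_zero h).imp
    (fun h => by rw [h, (hpt u).2]) (fun h => by rw [h, (hpt v).2])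
  label_β u v p h := Or.inl (by rw [snd_eq_of_lpathβ_ne_zero h, (hpt u).2])
  label_dβ u v p h := (fst_eq_or_eq_of_gridDiff_lpathβ_ne_zero h).imp
    (fun h => by rw [h, (hpt u).1]) (fun h => by rw [h, (hpt v).1])
  pt_mem := hbox
  α_mem u v := lpathα_mem_boxSupported (hbox u) (hbox v)
  β_mem u v := lpathβ_mem_boxSupported (hbox u) (hbox v)

namespace GridDrawing

open Classical in
/-- The drawing agreeing with `D₀` on `s`, with `D₁` off `s`, and L-shaped in between. -/
def mix (D₀ D₁ : GridDrawing V κ R) (s : Set V) : GridDrawing V κ R :=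
  let L : GridDrawing V κ R := lDrawing (fun v => if v ∈ s then D₀.pt v else D₁.pt v)
    (fun v => by split_ifs; exacts [D₀.label_pt v, D₁.label_pt v])
    (fun v => by split_ifs; exacts [D₀.pt_mem v, D₁.pt_mem v])
  let sel : V → V → GridDrawing V κ R := fun u v =>
    if u ∈ s ∧ v ∈ s then D₀ else if u ∉ s ∧ v ∉ s then D₁ else L
  have hsel : ∀ u v, (sel u v).pt u = L.pt u ∧ (sel u v).pt v = L.pt v := fun u v => by
    by_cases hu : u ∈ s <;> by_cases hv : v ∈ s <;> simp [sel, hu, hv, L, lDrawing]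
  { pt := L.pt
    α := fun u v => (sel u v).α u v
    β := fun u v => (sel u v).β u v
    closed := fun u v => by rw [(sel u v).closed, (hsel u v).1, (hsel u v).2]
    label_pt := L.label_pt
    label_α := fun u v => (sel u v).label_α u v
    label_dα := fun u v => (sel u v).label_dα u v
    label_β := fun u v => (sel u v).label_β u v
    label_dβ := fun u v => (sel u v).label_dβ u v
    pt_mem := L.pt_mem
    α_mem := fun u v => (sel u v).α_mem u v
    β_mem := fun u v => (sel u v).β_mem u v }

lemma agreeOff_mix_insert (D₀ D₁ : GridDrawing V κ R) (s : Set V) (w : V) :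
    AgreeOff (mix D₀ D₁ s) (mix D₀ D₁ (insert w s)) w := by
  refine ⟨fun v hv => ?_, fun u v hu hv => ?_, fun u v hu hv => ?_⟩
  · by_cases h1 : v ∈ s <;> simp [mix, lDrawing, hv, h1]
  · by_cases h1 : v ∈ s <;> by_cases h2 : u ∈ s <;> simp [mix, lDrawing, hv, hu, h1, h2]
  · by_cases h1 : v ∈ s <;> by_cases h2 : u ∈ s <;> simp [mix, lDrawing, hv, hu, h1, h2]

lemma agreeOff_mix_empty (D₀ D₁ : GridDrawing V κ R) (w : V) : AgreeOff D₁ (mix D₀ D₁ ∅) w :=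
  ⟨fun v _ => by simp [mix, lDrawing], fun u v _ _ => by simp [mix],
    fun u v _ _ => by simp [mix]⟩

lemma agreeOff_mix_univ (D₀ D₁ : GridDrawing V κ R) (w : V) :
    AgreeOff D₀ (mix D₀ D₁ Set.univ) w :=
  ⟨fun v _ => by simp [mix, lDrawing], fun u v _ _ => by simp [mix],
    fun u v _ _ => by simp [mix]⟩

/-- The vertices are moved from one drawing to the other one at a time. -/
theorem degree_eq_degree [Fintype V] [LinearOrder V] [Nonempty V] {k : Type*} [CommRing k] {q : ℕ}
    (hq : q.Prime) [NeZero q] (D₀ D₁ : GridDrawing V κ R) (col : V → Option (Fin 3))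
    {t : V → k} (ht : ∀ v, t v * t v = 0) (c : k →+ ZMod q) :
    D₀.degree q col t c = D₁.degree q col t c := by
  have hmix (s : Finset V) : (mix D₀ D₁ s).degree q col t c = D₁.degree q col t c := by
    induction s using Finset.induction_on with
    | empty =>
      rw [Finset.coe_empty]
      exact (agreeOff_mix_empty D₀ D₁ (Classical.arbitrary V)).degree_eq hq ht c
    | insert w s _ ih =>
      rw [Finset.coe_insert, ← ih]
      exact (agreeOff_mix_insert D₀ D₁ s w).degree_eq hq ht c
  rw [← hmix Finset.univ, Finset.coe_univ]
  exact ((agreeOff_mix_univ D₀ D₁ (Classical.arbitrary V)).degree_eq hq ht c).symm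

end GridDrawing

end Mix

/-! ### Square-zero weights -/

section SquareZero

lemma add_pow_succ_of_mul_self_eq_zero {k : Type*} [CommRing k] {a : k} (ha : a * a = 0) (b : k)
    (n : ℕ) : (a + b) ^ (n + 1) = b ^ (n + 1) + (n + 1 : ℕ) * (a * b ^ n) := by
  induction n with
  | zero => simp; ring
  | succ n ih =>
    rw [pow_succ, ih]
    push_cast
    linear_combination ((n : k) + 1) * b ^ n * ha

lemma sum_pow_card_of_mul_self_eq_zero {k V : Type*} [CommRing k] {t : V → k}
    (ht : ∀ v, t v * t v = 0) (s : Finset V) :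
    (∑ v ∈ s, t v) ^ s.card = (s.card.factorial : k) * ∏ v ∈ s, t v := by
  classical
  induction s using Finset.induction_on with
  | empty => simp
  | insert a s ha ih =>
    have hzero : (∑ v ∈ s, t v) * ∏ v ∈ s, t v = 0 := by
      rw [Finset.sum_mul]
      refine Finset.sum_eq_zero fun v hv => ?_
      rw [← Finset.mul_prod_erase s t hv, ← mul_assoc, ht, zero_mul]
    rw [Finset.sum_insert ha, Finset.prod_insert ha, Finset.card_insert_of_notMem ha,
      add_pow_succ_of_mul_self_eq_zero (ht a), pow_succ, ih, Nat.factorial_succ]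
    push_cast
    linear_combination (s.card.factorial : k) * hzero

open MvPolynomial in
lemma coeff_eq_zero_of_mem_span_X_mul_X {V A : Type*} [CommRing A] {e : V →₀ ℕ}
    (he : ∀ v, e v ≤ 1) {a : MvPolynomial V A}
    (ha : a ∈ Ideal.span (Set.range fun v : V => (X v * X v : MvPolynomial V A))) :
    coeff e a = 0 := by
  have hspan : (Set.range fun v : V => (X v * X v : MvPolynomial V A)) =
      (fun s => monomial s 1) '' Set.range fun v => Finsupp.single v 2 := by
    rw [← Set.range_comp]
    refine congrArg Set.range (funext fun v => ?_)
    rw [Function.comp_apply, ← sq, X_pow_eq_monomial]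
  rw [hspan, mem_ideal_span_monomial_image] at ha
  by_contra hne
  obtain ⟨_, ⟨v, rfl⟩, hv⟩ := ha e (mem_support_iff.mpr hne)
  have h2 := (hv v).trans (he v)
  simp at h2

/-- Take the polynomial ring modulo the squares of the variables, and the coefficient of the
product of all variables. -/
lemma exists_squareZero_ring (A V : Type) [CommRing A] [Fintype V] :
    ∃ (k : Type) (_ : CommRing k) (t : V → k) (c : k →+ A),
      (∀ v, t v * t v = 0) ∧ c (∏ v, t v) = 1 := by
  set I : Ideal (MvPolynomial V A) :=
    Ideal.span (Set.range fun v => MvPolynomial.X v * MvPolynomial.X v)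
  set e : V →₀ ℕ := ∑ v, Finsupp.single v 1 with he
  have hev (v : V) : e v ≤ 1 := by
    classical
    rw [he, Finsupp.finsetSum_apply]
    simp [Finsupp.single_apply]
  refine ⟨MvPolynomial V A ⧸ I, inferInstance, fun v => Ideal.Quotient.mk I (MvPolynomial.X v),
    QuotientAddGroup.lift I.toAddSubgroup (MvPolynomial.lcoeff A e).toAddMonoidHom
      fun a ha => coeff_eq_zero_of_mem_span_X_mul_X hev ha, fun v => ?_, ?_⟩
  · rw [← map_mul]
    exact Ideal.Quotient.eq_zero_iff_mem.mpr (Ideal.subset_span ⟨v, rfl⟩)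
  · rw [← map_prod]
    change MvPolynomial.coeff e (∏ v : V, MvPolynomial.X v : MvPolynomial V A) = 1
    classical
    rw [show ∏ v : V, (MvPolynomial.X v : MvPolynomial V A) = MvPolynomial.monomial e 1 by
        rw [he, MvPolynomial.monomial_sum_one]; rfl,
      MvPolynomial.coeff_monomial, if_pos rfl]

end SquareZero

section ColorTop

variable {k : Type*} [CommRing k]

local notation "ε" => ExteriorAlgebra.ι k

lemma ι_mul_mul_prod_ι_eq_zero {M T : Type*} [AddCommGroup M] [Module k M] {f : T → M} {L : List T}
    {a : T} (ha : a ∈ L) (b : ExteriorAlgebra k M) :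
    ε (f a) * (b * (L.map fun j => ε (f j)).prod) = 0 := by
  obtain ⟨L₁, L₂, rfl⟩ := List.append_of_mem ha
  rw [List.map_append, List.prod_append, List.map_cons, List.prod_cons, ← mul_assoc b,
    ι_mul_mul_ι_mul_cancel]

open GenIdx

variable {q : ℕ}

/-- The indices of the three colors of part `i`. -/
def partIdx (i : ZMod q) : List (GenIdx q) := [color 0 i, color 1 i, color 2 i]

variable (k) in
/-- The product of the three generators of part `i`. -/
def partProd (i : ZMod q) : ExteriorAlgebra k (GenIdx q → k) :=
  ((partIdx i).map fun j => ExteriorAlgebra.ι k (gen k j)).prod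

/-- The indices of all generators, starting with those of part `0` and the uncolored ones. -/
def allIdx (l : List (ZMod q)) : List (GenIdx q) :=
  partIdx 0 ++ ([dx, dy, apex] ++ l.flatMap partIdx)

lemma nodup_allIdx {l : List (ZMod q)} (hl : (0 :: l).Nodup) : (allIdx l).Nodup := by
  rw [List.nodup_cons] at hl
  have hpart (i : ZMod q) : (partIdx i).Nodup := by simp [partIdx]
  have hdisj {i j : ZMod q} (hij : i ≠ j) : List.Disjoint (partIdx i) (partIdx j) := by
    simp [partIdx, hij.symm]
  refine List.nodup_append'.mpr ⟨hpart 0, List.nodup_append'.mpr ⟨by simp,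
    List.nodup_flatMap.mpr ⟨fun i _ => hpart i, hl.2.imp hdisj⟩, ?_⟩, ?_⟩
  · simp [partIdx, List.disjoint_left]
  · refine List.disjoint_append_right.mpr ⟨by simp [partIdx], fun j hj hjl => ?_⟩
    obtain ⟨i, hi, hji⟩ := List.mem_flatMap.mp hjl
    exact hdisj (ne_of_mem_of_not_mem hi hl.1).symm hj hji

lemma length_allIdx [NeZero q] {l : List (ZMod q)} (hl : l.length + 1 = q) :
    (allIdx l).length = Fintype.card (GenIdx q) := by
  simp only [allIdx, partIdx, List.length_append, List.length_flatMap, List.length_cons,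
    List.length_nil, List.map_const', List.sum_replicate, Fintype.card_sum, Fintype.card_prod,
    Fintype.card_fin, ZMod.card, smul_eq_mul]
  omega

variable [NeZero q]

/-- The generators of the later parts are absorbed by `L`. -/
lemma ι_colorSum_mul {c : Fin 3} {L : List (GenIdx q)} (hL : ∀ i, i ≠ 0 → color c i ∈ L)
    (b : ExteriorAlgebra k (GenIdx q → k)) :
    ε (colorSum k q c) * (b * (L.map fun j => ε (gen k j)).prod) =
      ε (gen k (color c 0)) * (b * (L.map fun j => ε (gen k j)).prod) := by
  rw [colorSum, map_sum, Finset.sum_mul, Finset.sum_eq_single 0]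
  · exact fun i _ hi => ι_mul_mul_prod_ι_eq_zero (hL i hi) b
  · exact fun h => absurd (Finset.mem_univ _) h

lemma exists_colorTop_prod_partProd_eq {l : List (ZMod q)} (hl : residues q = 0 :: l) :
    ∃ s : ℤˣ, colorTop k q (ε (gen k dx) * (ε (gen k dy) * ε (gen k apex)) *
      (l.map (partProd k)).prod) = ((s : ℤ) : k) := by
  have hnodup : (0 :: l).Nodup := hl ▸ nodup_residues q
  have hlen : l.length + 1 = q := by simpa [length_residues] using (congrArg List.length hl).symm
  have hmem (c : Fin 3) (i : ZMod q) (hi : i ≠ 0) : color c i ∈ l.flatMap partIdx := by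
    have hil : i ∈ l := (List.mem_cons.mp (hl ▸ mem_residues i)).resolve_left hi
    refine List.mem_flatMap.mpr ⟨i, hil, ?_⟩
    fin_cases c <;> simp [partIdx]
  have hparts : (l.map (partProd k)).prod =
      ((l.flatMap partIdx).map fun j => ε (gen k j)).prod := by
    rw [List.map_flatMap, List.flatMap, List.prod_flatten, List.map_map]
    rfl
  obtain ⟨s, hs⟩ := exists_topForm_prod_single_eq (k := k) (nodup_allIdx hnodup)
    (length_allIdx hlen)
  refine ⟨s, hs ▸ congrArg (topForm k (GenIdx q)) ?_⟩
  rw [LinearMap.mulLeft_apply, colorProd, hparts, mul_assoc, mul_assoc, ι_colorSum_mul (hmem 2),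
    ← mul_assoc (ε _) _ (List.prod _), ι_colorSum_mul (hmem 1),
    ← mul_assoc (ε _) _ (List.prod _), ι_colorSum_mul (hmem 0)]
  simp [allIdx, partIdx, mul_assoc]

end ColorTop

/-! ### A drawing of nonzero degree -/

section LDrawing

variable {V : Type*} {κ : ℤ → V} {R : ℤ} {pt : V → ℤ × ℤ}
  {hpt : ∀ v, κ (pt v).1 = v ∧ κ (pt v).2 = v} {hbox : ∀ v, pt v ∈ gridBox R}
  {p : ℤ × ℤ}

lemma sum_Ico_ite_eq {A : Type*} [AddCommMonoid A] {a b x : ℤ} (hx : a ≤ x) (y : A) :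
    ∑ i ∈ Finset.Ico a b, (if i = x then y else 0) = if x < b then y else 0 := by
  rw [Finset.sum_ite_eq' (Finset.Ico a b) x fun _ => y]
  simp [hx]

lemma triWind_lDrawing (u v w : V) (p : ℤ × ℤ) : (lDrawing pt hpt hbox).triWind u v w p =
    ((if (pt v).1 ≤ p.1 then 1 else 0) - (if (pt w).1 ≤ p.1 then 1 else 0)) *
      ((if (pt v).2 ≤ p.2 then 1 else 0) - (if (pt u).2 ≤ p.2 then 1 else 0)) := by
  set z : ℤ := (if (pt v).2 ≤ p.2 then 1 else 0) - (if (pt u).2 ≤ p.2 then 1 else 0) with hz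
  have hsum : (lDrawing pt hpt hbox).triWind u v w p = ∑ i ∈ Finset.Ico (-R) (p.1 + 1),
      ((if i = (pt v).1 then z else 0) - (if i = (pt w).1 then z else 0)) := by
    rw [GridDrawing.triWind, rowPrimitive_apply]
    refine Finset.sum_congr rfl fun i _ => ?_
    simp only [lDrawing, lpathα, hz]
    split_ifs <;> ring
  rw [hsum, Finset.sum_sub_distrib, sum_Ico_ite_eq (mem_gridBox.mp (hbox v)).1.1,
    sum_Ico_ite_eq (mem_gridBox.mp (hbox w)).1.1]
  simp only [Int.lt_add_one_iff]
  split_ifs <;> ring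

variable [LinearOrder V]

namespace GridDrawing

variable {D : GridDrawing V κ R} {u v w : V}

lemma lt_of_coef_edge_ne_zero {b : Bool} (h : D.coef p (Sum.inr (Sum.inl (b, u, v))) ≠ 0) :
    u < v := by
  by_contra hlt
  exact h (by simp [coef, hlt])

lemma lt_of_coef_triangle_ne_zero (h : D.coef p (Sum.inr (Sum.inr (u, v, w))) ≠ 0) :
    u < v ∧ v < w := by
  by_contra hlt
  exact h (by simp only [coef, if_neg hlt])

end GridDrawing

lemma exists_verts_eq_of_coef_lDrawing_ne_zero (hmono : StrictMono fun v => (pt v).1)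
    {T : GridTerm V} (h : (lDrawing pt hpt hbox).coef p T ≠ 0) :
    ∃ u v w, u ≤ v ∧ v ≤ w ∧ T.verts = {u, v, w} ∧ p.1 ∈ Set.Icc (pt v).1 (pt w).1 ∧
      p.2 ∈ Set.uIcc (pt u).2 (pt v).2 := by
  rcases T with v | ⟨b, u, v⟩ | ⟨u, v, w⟩
  · obtain rfl : p = pt v := by
      by_contra hne
      exact h (by simp [GridDrawing.coef, lDrawing, hne])
    exact ⟨v, v, v, by simp [GridTerm.verts]⟩
  · have huv := GridDrawing.lt_of_coef_edge_ne_zero h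
    have hx : (pt u).1 < (pt v).1 := hmono huv
    cases b <;> simp only [GridDrawing.coef, if_pos huv, Bool.false_eq_true, if_false, if_true,
      lDrawing, lpathα, lpathβ] at h
    · refine ⟨u, v, v, huv.le, le_rfl, by simp [GridTerm.verts], ?_⟩
      rw [Set.mem_uIcc, Set.mem_Icc]
      split_ifs at h <;> omega
    · refine ⟨u, u, v, le_rfl, huv.le, by simp [GridTerm.verts], ?_⟩
      rw [Set.uIcc_self, Set.mem_singleton_iff, Set.mem_Icc]
      split_ifs at h <;> omega
  · have huvw := GridDrawing.lt_of_coef_triangle_ne_zero h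
    have hx : (pt v).1 < (pt w).1 := hmono huvw.2
    refine ⟨u, v, w, huvw.1.le, huvw.2.le, rfl, ?_⟩
    simp only [GridDrawing.coef, if_pos huvw, triWind_lDrawing] at h
    rw [Set.mem_uIcc, Set.mem_Icc]
    split_ifs at h <;> omega

lemma exists_verts_fst_le_le_snd (hmono : StrictMono fun v => (pt v).1) {T : GridTerm V}
    (h : (lDrawing pt hpt hbox).coef p T ≠ 0) :
    ∃ v ∈ T.verts, (pt v).1 ≤ p.1 ∧ p.2 ≤ (pt v).2 := by
  obtain ⟨u, v, w, huv, -, hT, hx, hy⟩ := exists_verts_eq_of_coef_lDrawing_ne_zero hmono h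
  have huv : (pt u).1 ≤ (pt v).1 := hmono.monotone huv
  simp only [hT, Finset.mem_insert, Finset.mem_singleton, exists_eq_or_imp, exists_eq_left]
  rw [Set.mem_Icc] at hx
  rw [Set.mem_uIcc] at hy
  omega

lemma exists_verts_snd_le (hmono : StrictMono fun v => (pt v).1) {T : GridTerm V}
    (h : (lDrawing pt hpt hbox).coef p T ≠ 0) : ∃ v ∈ T.verts, (pt v).2 ≤ p.2 := by
  obtain ⟨u, v, w, -, -, hT, -, hy⟩ := exists_verts_eq_of_coef_lDrawing_ne_zero hmono h
  simp only [hT, Finset.mem_insert, Finset.mem_singleton, exists_eq_or_imp, exists_eq_left]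
  rw [Set.mem_uIcc] at hy
  omega

lemma exists_verts_le_fst (hmono : StrictMono fun v => (pt v).1) {T : GridTerm V}
    (h : (lDrawing pt hpt hbox).coef p T ≠ 0) : ∃ v ∈ T.verts, p.1 ≤ (pt v).1 := by
  obtain ⟨u, v, w, -, -, hT, hx, -⟩ := exists_verts_eq_of_coef_lDrawing_ne_zero hmono h
  exact ⟨w, by simp [hT], hx.2⟩

lemma fst_le_of_mem_verts_of_lt (hmono : StrictMono fun v => (pt v).1) {T : GridTerm V}
    (h : (lDrawing pt hpt hbox).coef p T ≠ 0) {x y : V} (hx : x ∈ T.verts) (hy : y ∈ T.verts)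
    (hxy : x < y) : (pt x).1 ≤ p.1 := by
  obtain ⟨u, v, w, huv, hvw, hT, hp, -⟩ := exists_verts_eq_of_coef_lDrawing_ne_zero hmono h
  refine le_trans (hmono.monotone ?_) hp.1
  simp only [hT, Finset.mem_insert, Finset.mem_singleton] at hx hy
  rcases hx with rfl | rfl | rfl
  · exact huv
  · exact le_rfl
  · rcases hy with rfl | rfl | rfl
    exacts [absurd (huv.trans hvw) hxy.not_ge, absurd hvw hxy.not_ge, absurd hxy (lt_irrefl _)]

end LDrawing

section BaseDrawing

variable {m : ℕ} {R : ℤ}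

/-- The coloring of the base drawing: `m` vertices of each of the three colors, and the apex
between the second and the third color. -/
def baseCol (m : ℕ) (v : Fin (3 * m + 1)) : Option (Fin 3) :=
  if v.val < m then some 0 else if v.val < 2 * m then some 1 else if v.val = 2 * m then none
  else some 2

/-- The apex of the base drawing. -/
def baseApex (m : ℕ) : Fin (3 * m + 1) := ⟨2 * m, by omega⟩

lemma baseCol_eq_some_zero {v : Fin (3 * m + 1)} : baseCol m v = some 0 ↔ v.val < m := by
  unfold baseCol; split_ifs <;> simp <;> omega

lemma baseCol_eq_some_one {v : Fin (3 * m + 1)} :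
    baseCol m v = some 1 ↔ m ≤ v.val ∧ v.val < 2 * m := by
  unfold baseCol; split_ifs <;> simp <;> omega

lemma baseCol_eq_some_two {v : Fin (3 * m + 1)} : baseCol m v = some 2 ↔ 2 * m < v.val := by
  unfold baseCol; split_ifs <;> simp <;> omega

lemma baseCol_eq_none {v : Fin (3 * m + 1)} : baseCol m v = none ↔ v = baseApex m := by
  rw [Fin.ext_iff, baseApex]
  unfold baseCol; split_ifs <;> simp <;> omega

/-- The order of the colors by height in the base drawing. -/
def colLevel : Option (Fin 3) → ℤ
  | some 0 => 0
  | none => 1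
  | some 1 => 2
  | some 2 => 3

lemma colLevel_nonneg (c : Option (Fin 3)) : 0 ≤ colLevel c := by
  revert c; decide

lemma colLevel_le_three (c : Option (Fin 3)) : colLevel c ≤ 3 := by
  revert c; decide

lemma two_le_colLevel {c : Option (Fin 3)} (h₀ : c ≠ some 0) (h : c ≠ none) : 2 ≤ colLevel c := by
  revert c; decide

lemma colLevel_le_one {c : Option (Fin 3)} (h₁ : c ≠ some 1) (h₂ : c ≠ some 2) :
    colLevel c ≤ 1 := by
  revert c; decide

/-- The position of a vertex of the base drawing: every vertex has its own column, and a row in the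
horizontal strip of its color. -/
def basePt (m : ℕ) (v : Fin (3 * m + 1)) : ℤ × ℤ :=
  (v, v + (3 * m + 1) * colLevel (baseCol m v))

lemma strictMono_basePt_fst : StrictMono fun v => (basePt m v).1 :=
  fun _ _ h => Int.ofNat_lt.mpr h

/-- The residue of an integer modulo `n + 1`, as a label. -/
def baseLabel (n : ℕ) (z : ℤ) : Fin (n + 1) :=
  ⟨(z % (n + 1)).toNat, by have := Int.emod_lt_of_pos z (b := n + 1) (by omega); omega⟩

lemma baseLabel_add_mul {n : ℕ} (v : Fin (n + 1)) (z : ℤ) :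
    baseLabel n ((v : ℤ) + ((n : ℤ) + 1) * z) = v := by
  have hv : ((v : ℤ) + ((n : ℤ) + 1) * z) % (n + 1) = v := by
    rw [Int.add_mul_emod_self_left, Int.emod_eq_of_lt (Int.natCast_nonneg _) (mod_cast v.2)]
  exact Fin.ext (by simp only [baseLabel, hv, Int.toNat_natCast])

lemma baseLabel_basePt (v : Fin (3 * m + 1)) :
    baseLabel (3 * m) (basePt m v).1 = v ∧ baseLabel (3 * m) (basePt m v).2 = v :=
  ⟨by simpa [basePt] using baseLabel_add_mul v 0,
    by simpa [basePt] using baseLabel_add_mul v (colLevel (baseCol m v))⟩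

lemma basePt_mem_gridBox (hR : 12 * (m : ℤ) + 4 ≤ R) (v : Fin (3 * m + 1)) :
    basePt m v ∈ gridBox R := by
  have hv := v.2
  have h₀ := colLevel_nonneg (baseCol m v)
  have h₃ := colLevel_le_three (baseCol m v)
  rw [mem_gridBox, basePt]
  constructor <;> constructor <;> dsimp only <;> nlinarith

/-- The base drawing. -/
def baseDrawing (m : ℕ) {R : ℤ} (hR : 12 * (m : ℤ) + 4 ≤ R) :
    GridDrawing (Fin (3 * m + 1)) (baseLabel (3 * m)) R :=
  lDrawing (basePt m) baseLabel_basePt (basePt_mem_gridBox hR)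

end BaseDrawing

section MainTerm

namespace GridDrawing

variable {V : Type*} [LinearOrder V] {κ : ℤ → V} {R : ℤ} {D : GridDrawing V κ R} {p : ℤ × ℤ}
  {T : GridTerm V}

lemma eq_pt_of_coef_vertex_ne_zero {v : V} (h : D.coef p (Sum.inl v) ≠ 0) : p = D.pt v := by
  by_contra hp
  exact h (by simp [coef, hp])

lemma eq_vertex_of_coef_ne_zero (h : D.coef p T ≠ 0) {a : V} (ha : ∀ v ∈ T.verts, v = a) :
    T = Sum.inl a := by
  rcases T with v | ⟨b, u, v⟩ | ⟨u, v, w⟩ <;>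
    simp only [GridTerm.verts, Finset.mem_insert, Finset.mem_singleton, forall_eq_or_imp,
      forall_eq] at ha
  · rw [ha]
  · exact absurd (ha.1.trans ha.2.symm) (lt_of_coef_edge_ne_zero h).ne
  · exact absurd (ha.1.trans ha.2.1.symm) (lt_of_coef_triangle_ne_zero h).1.ne

lemma eq_triangle_of_coef_ne_zero (h : D.coef p T ≠ 0) {x y z : V} (hx : x ∈ T.verts)
    (hy : y ∈ T.verts) (hz : z ∈ T.verts) (hxy : x < y) (hyz : y < z) :
    T = Sum.inr (Sum.inr (x, y, z)) := by
  rcases T with v | ⟨b, u, v⟩ | ⟨u, v, w⟩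
  · simp only [GridTerm.verts, Finset.mem_singleton] at hx hy hz
    order
  · simp only [GridTerm.verts, Finset.mem_insert, Finset.mem_singleton] at hx hy hz
    have := lt_of_coef_edge_ne_zero h
    rcases hx with rfl | rfl <;> rcases hy with rfl | rfl <;> rcases hz with rfl | rfl <;> order
  · simp only [GridTerm.verts, Finset.mem_insert, Finset.mem_singleton] at hx hy hz
    obtain ⟨huv, hvw⟩ := lt_of_coef_triangle_ne_zero h
    rcases hx with rfl | rfl | rfl <;> rcases hy with rfl | rfl | rfl <;>
      rcases hz with rfl | rfl | rfl <;> first | rfl | order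

end GridDrawing

namespace IsColorful

variable {q : ℕ} {V : Type*} {col : V → Option (Fin 3)} {P : ZMod q → Finset V}

lemma eq_of_mem (h : IsColorful col P) {v : V} {i j : ZMod q} (hi : v ∈ P i) (hj : v ∈ P j) :
    i = j := by
  by_contra hij
  exact Finset.disjoint_left.mp (h.disjoint i j hij) hi hj

/-- Distinct vertices of one color lie in distinct parts. -/
lemma exists_part_missing_color [NeZero q] [Fintype V] (h : IsColorful col P) {c : Fin 3}
    (hc : (Finset.univ.filter fun v => col v = some c).card + 1 = q) :
    ∃ i, ∀ j, (∃ v ∈ P j, col v = some c) ↔ j ≠ i := by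
  choose g hg using h.cover
  set s := (Finset.univ.filter fun v => col v = some c).image g with hs
  have hmem (j : ZMod q) : (∃ v ∈ P j, col v = some c) ↔ j ∈ s := by
    simp only [hs, Finset.mem_image, Finset.mem_filter, Finset.mem_univ, true_and]
    exact ⟨fun ⟨v, hv, hcv⟩ => ⟨v, hcv, h.eq_of_mem (hg v) hv⟩,
      fun ⟨v, hcv, hv⟩ => ⟨v, hv ▸ hg v, hcv⟩⟩
  have hcard : s.card + 1 = q := by
    rw [hs, Finset.card_image_of_injOn, hc]
    intro u hu v hv huv
    by_contra hne
    rw [Finset.mem_coe, Finset.mem_filter] at hu hv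
    exact h.rainbow (g v) u (huv ▸ hg u) v (hg v) hne (hu.2.trans hv.2.symm)
  have hcompl : sᶜ.card = 1 := by
    rw [Finset.card_compl, ZMod.card]
    omega
  obtain ⟨i, hi⟩ := Finset.card_eq_one.mp hcompl
  refine ⟨i, fun j => ?_⟩
  rw [hmem, ne_eq, ← Finset.mem_singleton, ← hi, Finset.mem_compl, not_not]

end IsColorful

variable {m : ℕ} {R : ℤ}

/-- The vertices of a given color in the base drawing. -/
def baseClass (m : ℕ) (c : Fin 3) : Finset (Fin (3 * m + 1)) :=
  Finset.univ.filter fun v => baseCol m v = some c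

lemma card_baseClass (m : ℕ) (c : Fin 3) : (baseClass m c).card = m := by
  obtain ⟨a, b, hb, hab, h⟩ : ∃ a b, b ≤ 3 * m + 1 ∧ b - a = m ∧
      ∀ v : Fin (3 * m + 1), baseCol m v = some c ↔ v.val ∈ Finset.Ico a b := by
    simp only [Finset.mem_Ico]
    fin_cases c
    · exact ⟨0, m, by omega, by omega, fun v => by simp [baseCol_eq_some_zero]⟩
    · exact ⟨m, 2 * m, by omega, by omega, fun v => baseCol_eq_some_one⟩
    · exact ⟨2 * m + 1, 3 * m + 1, by omega, by omega, fun v =>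
        baseCol_eq_some_two.trans ⟨fun h => ⟨h, v.2⟩, fun h => h.1⟩⟩
  have hclass : baseClass m c =
      (Finset.Ico a b).attachFin fun i hi => (Finset.mem_Ico.mp hi).2.trans_le hb := by
    ext v
    rw [baseClass, Finset.mem_filter, Finset.mem_attachFin, h]
    exact and_iff_right (Finset.mem_univ v)
  rw [hclass, Finset.card_attachFin, Nat.card_Ico, hab]

/-- The terms contributing to the degree of the base drawing: the apex in part `0`, and triangles
with one vertex of each color in the other parts. -/
def IsMainTerm {q : ℕ} (i : ZMod q) (T : GridTerm (Fin (3 * m + 1))) : Prop :=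
  if i = 0 then T = Sum.inl (baseApex m) else
    ∃ u v w, T = Sum.inr (Sum.inr (u, v, w)) ∧ baseCol m u = some 0 ∧ baseCol m v = some 1 ∧
      baseCol m w = some 2

lemma basePt_snd_mem_strip (v : Fin (3 * m + 1)) :
    (3 * m + 1) * colLevel (baseCol m v) ≤ (basePt m v).2 ∧
      (basePt m v).2 < (3 * m + 1) * (colLevel (baseCol m v) + 1) := by
  have hv := v.2
  rw [basePt]
  constructor <;> dsimp only <;> linarith

section Colorful

variable {q : ℕ} {hR : 12 * (m : ℤ) + 4 ≤ R} {p : ℤ × ℤ} {S : ZMod q → GridTerm (Fin (3 * m + 1))}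
  (hS : IsColorful (baseCol m) fun i => (S i).verts)
  (hne : ∀ i, (baseDrawing m hR).coef p (S i) ≠ 0)

include hS

lemma baseApex_mem_verts_zero : baseApex m ∈ (S 0).verts := by
  obtain ⟨i, hi⟩ := hS.cover (baseApex m)
  rwa [hS.apex i _ hi (baseCol_eq_none.mpr rfl)] at hi

lemma ne_baseApex_of_mem_verts {i : ZMod q} (hi : i ≠ 0) {v : Fin (3 * m + 1)}
    (hv : v ∈ (S i).verts) : v ≠ baseApex m :=
  fun h => hi (hS.apex i v hv (baseCol_eq_none.mpr h))

include hne

lemma two_missing_in_zero {c : ZMod q}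
    (hc : ∀ j, (∃ v ∈ (S j).verts, baseCol m v = some 2) ↔ j ≠ c) : c = 0 := by
  by_contra h0
  have hleft : p.1 < 2 * m := by
    obtain ⟨v, hv, hpv⟩ := exists_verts_le_fst strictMono_basePt_fst (hne c)
    have h2 : baseCol m v ≠ some 2 := fun h => (hc c).mp ⟨v, hv, h⟩ rfl
    have ha := ne_baseApex_of_mem_verts hS h0 hv
    rw [ne_eq, baseCol_eq_some_two] at h2
    rw [ne_eq, Fin.ext_iff, baseApex] at ha
    dsimp only [basePt] at hpv ha
    omega
  obtain ⟨w, hw, hw2⟩ := (hc 0).mpr (Ne.symm h0)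
  have hright : (basePt m (baseApex m)).1 ≤ p.1 :=
    fst_le_of_mem_verts_of_lt strictMono_basePt_fst (hne 0) (baseApex_mem_verts_zero hS) hw
      (baseCol_eq_some_two.mp hw2)
  simp only [basePt, baseApex] at hright
  omega

lemma one_missing_in_zero {a b : ZMod q} (hp : p.1 ≤ 2 * m)
    (ha : ∀ j, (∃ v ∈ (S j).verts, baseCol m v = some 0) ↔ j ≠ a)
    (hb : ∀ j, (∃ v ∈ (S j).verts, baseCol m v = some 1) ↔ j ≠ b) : b = 0 := by
  by_contra h0
  have hlow : p.2 < m := by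
    obtain ⟨v, hv, hpv, hvp⟩ := exists_verts_fst_le_le_snd strictMono_basePt_fst (hne b)
    have h1 : baseCol m v ≠ some 1 := fun h => (hb b).mp ⟨v, hv, h⟩ rfl
    have ha := ne_baseApex_of_mem_verts hS h0 hv
    rw [ne_eq, Fin.ext_iff, baseApex] at ha
    rw [ne_eq, baseCol_eq_some_one] at h1
    have hv0 : v.val < m := by
      dsimp only [basePt] at hpv ha
      omega
    rw [basePt, baseCol_eq_some_zero.mpr hv0, colLevel] at hvp
    dsimp only at hvp
    omega
  obtain ⟨v, hv, hvp⟩ := exists_verts_snd_le strictMono_basePt_fst (hne a)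
  refine (ha a).mp ⟨v, hv, baseCol_eq_some_zero.mpr ?_⟩ rfl
  have hlevel : 0 ≤ (3 * (m : ℤ) + 1) * colLevel (baseCol m v) :=
    mul_nonneg (by positivity) (colLevel_nonneg _)
  dsimp only [basePt] at hvp
  omega

lemma zero_missing_in_zero {a : ZMod q}
    (ha : ∀ j, (∃ v ∈ (S j).verts, baseCol m v = some 0) ↔ j ≠ a)
    (h₁ : ∀ v ∈ (S 0).verts, baseCol m v ≠ some 1)
    (h₂ : ∀ v ∈ (S 0).verts, baseCol m v ≠ some 2) : a = 0 := by
  by_contra h0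
  have hhigh : 2 * (3 * (m : ℤ) + 1) ≤ p.2 := by
    obtain ⟨v, hv, hvp⟩ := exists_verts_snd_le strictMono_basePt_fst (hne a)
    have hlevel : 2 ≤ colLevel (baseCol m v) :=
      two_le_colLevel (fun h => (ha a).mp ⟨v, hv, h⟩ rfl) fun h => h0 (hS.apex a v hv h)
    have hstrip := (basePt_snd_mem_strip v).1
    nlinarith
  obtain ⟨v, hv, -, hpv⟩ := exists_verts_fst_le_le_snd strictMono_basePt_fst (hne 0)
  have hlevel := colLevel_le_one (h₁ v hv) (h₂ v hv)
  have hstrip := (basePt_snd_mem_strip v).2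
  nlinarith

/-- Each color is missing in exactly one part, which by comparing abscissas and heights is
part `0`. -/
lemma exists_color_iff_ne_zero [NeZero q] (hm : m + 1 = q) (c : Fin 3) (j : ZMod q) :
    (∃ v ∈ (S j).verts, baseCol m v = some c) ↔ j ≠ 0 := by
  have hmiss (c : Fin 3) : ∃ i, ∀ j, (∃ v ∈ (S j).verts, baseCol m v = some c) ↔ j ≠ i :=
    hS.exists_part_missing_color (by
      have hcard := card_baseClass m c
      rw [baseClass] at hcard
      rw [hcard, hm])
  obtain ⟨a, ha⟩ := hmiss 0
  obtain ⟨b, hb⟩ := hmiss 1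
  obtain ⟨d, hd⟩ := hmiss 2
  obtain rfl := two_missing_in_zero hS hne hd
  have hp : p.1 ≤ 2 * m := by
    obtain ⟨v, hv, hpv⟩ := exists_verts_le_fst strictMono_basePt_fst (hne 0)
    have h2 : baseCol m v ≠ some 2 := fun h => (hd 0).mp ⟨v, hv, h⟩ rfl
    rw [ne_eq, baseCol_eq_some_two] at h2
    dsimp only [basePt] at hpv
    omega
  obtain rfl := one_missing_in_zero hS hne hp ha hb
  obtain rfl := zero_missing_in_zero hS hne ha (fun v hv h => (hb 0).mp ⟨v, hv, h⟩ rfl)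
    fun v hv h => (hd 0).mp ⟨v, hv, h⟩ rfl
  fin_cases c
  exacts [ha j, hb j, hd j]

lemma isMainTerm_of_isColorful [NeZero q] (hm : m + 1 = q) :
    p = basePt m (baseApex m) ∧ ∀ i, IsMainTerm i (S i) := by
  have hcolor := exists_color_iff_ne_zero hS hne hm
  have hS0 : S 0 = Sum.inl (baseApex m) :=
    GridDrawing.eq_vertex_of_coef_ne_zero (hne 0) fun v hv => baseCol_eq_none.mp <|
      Option.eq_none_iff_forall_ne_some.mpr fun c h => (hcolor c 0).mp ⟨v, hv, h⟩ rfl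
  refine ⟨GridDrawing.eq_pt_of_coef_vertex_ne_zero (hS0 ▸ hne 0), fun i => ?_⟩
  unfold IsMainTerm
  split_ifs with hi
  · rw [hi, hS0]
  obtain ⟨u, hu, hu0⟩ := (hcolor 0 i).mpr hi
  obtain ⟨v, hv, hv1⟩ := (hcolor 1 i).mpr hi
  obtain ⟨w, hw, hw2⟩ := (hcolor 2 i).mpr hi
  have hu' := baseCol_eq_some_zero.mp hu0
  have hv' := baseCol_eq_some_one.mp hv1
  have hw' := baseCol_eq_some_two.mp hw2
  exact ⟨u, v, w, GridDrawing.eq_triangle_of_coef_ne_zero (hne i) hu hv hw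
    (Fin.lt_def.mpr (by omega)) (Fin.lt_def.mpr (by omega)), hu0, hv1, hw2⟩

end Colorful

end MainTerm

section BaseDegree

variable {m : ℕ} {R : ℤ} {k : Type*} [CommRing k] {q : ℕ}

local notation "ε" => ExteriorAlgebra.ι k

open GenIdx

lemma list_prod_map_smul {A I : Type*} [Ring A] [Algebra k A] (r : k) (l : List I) (g : I → A) :
    (l.map fun i => r • g i).prod = r ^ l.length • (l.map g).prod := by
  induction l with
  | nil => simp
  | cons i l ih =>
    simp only [List.map_cons, List.prod_cons, ih, smul_mul_smul_comm, List.length_cons, pow_succ']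

lemma coef_baseDrawing_triangle {hR : 12 * (m : ℤ) + 4 ≤ R} {u v w : Fin (3 * m + 1)}
    (hu : baseCol m u = some 0) (hv : baseCol m v = some 1) (hw : baseCol m w = some 2) :
    (baseDrawing m hR).coef (basePt m (baseApex m)) (Sum.inr (Sum.inr (u, v, w))) = -1 := by
  have hapex : baseCol m (baseApex m) = none := baseCol_eq_none.mpr rfl
  have hu' := baseCol_eq_some_zero.mp hu
  have hv' := baseCol_eq_some_one.mp hv
  have hw' := baseCol_eq_some_two.mp hw
  have hval : (baseApex m).val = 2 * m := rfl
  rw [GridDrawing.coef, if_pos ⟨Fin.lt_def.mpr (by omega), Fin.lt_def.mpr (by omega)⟩, baseDrawing,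
    triWind_lDrawing]
  simp only [basePt, hapex, hu, hv, colLevel]
  rw [if_pos (by omega), if_neg (by omega), if_neg (by omega), if_pos (by omega)]
  rfl

open Classical in
lemma sum_isMainTerm_zero {hR : 12 * (m : ℤ) + 4 ≤ R} (t : Fin (3 * m + 1) → k) :
    ∑ T : GridTerm (Fin (3 * m + 1)), (if IsMainTerm (0 : ZMod q) T then
      (baseDrawing m hR).coef (basePt m (baseApex m)) T • T.mono (baseCol m) t (0 : ZMod q)
        else 0) = t (baseApex m) • (ε (gen k dx) * (ε (gen k dy) * ε (gen k apex))) := by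
  have hapex : baseCol m (baseApex m) = none := baseCol_eq_none.mpr rfl
  rw [Finset.sum_eq_single (Sum.inl (baseApex m))]
  · simp [IsMainTerm, GridDrawing.coef, baseDrawing, lDrawing, GridTerm.mono, GridTerm.tokens,
      Token.vec, colorVec, hapex]
  · intro T _ hT
    simp [IsMainTerm, hT]
  · simp

open Classical in
lemma sum_isMainTerm_of_ne_zero {hR : 12 * (m : ℤ) + 4 ≤ R} (t : Fin (3 * m + 1) → k)
    {i : ZMod q} (hi : i ≠ 0) :
    ∑ T : GridTerm (Fin (3 * m + 1)), (if IsMainTerm i T then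
      (baseDrawing m hR).coef (basePt m (baseApex m)) T • T.mono (baseCol m) t i else 0) =
      (-((∑ v ∈ baseClass m 0, t v) * (∑ v ∈ baseClass m 1, t v) * ∑ v ∈ baseClass m 2, t v)) •
        partProd k i := by
  have hvertex (v) : ¬ IsMainTerm i (Sum.inl v : GridTerm (Fin (3 * m + 1))) := by
    simp [IsMainTerm, hi]
  have hedge (b u v) :
      ¬ IsMainTerm i (Sum.inr (Sum.inl (b, u, v)) : GridTerm (Fin (3 * m + 1))) := by
    simp [IsMainTerm, hi]
  have htriangle (u v w) :
      (if IsMainTerm i (Sum.inr (Sum.inr (u, v, w)) : GridTerm (Fin (3 * m + 1))) then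
        (baseDrawing m hR).coef (basePt m (baseApex m)) (Sum.inr (Sum.inr (u, v, w))) •
          GridTerm.mono (baseCol m) t i (Sum.inr (Sum.inr (u, v, w))) else 0) =
      (-(((if baseCol m u = some 0 then t u else 0) * (if baseCol m v = some 1 then t v else 0)) *
        (if baseCol m w = some 2 then t w else 0))) • partProd k i := by
    by_cases h : baseCol m u = some 0 ∧ baseCol m v = some 1 ∧ baseCol m w = some 2
    · obtain ⟨hu, hv, hw⟩ := h
      rw [if_pos (by simp [IsMainTerm, hi, hu, hv, hw]), coef_baseDrawing_triangle hu hv hw]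
      simp [GridTerm.mono, GridTerm.tokens, Token.vec, colorVec, hu, hv, hw, partProd, partIdx,
        smul_smul, mul_comm, mul_left_comm]
    · rw [if_neg (by simpa [IsMainTerm, hi] using h)]
      split_ifs <;> simp_all
  simp only [Fintype.sum_sum_type, Fintype.sum_prod_type, hvertex, hedge, htriangle, if_false,
    Finset.sum_const_zero, zero_add, ← Finset.sum_smul, Finset.sum_neg_distrib, ← Finset.mul_sum,
    ← Finset.sum_mul, baseClass, Finset.sum_filter]

lemma prod_baseClass (t : Fin (3 * m + 1) → k) :
    t (baseApex m) * ((∏ v ∈ baseClass m 0, t v) * (∏ v ∈ baseClass m 1, t v) *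
      ∏ v ∈ baseClass m 2, t v) = ∏ v, t v := by
  have hapex : t (baseApex m) = ∏ v, if baseCol m v = none then t v else 1 := by
    simp [baseCol_eq_none]
  rw [hapex]
  simp only [baseClass, Finset.prod_filter, ← Finset.prod_mul_distrib]
  refine Finset.prod_congr rfl fun v _ => ?_
  unfold baseCol
  split_ifs <;> simp_all

lemma gridSum_eq_of_forall_ne {A : Type*} [AddCommGroup A] {F : ℤ × ℤ → A} {a : ℤ × ℤ}
    (ha : a ∈ gridBox R) (h : ∀ p, p ≠ a → F p = 0) : gridSum R F = F a := by
  rw [mem_gridBox] at ha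
  refine Finset.sum_eq_single a (fun p _ => h p) fun hmem => absurd ?_ hmem
  rw [Finset.mem_product, Finset.mem_Icc, Finset.mem_Icc]
  exact ⟨⟨ha.1.1, ha.1.2.le⟩, ha.2.1, ha.2.2.le⟩

section Product

variable [NeZero q] (hm : m + 1 = q) {hR : 12 * (m : ℤ) + 4 ≤ R} {t : Fin (3 * m + 1) → k}
  (ht : ∀ v, t v * t v = 0)

include hm ht

lemma isMainTerm_of_prod_ne_zero {p : ℤ × ℤ} {S : ZMod q → GridTerm (Fin (3 * m + 1))}
    (h : ((residues q).map fun i =>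
      (baseDrawing m hR).coef p (S i) • (S i).mono (baseCol m) t i).prod ≠ 0) :
    p = basePt m (baseApex m) ∧ ∀ i, IsMainTerm i (S i) := by
  rw [list_prod_map_zsmul] at h
  refine isMainTerm_of_isColorful (hR := hR)
    (isColorful_of_prod_mono_ne_zero ht ?_ (right_ne_zero_of_smul h))
    (fun i hi => left_ne_zero_of_smul h ?_) hm
  · rw [Fintype.card_fin]
    omega
  · exact List.prod_eq_zero (List.mem_map.mpr ⟨i, mem_residues i, hi⟩)

lemma prod_colorForm_baseDrawing_eq_zero {p : ℤ × ℤ} (hp : p ≠ basePt m (baseApex m)) :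
    ((residues q).map ((baseDrawing m hR).colorForm (baseCol m) t)).prod p = 0 := by
  rw [GridDrawing.prod_colorForm_apply]
  refine map_list_prod_sum_congr (nodup_residues q) _ (fun _ _ => 0) (AddMonoidHom.id _) 0
    fun S => ?_
  rw [AddMonoidHom.id_apply, AddMonoidHom.zero_apply]
  by_contra hne
  exact hp (isMainTerm_of_prod_ne_zero hm ht hne).1

lemma prod_colorForm_baseDrawing_baseApex {l : List (ZMod q)} (hl : residues q = 0 :: l) :
    ((residues q).map ((baseDrawing m hR).colorForm (baseCol m) t)).prod
        (basePt m (baseApex m)) =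
      (t (baseApex m) • (ε (gen k dx) * (ε (gen k dy) * ε (gen k apex)))) *
        (l.map fun i => (-((∑ v ∈ baseClass m 0, t v) * (∑ v ∈ baseClass m 1, t v) *
          ∑ v ∈ baseClass m 2, t v)) • partProd k i).prod := by
  classical
  have hmain : ((residues q).map ((baseDrawing m hR).colorForm (baseCol m) t)).prod
      (basePt m (baseApex m)) = ((residues q).map fun i => ∑ T : GridTerm (Fin (3 * m + 1)),
        if IsMainTerm i T then
          (baseDrawing m hR).coef (basePt m (baseApex m)) T • T.mono (baseCol m) t i
        else 0).prod := by
    rw [GridDrawing.prod_colorForm_apply]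
    refine map_list_prod_sum_congr (nodup_residues q) _ _ (AddMonoidHom.id _) (AddMonoidHom.id _)
      fun S => ?_
    simp only [AddMonoidHom.id_apply]
    by_cases hS : ∀ i, IsMainTerm i (S i)
    · simp only [hS, if_true]
    · obtain ⟨i, hi⟩ := not_forall.mp hS
      rw [List.prod_eq_zero (l := (residues q).map fun i => if IsMainTerm i (S i) then _ else _)
        (List.mem_map.mpr ⟨i, mem_residues i, if_neg hi⟩)]
      by_contra hne
      exact hS (isMainTerm_of_prod_ne_zero hm ht hne).2
  have hl0 (i) (hi : i ∈ l) : i ≠ 0 := by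
    have hnodup := nodup_residues q
    rw [hl, List.nodup_cons] at hnodup
    exact ne_of_mem_of_not_mem hi hnodup.1
  rw [hmain, hl, List.map_cons, List.prod_cons, sum_isMainTerm_zero,
    List.map_congr_left fun i hi => sum_isMainTerm_of_ne_zero t (hl0 i hi)]

/-- The degree is `± (m !) ^ 3`, and `m < q`. -/
lemma degree_baseDrawing_ne_zero (hq : q.Prime) {c : k →+ ZMod q} (hc : c (∏ v, t v) = 1) :
    (baseDrawing m hR).degree q (baseCol m) t c ≠ 0 := by
  have : Fact q.Prime := ⟨hq⟩
  obtain ⟨l, hlen, hl, -⟩ := exists_residues_eq_cons q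
  obtain ⟨s, hs⟩ := exists_colorTop_prod_partProd_eq (k := k) hl
  have hpow (a : Fin 3) : (∑ v ∈ baseClass m a, t v) ^ m =
      (m.factorial : k) * ∏ v ∈ baseClass m a, t v := by
    have := sum_pow_card_of_mul_self_eq_zero ht (baseClass m a)
    rwa [card_baseClass] at this
  have hcoef : t (baseApex m) * (-((∑ v ∈ baseClass m 0, t v) * (∑ v ∈ baseClass m 1, t v) *
      ∑ v ∈ baseClass m 2, t v)) ^ m * ((s : ℤ) : k) =
      ((-1) ^ m * (m.factorial : ℤ) ^ 3 * (s : ℤ) : ℤ) • ∏ v, t v := by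
    rw [neg_pow, mul_pow, mul_pow, hpow, hpow, hpow, zsmul_eq_mul, ← prod_baseClass]
    push_cast
    ring
  rw [GridDrawing.degree, gridSum_eq_of_forall_ne (basePt_mem_gridBox hR _)
    fun p => prod_colorForm_baseDrawing_eq_zero hm ht, prod_colorForm_baseDrawing_baseApex hm ht hl,
    list_prod_map_smul, smul_mul_smul_comm, map_smul, hs, hlen, smul_eq_mul,
    show q - 1 = m by omega, hcoef, map_zsmul, hc, zsmul_one, Int.cast_mul, Int.cast_mul,
    Int.cast_pow, Int.cast_pow, Int.cast_neg, Int.cast_one, Int.cast_natCast]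
  have hfac : (m.factorial : ZMod q) ≠ 0 := by
    rw [Ne, ZMod.natCast_eq_zero_iff, hq.dvd_factorial]
    omega
  have hsign : ((s : ℤ) : ZMod q) ≠ 0 := by
    rcases Int.units_eq_one_or s with rfl | rfl <;> simp
  exact mul_ne_zero (mul_ne_zero (pow_ne_zero _ (neg_ne_zero.mpr one_ne_zero))
    (pow_ne_zero _ hfac)) hsign

end Product

theorem GridDrawing.exists_isColorful_baseCol (hq : q.Prime) (hm : m + 1 = q)
    (hR : 12 * (m : ℤ) + 4 ≤ R) (D : GridDrawing (Fin (3 * m + 1)) (baseLabel (3 * m)) R) :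
    ∃ (p : ℤ × ℤ) (S : ZMod q → GridTerm (Fin (3 * m + 1))),
      IsColorful (baseCol m) (fun i => (S i).verts) ∧ ∀ i, D.coef p (S i) ≠ 0 := by
  have : NeZero q := ⟨hq.ne_zero⟩
  obtain ⟨k, _, t, c, ht, hc⟩ := exists_squareZero_ring (ZMod q) (Fin (3 * m + 1))
  refine D.exists_isColorful ht (by rw [Fintype.card_fin]; omega) (c := c) ?_
  rw [GridDrawing.degree_eq_degree hq D (baseDrawing m hR) (baseCol m) ht c]
  exact degree_baseDrawing_ne_zero hm ht hq hc

end BaseDegree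

/-! ### Crossing numbers of polygonal paths -/

section Crossing

/-- The signed number of crossings of the segment from `a` to `b` with the leftward horizontal ray
from `p`, for the path that goes horizontally and then vertically. -/
def crossing (p a b : ℝ × ℝ) : ℤ :=
  if b.1 ≤ p.1 then (if a.2 ≤ p.2 then 1 else 0) - (if b.2 ≤ p.2 then 1 else 0) else 0

/-- The signed number of crossings of the polygonal path `a 0, …, a K` with the leftward horizontal
ray from `p`. -/
def pathCrossing (K : ℕ) (p : ℝ × ℝ) (a : ℕ → ℝ × ℝ) : ℤ :=
  ∑ j ∈ Finset.range K, crossing p (a j) (a (j + 1))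

lemma crossing_self (p a : ℝ × ℝ) : crossing p a a = 0 := by simp [crossing]

lemma pathCrossing_const (K : ℕ) (p y : ℝ × ℝ) : pathCrossing K p (fun _ => y) = 0 :=
  Finset.sum_eq_zero fun _ _ => crossing_self p y

lemma pathCrossing_congr {K : ℕ} {p : ℝ × ℝ} {a b : ℕ → ℝ × ℝ} (h : ∀ j ≤ K, a j = b j) :
    pathCrossing K p a = pathCrossing K p b :=
  Finset.sum_congr rfl fun j hj => by
    rw [h j (Finset.mem_range.mp hj).le, h (j + 1) (Finset.mem_range.mp hj)]

lemma crossing_add_crossing {p a b c : ℝ × ℝ} {δ : ℝ} (ha : δ < dist a p) (hb : dist a b ≤ δ)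
    (hc : dist a c ≤ δ) : crossing p a b + crossing p b c = crossing p a c := by
  rw [Prod.dist_eq, max_le_iff, Real.dist_eq, Real.dist_eq, abs_le, abs_le] at hb hc
  rw [Prod.dist_eq, lt_max_iff, Real.dist_eq, Real.dist_eq, lt_abs, lt_abs] at ha
  unfold crossing
  grind

lemma pathCrossing_sub_pathCrossing {K : ℕ} {p : ℝ × ℝ} {δ : ℝ} {a b : ℕ → ℝ × ℝ}
    (hfar : ∀ j < K, δ < dist (a j) p) (hstep : ∀ j < K, dist (a j) (a (j + 1)) ≤ δ)
    (hnear : ∀ j < K, dist (a j) (b j) ≤ δ) (hnext : ∀ j < K, dist (a j) (b (j + 1)) ≤ δ) :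
    pathCrossing K p a - pathCrossing K p b =
      crossing p (a 0) (b 0) - crossing p (a K) (b K) := by
  rw [pathCrossing, pathCrossing, ← Finset.sum_sub_distrib,
    ← Finset.sum_range_sub' fun j => crossing p (a j) (b j)]
  refine Finset.sum_congr rfl fun j hj => ?_
  rw [Finset.mem_range] at hj
  linarith [crossing_add_crossing (hfar j hj) (hstep j hj) (hnext j hj),
    crossing_add_crossing (hfar j hj) (hnear j hj) (hnext j hj)]

end Crossing

section GridPlane

variable {n K : ℕ} {R : ℤ}

/-- A grid point with label `v` close to `x` after scaling the plane by `(n + 1) * K`. -/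
def roundPt (K : ℕ) (v : Fin (n + 1)) (x : ℝ × ℝ) : ℤ × ℤ :=
  ((v : ℤ) + ((n : ℤ) + 1) * ⌊K * x.1⌋, (v : ℤ) + ((n : ℤ) + 1) * ⌊K * x.2⌋)

/-- The point of the plane represented by a grid point, for a grid of mesh `1 / ((n + 1) * K)`. -/
def scalePt (n K : ℕ) (p : ℤ × ℤ) : ℝ × ℝ := (p.1 / ((n + 1) * K), p.2 / ((n + 1) * K))

lemma baseLabel_roundPt (v : Fin (n + 1)) (x : ℝ × ℝ) :
    baseLabel n (roundPt K v x).1 = v ∧ baseLabel n (roundPt K v x).2 = v :=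
  ⟨baseLabel_add_mul _ _, baseLabel_add_mul _ _⟩

lemma abs_div_sub_le_of_floor (hK : 0 < K) (v : Fin (n + 1)) (x : ℝ) :
    |(((v : ℤ) + ((n : ℤ) + 1) * ⌊K * x⌋ : ℤ) : ℝ) / ((n + 1) * K) - x| ≤ 1 / K := by
  have hK' : (0 : ℝ) < K := Nat.cast_pos.mpr hK
  have hdiff : (((v : ℤ) + ((n : ℤ) + 1) * ⌊K * x⌋ : ℤ) : ℝ) / ((n + 1) * K) - x =
      (((v : ℕ) : ℝ) / (n + 1) - Int.fract (K * x)) * (1 / K) := by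
    rw [← Int.self_sub_floor]
    push_cast
    field_simp
    ring
  have hv : ((v : ℕ) : ℝ) / (n + 1) ≤ 1 :=
    div_le_one_of_le₀ (by exact_mod_cast v.2.le) (by positivity)
  rw [hdiff, abs_mul, abs_of_pos (one_div_pos.mpr hK')]
  refine mul_le_of_le_one_left (by positivity) (abs_le.mpr ⟨?_, ?_⟩)
  · linarith [Int.fract_lt_one (K * x), show 0 ≤ ((v : ℕ) : ℝ) / (n + 1) by positivity]
  · linarith [Int.fract_nonneg (K * x)]

lemma dist_scalePt_roundPt (hK : 0 < K) (v : Fin (n + 1)) (x : ℝ × ℝ) :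
    dist (scalePt n K (roundPt K v x)) x ≤ 1 / K :=
  max_le (abs_div_sub_le_of_floor hK v _) (abs_div_sub_le_of_floor hK v _)

lemma intCast_div_le_intCast_div_iff (hK : 0 < K) {x y : ℤ} :
    (x : ℝ) / ((n + 1) * K) ≤ (y : ℝ) / ((n + 1) * K) ↔ x ≤ y := by
  rw [div_le_div_iff_of_pos_right (by positivity), Int.cast_le]

lemma rowPrimitive_lpathα (hK : 0 < K) (p a : ℤ × ℤ) {b : ℤ × ℤ} (hb : b ∈ gridBox R) :
    rowPrimitive R (lpathα a b) p = crossing (scalePt n K p) (scalePt n K a) (scalePt n K b) := by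
  rw [rowPrimitive_apply]
  refine (sum_Ico_ite_eq (mem_gridBox.mp hb).1.1
    ((if a.2 ≤ p.2 then 1 else 0) - (if b.2 ≤ p.2 then 1 else 0))).trans ?_
  simp only [crossing, scalePt, intCast_div_le_intCast_div_iff hK, Int.lt_add_one_iff]

lemma dist_scalePt_le_dist_scalePt {p a b : ℤ × ℤ} (h₁ : |p.1 - a.1| ≤ |a.1 - b.1|)
    (h₂ : |p.2 - a.2| ≤ |a.2 - b.2|) :
    dist (scalePt n K p) (scalePt n K a) ≤ dist (scalePt n K a) (scalePt n K b) := by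
  have hscale (x y z : ℤ) (h : |x - y| ≤ |y - z|) :
      |(x : ℝ) / ((n + 1) * K) - y / ((n + 1) * K)| ≤
        |(y : ℝ) / ((n + 1) * K) - z / ((n + 1) * K)| := by
    rw [← sub_div, ← sub_div, abs_div, abs_div]
    exact div_le_div_of_nonneg_right (mod_cast h) (abs_nonneg _)
  exact max_le_max (hscale _ _ _ h₁) (hscale _ _ _ h₂)

lemma dist_scalePt_le_of_lpathα_ne_zero {p a b : ℤ × ℤ} (h : lpathα a b p ≠ 0) :
    dist (scalePt n K p) (scalePt n K a) ≤ dist (scalePt n K a) (scalePt n K b) := by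
  have hp := fst_eq_of_lpathα_ne_zero h
  refine dist_scalePt_le_dist_scalePt (by rw [hp, abs_sub_comm]) ?_
  simp only [lpathα, if_pos hp] at h
  grind

lemma dist_scalePt_le_of_lpathβ_ne_zero {p a b : ℤ × ℤ} (h : lpathβ a b p ≠ 0) :
    dist (scalePt n K p) (scalePt n K a) ≤ dist (scalePt n K a) (scalePt n K b) := by
  have hp := snd_eq_of_lpathβ_ne_zero h
  refine dist_scalePt_le_dist_scalePt ?_ (by simp [hp])
  simp only [lpathβ, if_pos hp] at h
  grind

lemma exists_forall_mem_gridBox {I : Type*} [Finite I] (a : I → ℤ × ℤ) (R₀ : ℤ) :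
    ∃ R, R₀ ≤ R ∧ ∀ i, a i ∈ gridBox R := by
  obtain ⟨M, hM⟩ := (Set.finite_range fun i => max |(a i).1| |(a i).2|).bddAbove
  refine ⟨max R₀ (M + 1), le_max_left _ _, fun i => mem_gridBox.mpr ?_⟩
  have hi := max_le_iff.mp (hM ⟨i, rfl⟩)
  rw [abs_le, abs_le] at hi
  grind

end GridPlane

/-! ### Sampled drawings -/

lemma div_mem_unitInterval {K j : ℕ} (hj : j ≤ K) : (j : ℝ) / K ∈ Set.Icc (0 : ℝ) 1 :=
  ⟨by positivity, div_le_one_of_le₀ (by exact_mod_cast hj) (Nat.cast_nonneg _)⟩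

lemma dist_div_succ_div (K j : ℕ) : dist ((j : ℝ) / K) ((j + 1 : ℕ) / K) = 1 / K := by
  rw [Real.dist_eq, ← sub_div, abs_div]
  simp

/-- A continuous drawing of the complete graph on `V` in the plane; `edge u v` is a path from
`pos u` to `pos v` whose values outside the unit interval play no role. -/
structure PlaneDrawing (V : Type*) where
  pos : V → ℝ × ℝ
  edge : V → V → ℝ → ℝ × ℝ
  continuousOn_edge : ∀ u v, ContinuousOn (edge u v) (Set.Icc 0 1)
  edge_zero : ∀ u v, edge u v 0 = pos u
  edge_one : ∀ u v, edge u v 1 = pos v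

namespace PlaneDrawing

variable {n K : ℕ} {R : ℤ} (G : PlaneDrawing (Fin (n + 1)))

/-- The grid points sampling the edges of a drawing. -/
def samplePt (K : ℕ) (u v : Fin (n + 1)) (j : ℕ) : ℤ × ℤ :=
  roundPt K (if j < K then u else v) (G.edge u v (j / K))

/-- The vertices of the polygonal path through the sample points of an edge. -/
def samplePath (K : ℕ) (u v : Fin (n + 1)) (j : ℕ) : ℝ × ℝ := scalePt n K (G.samplePt K u v j)

/-- The crossing number of the sampled edge with the leftward horizontal ray from `p`. -/
def edgeCrossing (K : ℕ) (p : ℝ × ℝ) (u v : Fin (n + 1)) : ℤ :=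
  pathCrossing K p (G.samplePath K u v)

/-- The crossing number of the boundary of the sampled triangle `u v w`. -/
def triCrossing (K : ℕ) (p : ℝ × ℝ) (u v w : Fin (n + 1)) : ℤ :=
  G.edgeCrossing K p v w - G.edgeCrossing K p u w + G.edgeCrossing K p u v

lemma baseLabel_samplePt (u v : Fin (n + 1)) (j : ℕ) :
    (baseLabel n (G.samplePt K u v j).1 = u ∨ baseLabel n (G.samplePt K u v j).1 = v) ∧
    (baseLabel n (G.samplePt K u v j).2 = u ∨ baseLabel n (G.samplePt K u v j).2 = v) := by
  simp only [samplePt, (baseLabel_roundPt _ _).1, (baseLabel_roundPt _ _).2]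
  split_ifs <;> simp

lemma samplePt_zero (hK : 0 < K) (u v : Fin (n + 1)) :
    G.samplePt K u v 0 = roundPt K u (G.pos u) := by
  simp [samplePt, hK, G.edge_zero]

lemma samplePt_self (hK : 0 < K) (u v : Fin (n + 1)) :
    G.samplePt K u v K = roundPt K v (G.pos v) := by
  have hK' : (K : ℝ) ≠ 0 := Nat.cast_ne_zero.mpr hK.ne'
  simp [samplePt, div_self hK', G.edge_one]

lemma dist_samplePath_edge (hK : 0 < K) (u v : Fin (n + 1)) (j : ℕ) :
    dist (G.samplePath K u v j) (G.edge u v (j / K)) ≤ 1 / K :=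
  dist_scalePt_roundPt hK _ _

/-- The grid drawing obtained by sampling the edges at `K + 1` points. -/
def sample (hK : 0 < K) (hbox : ∀ u v, ∀ j ≤ K, G.samplePt K u v j ∈ gridBox R) :
    GridDrawing (Fin (n + 1)) (baseLabel n) R where
  pt v := roundPt K v (G.pos v)
  α u v := ∑ j ∈ Finset.range K, lpathα (G.samplePt K u v j) (G.samplePt K u v (j + 1))
  β u v := ∑ j ∈ Finset.range K, lpathβ (G.samplePt K u v j) (G.samplePt K u v (j + 1))
  closed u v := by
    simp only [map_sum, ← Finset.sum_sub_distrib, gridDiff_lpathβ_sub_gridDiff_lpathα]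
    rw [Finset.sum_range_sub (fun j => Pi.single (G.samplePt K u v j) 1), G.samplePt_zero hK,
      G.samplePt_self hK]
  label_pt v := baseLabel_roundPt _ _
  label_α u v p h := by
    rw [Finset.sum_apply] at h
    obtain ⟨j, -, hj⟩ := Finset.exists_ne_zero_of_sum_ne_zero h
    rw [fst_eq_of_lpathα_ne_zero hj]
    exact (G.baseLabel_samplePt u v _).1
  label_dα u v p h := by
    rw [map_sum, Finset.sum_apply] at h
    obtain ⟨j, -, hj⟩ := Finset.exists_ne_zero_of_sum_ne_zero h
    rcases snd_eq_or_eq_of_gridDiff_lpathα_ne_zero hj with h | h <;> rw [h] <;>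
      exact (G.baseLabel_samplePt u v _).2
  label_β u v p h := by
    rw [Finset.sum_apply] at h
    obtain ⟨j, -, hj⟩ := Finset.exists_ne_zero_of_sum_ne_zero h
    rw [snd_eq_of_lpathβ_ne_zero hj]
    exact (G.baseLabel_samplePt u v _).2
  label_dβ u v p h := by
    rw [map_sum, Finset.sum_apply] at h
    obtain ⟨j, -, hj⟩ := Finset.exists_ne_zero_of_sum_ne_zero h
    rcases fst_eq_or_eq_of_gridDiff_lpathβ_ne_zero hj with h | h <;> rw [h] <;>
      exact (G.baseLabel_samplePt u v _).1
  pt_mem v := G.samplePt_zero hK v v ▸ hbox v v 0 K.zero_le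
  α_mem u v := sum_mem fun j hj =>
    lpathα_mem_boxSupported (hbox u v j (Finset.mem_range.mp hj).le)
      (hbox u v (j + 1) (Finset.mem_range.mp hj))
  β_mem u v := sum_mem fun j hj =>
    lpathβ_mem_boxSupported (hbox u v j (Finset.mem_range.mp hj).le)
      (hbox u v (j + 1) (Finset.mem_range.mp hj))

variable {G} {hbox : ∀ u v, ∀ j ≤ K, G.samplePt K u v j ∈ gridBox R} {u v w : Fin (n + 1)}
  {p : ℤ × ℤ}

lemma triWind_sample (hK : 0 < K) (u v w : Fin (n + 1)) (p : ℤ × ℤ) :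
    (G.sample hK hbox).triWind u v w p = -G.triCrossing K (scalePt n K p) u v w := by
  have hrow (u v) : rowPrimitive R ((G.sample hK hbox).α u v) p =
      G.edgeCrossing K (scalePt n K p) u v := by
    simp only [sample, map_sum, Finset.sum_apply]
    exact Finset.sum_congr rfl fun j hj =>
      rowPrimitive_lpathα hK _ _ (hbox u v (j + 1) (Finset.mem_range.mp hj))
  have htri : (G.sample hK hbox).triWind u v w = -(rowPrimitive R ((G.sample hK hbox).α v w) -
      rowPrimitive R ((G.sample hK hbox).α u w) + rowPrimitive R ((G.sample hK hbox).α u v)) := by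
    rw [← map_sub, ← map_add, ← map_neg]
    rfl
  rw [htri, triCrossing, ← hrow, ← hrow, ← hrow]
  rfl

lemma dist_pos_le_of_coef_sample_vertex_ne_zero (hK : 0 < K)
    (h : (G.sample hK hbox).coef p (Sum.inl v) ≠ 0) : dist (scalePt n K p) (G.pos v) ≤ 1 / K :=
  (GridDrawing.eq_pt_of_coef_vertex_ne_zero h) ▸ dist_scalePt_roundPt hK v _

lemma exists_dist_le_of_coef_sample_edge_ne_zero (hK : 0 < K) {b : Bool}
    (h : (G.sample hK hbox).coef p (Sum.inr (Sum.inl (b, u, v))) ≠ 0) :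
    ∃ j < K, dist (scalePt n K p) (G.samplePath K u v j) ≤
      dist (G.samplePath K u v j) (G.samplePath K u v (j + 1)) := by
  cases b <;> simp only [GridDrawing.coef, if_pos (GridDrawing.lt_of_coef_edge_ne_zero h),
    Bool.false_eq_true, if_false, if_true, sample, Finset.sum_apply] at h <;>
    obtain ⟨j, hj, hne⟩ := Finset.exists_ne_zero_of_sum_ne_zero h
  · exact ⟨j, Finset.mem_range.mp hj, dist_scalePt_le_of_lpathα_ne_zero hne⟩
  · exact ⟨j, Finset.mem_range.mp hj, dist_scalePt_le_of_lpathβ_ne_zero hne⟩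

lemma triCrossing_ne_zero_of_coef_sample_triangle_ne_zero (hK : 0 < K)
    (h : (G.sample hK hbox).coef p (Sum.inr (Sum.inr (u, v, w))) ≠ 0) :
    G.triCrossing K (scalePt n K p) u v w ≠ 0 := by
  rwa [GridDrawing.coef, if_pos (GridDrawing.lt_of_coef_triangle_ne_zero h), triWind_sample,
    neg_ne_zero] at h

end PlaneDrawing

/-! ### Contractions of paths -/

/-- The crossing number of the path traced by the point `t` during a homotopy `h`, corrected so as
to start at `x`. -/
def sideCrossing (K : ℕ) (p : ℝ × ℝ) (h : ℝ × ℝ → ℝ × ℝ) (t : ℝ) (x : ℝ × ℝ) : ℤ :=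
  pathCrossing K p (fun l => h (l / K, t)) - crossing p (h (0, t)) x

/-- `h` is a map from the unit square that stays at distance more than `2 δ` from `p` and moves by
at most `δ` inside every square of the grid of mesh `1 / K`; the spare `δ` allows for sampling. -/
structure IsFineHomotopy (K : ℕ) (p : ℝ × ℝ) (δ : ℝ) (h : ℝ × ℝ → ℝ × ℝ) : Prop where
  far : ∀ x ∈ Set.Icc (0 : ℝ) 1 ×ˢ Set.Icc (0 : ℝ) 1, 2 * δ < dist (h x) p
  near : ∀ x ∈ Set.Icc (0 : ℝ) 1 ×ˢ Set.Icc (0 : ℝ) 1, ∀ y ∈ Set.Icc (0 : ℝ) 1 ×ˢ Set.Icc (0 : ℝ) 1,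
    dist x y ≤ 1 / K → dist (h x) (h y) ≤ δ

lemma sideCrossing_congr {K : ℕ} {p x : ℝ × ℝ} {h h' : ℝ × ℝ → ℝ × ℝ} {t t' : ℝ}
    (hh : ∀ s ∈ Set.Icc (0 : ℝ) 1, h (s, t) = h' (s, t')) :
    sideCrossing K p h t x = sideCrossing K p h' t' x := by
  rw [sideCrossing, sideCrossing, hh 0 (Set.left_mem_Icc.mpr zero_le_one),
    pathCrossing_congr fun l hl => hh _ (div_mem_unitInterval hl)]

namespace IsFineHomotopy

variable {K : ℕ} {p : ℝ × ℝ} {δ : ℝ} {h : ℝ × ℝ → ℝ × ℝ}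

lemma nonneg (hh : IsFineHomotopy K p δ h) : 0 ≤ δ := by
  have h0 : ((0 : ℝ), (0 : ℝ)) ∈ Set.Icc (0 : ℝ) 1 ×ˢ Set.Icc (0 : ℝ) 1 := by simp
  simpa using hh.near _ h0 _ h0 (by rw [dist_self]; positivity)

lemma pathCrossing_level_sub (hh : IsFineHomotopy K p δ h) (hK : 0 < K) {l : ℕ} (hl : l < K) :
    pathCrossing K p (fun j => h (l / K, j / K)) -
        pathCrossing K p (fun j => h ((l + 1 : ℕ) / K, j / K)) =
      crossing p (h (l / K, 0)) (h ((l + 1 : ℕ) / K, 0)) -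
        crossing p (h (l / K, 1)) (h ((l + 1 : ℕ) / K, 1)) := by
  have hK' : (K : ℝ) ≠ 0 := Nat.cast_ne_zero.mpr hK.ne'
  have hI := div_mem_unitInterval hl.le
  have hI' := div_mem_unitInterval (Nat.succ_le_of_lt hl)
  have hself (x : ℝ) : dist x x ≤ 1 / K := by rw [dist_self]; positivity
  have hstep (j : ℕ) : dist ((j : ℝ) / K) ((j + 1 : ℕ) / K) ≤ 1 / K := (dist_div_succ_div K j).le
  have := pathCrossing_sub_pathCrossing (K := K) (p := p) (a := fun j => h (l / K, j / K))
    (b := fun j => h ((l + 1 : ℕ) / K, j / K))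
    (fun j hj => (le_mul_of_one_le_left hh.nonneg one_le_two).trans_lt
      (hh.far _ ⟨hI, div_mem_unitInterval hj.le⟩))
    (fun j hj => hh.near _ ⟨hI, div_mem_unitInterval hj.le⟩ _
      ⟨hI, div_mem_unitInterval (Nat.succ_le_of_lt hj)⟩ (max_le (hself _) (hstep j)))
    (fun j hj => hh.near _ ⟨hI, div_mem_unitInterval hj.le⟩ _ ⟨hI', div_mem_unitInterval hj.le⟩
      (max_le (hstep l) (hself _)))
    (fun j hj => hh.near _ ⟨hI, div_mem_unitInterval hj.le⟩ _
      ⟨hI', div_mem_unitInterval (Nat.succ_le_of_lt hj)⟩ (max_le (hstep l) (hstep j)))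
  simpa [div_self hK'] using this

lemma pathCrossing_bot (hh : IsFineHomotopy K p δ h) (hK : 0 < K) {y : ℝ × ℝ}
    (htop : ∀ t ∈ Set.Icc (0 : ℝ) 1, h (1, t) = y) :
    pathCrossing K p (fun j => h (0, j / K)) =
      pathCrossing K p (fun l => h (l / K, 0)) - pathCrossing K p (fun l => h (l / K, 1)) := by
  have hK' : (K : ℝ) ≠ 0 := Nat.cast_ne_zero.mpr hK.ne'
  have hsum := Finset.sum_range_sub' (fun l : ℕ => pathCrossing K p fun j => h (l / K, j / K)) K
  rw [Finset.sum_congr rfl fun l hl => hh.pathCrossing_level_sub hK (Finset.mem_range.mp hl),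
    Finset.sum_sub_distrib, div_self hK',
    pathCrossing_congr fun j hj => htop _ (div_mem_unitInterval hj), pathCrossing_const,
    sub_zero, Nat.cast_zero, zero_div] at hsum
  exact hsum.symm

lemma pathCrossing_eq_sideCrossing_sub (hh : IsFineHomotopy K p δ h) (hK : 0 < K) {y : ℝ × ℝ}
    (htop : ∀ t ∈ Set.Icc (0 : ℝ) 1, h (1, t) = y) {Q : ℕ → ℝ × ℝ}
    (hQ : ∀ j ≤ K, dist (h (0, j / K)) (Q j) ≤ δ) :
    pathCrossing K p Q = sideCrossing K p h 0 (Q 0) - sideCrossing K p h 1 (Q K) := by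
  have hK' : (K : ℝ) ≠ 0 := Nat.cast_ne_zero.mpr hK.ne'
  have h0 : (0 : ℝ) ∈ Set.Icc (0 : ℝ) 1 := Set.left_mem_Icc.mpr zero_le_one
  have hδ := hh.nonneg
  have hstep (j : ℕ) (hj : j < K) : dist (h (0, j / K)) (h (0, (j + 1 : ℕ) / K)) ≤ δ :=
    hh.near _ ⟨h0, div_mem_unitInterval hj.le⟩ _
      ⟨h0, div_mem_unitInterval (Nat.succ_le_of_lt hj)⟩
      (max_le (by rw [dist_self]; positivity) (dist_div_succ_div K j).le)
  have hbot := pathCrossing_sub_pathCrossing (K := K) (δ := 2 * δ) (b := Q)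
    (fun j hj => hh.far _ ⟨h0, div_mem_unitInterval hj.le⟩)
    (fun j hj => (hstep j hj).trans (by linarith)) (fun j hj => (hQ j hj.le).trans (by linarith))
    (fun j hj => (dist_triangle _ _ _).trans
      ((add_le_add (hstep j hj) (hQ _ (Nat.succ_le_of_lt hj))).trans (two_mul δ).ge))
  rw [hh.pathCrossing_bot hK htop] at hbot
  simp only [Nat.cast_zero, zero_div, div_self hK'] at hbot
  unfold sideCrossing
  linarith

end IsFineHomotopy

/-- `h` contracts the path `γ` to the point `y` in the complement of `p`. -/
structure IsPathContraction (γ : ℝ → ℝ × ℝ) (p y : ℝ × ℝ) (h : ℝ × ℝ → ℝ × ℝ) : Prop where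
  continuousOn : ContinuousOn h (Set.Icc 0 1 ×ˢ Set.Icc 0 1)
  ne : ∀ x ∈ Set.Icc (0 : ℝ) 1 ×ˢ Set.Icc (0 : ℝ) 1, h x ≠ p
  bot : ∀ t ∈ Set.Icc (0 : ℝ) 1, h (0, t) = γ t
  top : ∀ t ∈ Set.Icc (0 : ℝ) 1, h (1, t) = y

lemma eventually_one_div_lt {ε : ℝ} (hε : 0 < ε) : ∀ᶠ K : ℕ in Filter.atTop, 1 / (K : ℝ) < ε :=
  (tendsto_one_div_atTop_nhds_zero_nat (𝕜 := ℝ)).eventually (gt_mem_nhds hε)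

lemma exists_forall_le_dist_of_isCompact {X Y : Type*} [TopologicalSpace X] [MetricSpace Y]
    {s : Set X} (hs : IsCompact s) {h : X → Y} (hc : ContinuousOn h s) {p : Y}
    (hp : ∀ x ∈ s, h x ≠ p) : ∃ ε > 0, ∀ x ∈ s, ε ≤ dist (h x) p := by
  obtain ⟨ε, hε, hball⟩ := Metric.isOpen_iff.mp (hs.image_of_continuousOn hc).isClosed.isOpen_compl
    p fun ⟨x, hx, hxp⟩ => hp x hx hxp
  exact ⟨ε, hε, fun x hx => not_lt.mp fun hlt => hball (Metric.mem_ball.mpr hlt) ⟨x, hx, rfl⟩⟩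

lemma eventually_isFineHomotopy {h : ℝ × ℝ → ℝ × ℝ} {p₀ : ℝ × ℝ}
    (hc : ContinuousOn h (Set.Icc 0 1 ×ˢ Set.Icc 0 1))
    (hne : ∀ x ∈ Set.Icc (0 : ℝ) 1 ×ˢ Set.Icc (0 : ℝ) 1, h x ≠ p₀) :
    ∃ ε > 0, ∀ᶠ K : ℕ in Filter.atTop, ∀ p, dist p p₀ < ε → IsFineHomotopy K p ε h := by
  have hcpt : IsCompact (Set.Icc (0 : ℝ) 1 ×ˢ Set.Icc (0 : ℝ) 1) := isCompact_Icc.prod isCompact_Icc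
  obtain ⟨D, hD, hfar⟩ := exists_forall_le_dist_of_isCompact hcpt hc hne
  obtain ⟨η, hη, hnear⟩ := Metric.uniformContinuousOn_iff.mp
    (hcpt.uniformContinuousOn_of_continuous hc) (D / 4) (by positivity)
  refine ⟨D / 4, by positivity, (eventually_one_div_lt hη).mono fun K hK p hp =>
    ⟨fun x hx => ?_, fun x hx y hy hxy => (hnear x hx y hy (hxy.trans_lt hK)).le⟩⟩
  linarith [hfar x hx, dist_triangle (h x) p p₀]

lemma IsPathContraction.eventually_pathCrossing {γ : ℝ → ℝ × ℝ} {p₀ y : ℝ × ℝ}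
    {h : ℝ × ℝ → ℝ × ℝ} (hγ : IsPathContraction γ p₀ y h) :
    ∃ ε > 0, ∀ᶠ K : ℕ in Filter.atTop, ∀ p, dist p p₀ < ε → ∀ Q : ℕ → ℝ × ℝ,
      (∀ j ≤ K, dist (Q j) (γ (j / K)) ≤ 1 / K) →
      pathCrossing K p Q = sideCrossing K p h 0 (Q 0) - sideCrossing K p h 1 (Q K) := by
  obtain ⟨ε, hε, hfine⟩ := eventually_isFineHomotopy hγ.continuousOn hγ.ne
  refine ⟨ε, hε, ?_⟩
  filter_upwards [hfine, eventually_one_div_lt hε, Filter.eventually_gt_atTop 0]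
    with K hK hKε hK0 p hp Q hQ
  refine (hK p hp).pathCrossing_eq_sideCrossing_sub hK0 hγ.top fun j hj => ?_
  rw [hγ.bot _ (div_mem_unitInterval hj), dist_comm]
  exact (hQ j hj).trans hKε.le

lemma IsPathContraction.congr {γ γ' : ℝ → ℝ × ℝ} {p y : ℝ × ℝ} {h : ℝ × ℝ → ℝ × ℝ}
    (hγ : IsPathContraction γ p y h) (hγγ' : ∀ t ∈ Set.Icc (0 : ℝ) 1, γ t = γ' t) :
    IsPathContraction γ' p y h :=
  { hγ with bot := fun t ht => (hγ.bot t ht).trans (hγγ' t ht) }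

/-! ### The limit of fine samples -/

namespace PlaneDrawing

variable {n : ℕ} (G : PlaneDrawing (Fin (n + 1)))

/-- The boundary of the triangle `u v w` of a drawing is contractible in the complement of `p`: its
three sides admit contractions that agree at the corners. -/
def IsTriContractible (p : ℝ × ℝ) (u v w : Fin (n + 1)) : Prop :=
  ∃ (y : ℝ × ℝ) (huv hvw huw : ℝ × ℝ → ℝ × ℝ), IsPathContraction (G.edge u v) p y huv ∧
    IsPathContraction (G.edge v w) p y hvw ∧ IsPathContraction (G.edge u w) p y huw ∧
    ∀ s ∈ Set.Icc (0 : ℝ) 1, huv (s, 0) = huw (s, 0) ∧ huv (s, 1) = hvw (s, 0) ∧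
      hvw (s, 1) = huw (s, 1)

/-- The point `p` is the vertex, lies on the edge, or has the boundary of the triangle wind around
it, according to the kind of the term. -/
def WindsAround (p : ℝ × ℝ) : GridTerm (Fin (n + 1)) → Prop
  | Sum.inl v => p = G.pos v
  | Sum.inr (Sum.inl (_, u, v)) => u < v ∧ p ∈ G.edge u v '' Set.Icc 0 1
  | Sum.inr (Sum.inr (u, v, w)) => (u < v ∧ v < w) ∧ ¬ G.IsTriContractible p u v w

/-- The version of `WindsAround` for a drawing sampled at `K + 1` points of every edge. -/
def WindsAroundSampled (K : ℕ) (p : ℝ × ℝ) : GridTerm (Fin (n + 1)) → Prop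
  | Sum.inl v => dist p (G.pos v) ≤ 1 / K
  | Sum.inr (Sum.inl (_, u, v)) => u < v ∧ ∃ j < K, dist p (G.samplePath K u v j) ≤
      dist (G.samplePath K u v j) (G.samplePath K u v (j + 1))
  | Sum.inr (Sum.inr (u, v, w)) => (u < v ∧ v < w) ∧ G.triCrossing K p u v w ≠ 0

/-- The points of a vertex or an edge of a drawing; triangles are assigned the empty set. -/
def termImage : GridTerm (Fin (n + 1)) → Set (ℝ × ℝ)
  | Sum.inl v => {G.pos v}
  | Sum.inr (Sum.inl (_, u, v)) => G.edge u v '' Set.Icc 0 1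
  | Sum.inr (Sum.inr _) => ∅

lemma windsAroundSampled_of_coef_sample_ne_zero {G : PlaneDrawing (Fin (n + 1))} {K : ℕ} {R : ℤ}
    (hK : 0 < K) {hbox : ∀ u v, ∀ j ≤ K, G.samplePt K u v j ∈ gridBox R} {p : ℤ × ℤ}
    {T : GridTerm (Fin (n + 1))} (h : (G.sample hK hbox).coef p T ≠ 0) :
    G.WindsAroundSampled K (scalePt n K p) T := by
  rcases T with v | ⟨b, u, v⟩ | ⟨u, v, w⟩
  · exact dist_pos_le_of_coef_sample_vertex_ne_zero hK h
  · exact ⟨GridDrawing.lt_of_coef_edge_ne_zero h, exists_dist_le_of_coef_sample_edge_ne_zero hK h⟩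
  · exact ⟨GridDrawing.lt_of_coef_triangle_ne_zero h,
      triCrossing_ne_zero_of_coef_sample_triangle_ne_zero hK h⟩

lemma exists_windsAroundSampled {m q K : ℕ} (hq : q.Prime) (hm : m + 1 = q) (hK : 0 < K)
    (G : PlaneDrawing (Fin (3 * m + 1))) :
    ∃ (p : ℝ × ℝ) (S : ZMod q → GridTerm (Fin (3 * m + 1))),
      IsColorful (baseCol m) (fun i => (S i).verts) ∧ ∀ i, G.WindsAroundSampled K p (S i) := by
  obtain ⟨R, hR, hbox⟩ := exists_forall_mem_gridBox
    (fun x : Fin (3 * m + 1) × Fin (3 * m + 1) × Fin (K + 1) => G.samplePt K x.1 x.2.1 x.2.2)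
    (12 * (m : ℤ) + 4)
  obtain ⟨p, S, hS, hcoef⟩ := (G.sample hK (R := R)
    fun u v j hj => hbox (u, v, ⟨j, Nat.lt_succ_of_le hj⟩)).exists_isColorful_baseCol hq hm hR
  exact ⟨scalePt (3 * m) K p, S, hS,
    fun i => windsAroundSampled_of_coef_sample_ne_zero hK (hcoef i)⟩

lemma isCompact_termImage (T : GridTerm (Fin (n + 1))) : IsCompact (G.termImage T) := by
  rcases T with v | ⟨b, u, v⟩ | _
  · exact isCompact_singleton
  · exact isCompact_Icc.image_of_continuousOn (G.continuousOn_edge u v)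
  · exact isCompact_empty

lemma dist_edge_le_of_dist_samplePath_le {K : ℕ} (hK : 0 < K) {p : ℝ × ℝ} {u v : Fin (n + 1)}
    {j : ℕ} (h : dist p (G.samplePath K u v j) ≤
      dist (G.samplePath K u v j) (G.samplePath K u v (j + 1))) :
    dist p (G.edge u v (j / K)) ≤
      dist (G.edge u v (j / K)) (G.edge u v ((j + 1 : ℕ) / K)) + 3 * (1 / K) := by
  have hj := G.dist_samplePath_edge hK u v j
  have hj' := G.dist_samplePath_edge hK u v (j + 1)
  have hp := dist_triangle p (G.samplePath K u v j) (G.edge u v (j / K))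
  have hstep := dist_triangle4 (G.samplePath K u v j) (G.edge u v (j / K))
    (G.edge u v ((j + 1 : ℕ) / K)) (G.samplePath K u v (j + 1))
  rw [dist_comm (G.edge u v ((j + 1 : ℕ) / K))] at hstep
  linarith

lemma eventually_exists_mem_termImage_dist_le {T : GridTerm (Fin (n + 1))}
    (hT : ∀ x, T ≠ Sum.inr (Sum.inr x)) {ε : ℝ} (hε : 0 < ε) :
    ∀ᶠ K : ℕ in Filter.atTop, ∀ p, G.WindsAroundSampled K p T →
      ∃ x ∈ G.termImage T, dist p x ≤ ε := by
  rcases T with v | ⟨b, u, v⟩ | x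
  · exact (eventually_one_div_lt hε).mono fun K hK p hp => ⟨G.pos v, rfl, hp.trans hK.le⟩
  · obtain ⟨η, hη, huc⟩ := Metric.uniformContinuousOn_iff_le.mp
      (isCompact_Icc.uniformContinuousOn_of_continuous (G.continuousOn_edge u v)) (ε / 4)
      (by linarith)
    filter_upwards [eventually_one_div_lt hη, eventually_one_div_lt (ε := ε / 4) (by linarith),
      Filter.eventually_gt_atTop 0] with K hKη hKε hK p ⟨_, j, hj, hd⟩
    have hstep := huc _ (div_mem_unitInterval hj.le) _
      (div_mem_unitInterval (Nat.succ_le_of_lt hj)) ((dist_div_succ_div K j).trans_le hKη.le)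
    exact ⟨_, ⟨_, div_mem_unitInterval hj.le, rfl⟩,
      by linarith [G.dist_edge_le_of_dist_samplePath_le hK hd]⟩
  · exact absurd rfl (hT x)

variable {G}

lemma IsTriContractible.eventually_triCrossing_eq_zero {p₀ : ℝ × ℝ} {u v w : Fin (n + 1)}
    (h : G.IsTriContractible p₀ u v w) :
    ∃ ε > 0, ∀ᶠ K : ℕ in Filter.atTop, ∀ p, dist p p₀ < ε → G.triCrossing K p u v w = 0 := by
  obtain ⟨y, huv, hvw, huw, Huv, Hvw, Huw, hcorner⟩ := h
  obtain ⟨ε₁, hε₁, H₁⟩ := Huv.eventually_pathCrossing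
  obtain ⟨ε₂, hε₂, H₂⟩ := Hvw.eventually_pathCrossing
  obtain ⟨ε₃, hε₃, H₃⟩ := Huw.eventually_pathCrossing
  refine ⟨min ε₁ (min ε₂ ε₃), by positivity, ?_⟩
  filter_upwards [H₁, H₂, H₃, Filter.eventually_gt_atTop 0] with K H₁ H₂ H₃ hK p hp
  rw [lt_min_iff, lt_min_iff] at hp
  have hsample (u v : Fin (n + 1)) (j : ℕ) (_ : j ≤ K) := G.dist_samplePath_edge hK u v j
  rw [triCrossing, edgeCrossing, edgeCrossing, edgeCrossing, H₁ p hp.1 _ (hsample u v),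
    H₂ p hp.2.1 _ (hsample v w), H₃ p hp.2.2 _ (hsample u w),
    sideCrossing_congr fun s hs => (hcorner s hs).1,
    sideCrossing_congr fun s hs => (hcorner s hs).2.1,
    sideCrossing_congr fun s hs => (hcorner s hs).2.2]
  simp only [samplePath, G.samplePt_zero hK, G.samplePt_self hK]
  ring

section Limit

variable {F : Filter ℕ} [F.NeBot] {p : ℕ → ℝ × ℝ} {p₀ : ℝ × ℝ} {T : GridTerm (Fin (n + 1))}

lemma mem_termImage_of_tendsto (hF : F ≤ Filter.atTop) (hp : Filter.Tendsto p F (nhds p₀))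
    (hT : ∀ x, T ≠ Sum.inr (Sum.inr x)) (h : ∀ᶠ K in F, G.WindsAroundSampled K (p K) T) :
    p₀ ∈ G.termImage T := by
  rw [← (G.isCompact_termImage T).isClosed.closure_eq, Metric.mem_closure_iff]
  intro ε hε
  obtain ⟨K, hK, hd, hpK⟩ := (h.and (((G.eventually_exists_mem_termImage_dist_le hT
    (half_pos hε)).filter_mono hF).and
    (hp.eventually (Metric.ball_mem_nhds p₀ (half_pos hε))))).exists
  obtain ⟨x, hx, hxd⟩ := hd _ hK
  refine ⟨x, hx, ?_⟩
  linarith [dist_triangle_left p₀ x (p K), Metric.mem_ball.mp hpK]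

lemma windsAround_of_tendsto (hF : F ≤ Filter.atTop) (hp : Filter.Tendsto p F (nhds p₀))
    (h : ∀ᶠ K in F, G.WindsAroundSampled K (p K) T) : G.WindsAround p₀ T := by
  obtain ⟨K₀, hK₀⟩ := h.exists
  rcases T with v | ⟨b, u, v⟩ | ⟨u, v, w⟩
  · exact mem_termImage_of_tendsto hF hp (by simp) h
  · exact ⟨hK₀.1, mem_termImage_of_tendsto hF hp (by simp) h⟩
  · refine ⟨hK₀.1, fun hcon => ?_⟩
    obtain ⟨ε, hε, hev⟩ := hcon.eventually_triCrossing_eq_zero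
    obtain ⟨K, hK, hzero, hpK⟩ := (h.and ((hev.filter_mono hF).and
      (hp.eventually (Metric.ball_mem_nhds p₀ hε)))).exists
    exact hK.2 (hzero _ hpK)

end Limit

lemma WindsAroundSampled.card_verts {K : ℕ} {p : ℝ × ℝ}
    {x : Fin (n + 1) × Fin (n + 1) × Fin (n + 1)}
    (h : G.WindsAroundSampled K p (Sum.inr (Sum.inr x))) :
    (GridTerm.verts (Sum.inr (Sum.inr x))).card = 3 :=
  Finset.card_eq_three.mpr ⟨_, _, _, h.1.1.ne, (h.1.1.trans h.1.2).ne, h.1.2.ne, rfl⟩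

lemma exists_ne_triangle {m q K : ℕ} (hm : m + 1 = q) {G : PlaneDrawing (Fin (3 * m + 1))}
    {p : ℝ × ℝ} {S : ZMod q → GridTerm (Fin (3 * m + 1))}
    (hS : ∀ i j, i ≠ j → Disjoint (S i).verts (S j).verts)
    (hw : ∀ i, G.WindsAroundSampled K p (S i)) : ∃ i, ∀ x, S i ≠ Sum.inr (Sum.inr x) := by
  by_contra! h
  have : NeZero q := ⟨by omega⟩
  have hcard (i : ZMod q) : (S i).verts.card = 3 := by
    obtain ⟨x, hi⟩ := h i
    have hwi := hw i
    rw [hi] at hwi ⊢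
    exact hwi.card_verts
  have hunion := Finset.card_biUnion (s := Finset.univ) (t := fun i => (S i).verts)
    fun i _ j _ hij => hS i j hij
  have hle := Finset.card_le_univ (Finset.univ.biUnion fun i => (S i).verts)
  simp only [hcard, Finset.sum_const, Finset.card_univ, ZMod.card, Fintype.card_fin,
    smul_eq_mul] at hunion hle
  omega

lemma exists_ultrafilter_windsAroundSampled {m q : ℕ} (hq : q.Prime) (hm : m + 1 = q)
    (G : PlaneDrawing (Fin (3 * m + 1))) :
    ∃ (U : Ultrafilter ℕ) (p : ℕ → ℝ × ℝ) (S : ZMod q → GridTerm (Fin (3 * m + 1))),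
      ↑U ≤ (Filter.atTop : Filter ℕ) ∧ IsColorful (baseCol m) (fun i => (S i).verts) ∧
      ∀ᶠ K in (U : Filter ℕ), ∀ i, G.WindsAroundSampled K (p K) (S i) := by
  have : NeZero q := ⟨hq.ne_zero⟩
  have hex (K : ℕ) := exists_windsAroundSampled hq hm K.succ_pos G
  choose p S hS hw using hex
  have hU := Ultrafilter.of_le (Filter.atTop : Filter ℕ)
  obtain ⟨T, hT⟩ := (Ultrafilter.eventually_exists_iff (f := Ultrafilter.of Filter.atTop)
    (P := fun (T : ZMod q → GridTerm (Fin (3 * m + 1))) K => S (K - 1) = T)).mp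
    (Filter.Eventually.of_forall fun K => ⟨S (K - 1), rfl⟩)
  obtain ⟨K₀, hK₀⟩ := hT.exists
  refine ⟨_, fun K => p (K - 1), T, hU, hK₀ ▸ hS _, ?_⟩
  filter_upwards [hT, hU (Filter.eventually_gt_atTop 0)] with K hK hK0
  rw [← hK]
  simpa only [Nat.succ_eq_add_one, Nat.sub_add_cancel hK0] using hw (K - 1)

theorem exists_windsAround {m q : ℕ} (hq : q.Prime) (hm : m + 1 = q)
    (G : PlaneDrawing (Fin (3 * m + 1))) :
    ∃ (p : ℝ × ℝ) (S : ZMod q → GridTerm (Fin (3 * m + 1))),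
      IsColorful (baseCol m) (fun i => (S i).verts) ∧ ∀ i, G.WindsAround p (S i) := by
  obtain ⟨U, p, S, hU, hS, hw⟩ := exists_ultrafilter_windsAroundSampled hq hm G
  obtain ⟨K₀, hK₀⟩ := hw.exists
  obtain ⟨i₀, hi₀⟩ := exists_ne_triangle hm hS.disjoint hK₀
  have hbdd : ∀ᶠ K in (U : Filter ℕ), p K ∈ Metric.cthickening 1 (G.termImage (S i₀)) := by
    filter_upwards [hw, hU (G.eventually_exists_mem_termImage_dist_le hi₀ one_pos)] with K hK hd
    obtain ⟨x, hx, hxd⟩ := hd _ (hK i₀)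
    exact Metric.mem_cthickening_of_dist_le _ x _ _ hx hxd
  obtain ⟨p₀, -, hp₀⟩ := (G.isCompact_termImage (S i₀)).cthickening.ultrafilter_le_nhds
    (U.map p) (Filter.le_principal_iff.mpr hbdd)
  exact ⟨p₀, S, hS, fun i => windsAround_of_tendsto hU hp₀ (hw.mono fun K hK => hK i)⟩

end PlaneDrawing

/-! ### Winding partitions of continuous maps -/

section EdgePt

variable {N : ℕ} {a b i : Fin (N + 1)} {t : ℝ} {S : Finset (Fin (N + 1))}

/-- The point at time `t` of the edge of the simplex from the vertex `a` to the vertex `b`. -/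
def edgePt (a b : Fin (N + 1)) (t : ℝ) : Fin (N + 1) → ℝ :=
  (1 - t) • Pi.single a 1 + t • Pi.single b 1

lemma continuous_edgePt (a b : Fin (N + 1)) : Continuous (edgePt a b) := by
  unfold edgePt
  fun_prop

@[simp] lemma edgePt_zero (a b : Fin (N + 1)) : edgePt a b 0 = Pi.single a 1 := by simp [edgePt]

@[simp] lemma edgePt_one (a b : Fin (N + 1)) : edgePt a b 1 = Pi.single b 1 := by simp [edgePt]

lemma edgePt_apply_of_ne (ha : i ≠ a) (hb : i ≠ b) (t : ℝ) : edgePt a b t i = 0 := by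
  simp [edgePt, ha, hb]

lemma edgePt_mem_stdSimp (a b : Fin (N + 1)) (ht : t ∈ Set.Icc (0 : ℝ) 1) :
    edgePt a b t ∈ stdSimp N :=
  convex_stdSimplex ℝ _ (single_mem_stdSimplex ℝ a) (single_mem_stdSimplex ℝ b)
    (sub_nonneg.mpr ht.2) ht.1 (sub_add_cancel 1 t)

lemma edgePt_mem_simpFace (ha : a ∈ S) (hb : b ∈ S) (ht : t ∈ Set.Icc (0 : ℝ) 1) :
    edgePt a b t ∈ simpFace S :=
  ⟨edgePt_mem_stdSimp a b ht, fun _ hi =>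
    edgePt_apply_of_ne (ne_of_mem_of_not_mem ha hi).symm (ne_of_mem_of_not_mem hb hi).symm t⟩

lemma edgePt_mem_simpFaceBoundary (hS : 2 < S.card) (ha : a ∈ S) (hb : b ∈ S)
    (ht : t ∈ Set.Icc (0 : ℝ) 1) : edgePt a b t ∈ simpFaceBoundary S := by
  obtain ⟨c, hc, hc'⟩ := Finset.exists_mem_notMem_of_card_lt_card
    ((Finset.card_le_two (a := a) (b := b)).trans_lt hS)
  simp only [Finset.mem_insert, Finset.mem_singleton, not_or] at hc'
  exact ⟨edgePt_mem_simpFace ha hb ht, c, hc, edgePt_apply_of_ne hc'.1 hc'.2 t⟩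

lemma edgePt_mem_skel (a b : Fin (N + 1)) (ht : t ∈ Set.Icc (0 : ℝ) 1) :
    edgePt a b t ∈ skel N 1 := by
  have hsupp : {i | edgePt a b t i ≠ 0} ⊆ {a, b} := fun i hi => by
    by_contra h
    simp only [Set.mem_insert_iff, Set.mem_singleton_iff, not_or] at h
    exact hi (edgePt_apply_of_ne h.1 h.2 t)
  exact ⟨edgePt_mem_stdSimp a b ht,
    (Set.ncard_le_ncard hsupp).trans ((Set.ncard_insert_le a {b}).trans (by simp))⟩

end EdgePt

section SkelDrawing

variable {N : ℕ} {f : (Fin (N + 1) → ℝ) → Euc 2} {π : Equiv.Perm (Fin (N + 1))} {p : ℝ × ℝ}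

/-- The Euclidean plane as a product. -/
def planeHomeo : Euc 2 ≃ₜ ℝ × ℝ :=
  (EuclideanSpace.equiv (Fin 2) ℝ).toHomeomorph.trans Homeomorph.finTwoArrow

/-- The drawing by a map on the 1-skeleton of a simplex, with vertices renamed by `π`. -/
def skelDrawing (hf : ContinuousOn f (skel N 1)) (π : Equiv.Perm (Fin (N + 1))) :
    PlaneDrawing (Fin (N + 1)) where
  pos v := planeHomeo (f (Pi.single (π v) 1))
  edge u v t := planeHomeo (f (edgePt (π u) (π v) t))
  continuousOn_edge _ _ := planeHomeo.continuous.comp_continuousOn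
    (hf.comp (continuous_edgePt _ _).continuousOn fun _ ht => edgePt_mem_skel _ _ ht)
  edge_zero _ _ := by rw [edgePt_zero]
  edge_one _ _ := by rw [edgePt_one]

section EdgeLift

variable {S : Finset (Fin (N + 1))} (hS : 2 < S.card) {a b : Fin (N + 1)} (ha : a ∈ S) (hb : b ∈ S)

/-- The edge `a b` as a path in the boundary of a face, constant outside the unit interval. -/
def boundaryEdge (t : ℝ) : simpFaceBoundary S :=
  ⟨edgePt a b (Set.projIcc 0 1 zero_le_one t),
    edgePt_mem_simpFaceBoundary hS ha hb (Set.projIcc 0 1 zero_le_one t).2⟩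

lemma continuous_boundaryEdge : Continuous (boundaryEdge hS ha hb) :=
  ((continuous_edgePt a b).comp (continuous_subtype_val.comp continuous_projIcc)).subtype_mk _

lemma coe_boundaryEdge {t : ℝ} (ht : t ∈ Set.Icc (0 : ℝ) 1) :
    (boundaryEdge hS ha hb t : Fin (N + 1) → ℝ) = edgePt a b t :=
  congrArg (fun s : Set.Icc (0 : ℝ) 1 => edgePt a b s) (Set.projIcc_of_mem zero_le_one ht)

end EdgeLift

section Homotopy

variable {S : Finset (Fin (N + 1))}
  {g : C(simpFaceBoundary S, ({planeHomeo.symm p}ᶜ : Set (Euc 2)))}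
  {y : ({planeHomeo.symm p}ᶜ : Set (Euc 2))} (H : g.Homotopy (ContinuousMap.const _ y))

/-- The track of a path `e` in the boundary of a face under a contraction of that boundary. -/
def homotopyTrack (e : ℝ → simpFaceBoundary S) (x : ℝ × ℝ) : ℝ × ℝ :=
  planeHomeo (H (Set.projIcc 0 1 zero_le_one x.1, e x.2))

lemma isPathContraction_homotopyTrack {e : ℝ → simpFaceBoundary S} (he : Continuous e) :
    IsPathContraction (fun t => planeHomeo (g (e t))) p (planeHomeo y) (homotopyTrack H e) where
  continuousOn := (planeHomeo.continuous.comp (continuous_subtype_val.comp (H.continuous.comp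
    ((continuous_projIcc.comp continuous_fst).prodMk (he.comp continuous_snd))))).continuousOn
  ne x _ hx := (H (Set.projIcc 0 1 zero_le_one x.1, e x.2)).2 (planeHomeo.eq_symm_apply.mpr hx)
  bot t _ := by
    have h0 : Set.projIcc (0 : ℝ) 1 zero_le_one 0 = 0 := Set.projIcc_left _
    simp only [homotopyTrack, h0, H.apply_zero]
  top t _ := by
    have h1 : Set.projIcc (0 : ℝ) 1 zero_le_one 1 = 1 := Set.projIcc_right _
    simp only [homotopyTrack, h1, H.apply_one, ContinuousMap.const_apply]

end Homotopy

variable {hf : ContinuousOn f (skel N 1)} {u v w : Fin (N + 1)}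

lemma inWne_of_not_isTriContractible (huv : u < v) (hvw : v < w)
    (h : ¬ (skelDrawing hf π).IsTriContractible p u v w) :
    InWne 2 f {π u, π v, π w} (planeHomeo.symm p) := by
  refine Or.inr fun ⟨g, y, hg, ⟨H⟩⟩ => h ?_
  have hcard : 2 < ({π u, π v, π w} : Finset (Fin (N + 1))).card := by
    rw [Finset.card_eq_three.mpr ⟨π u, π v, π w, π.injective.ne huv.ne,
      π.injective.ne (huv.trans hvw).ne, π.injective.ne hvw.ne, rfl⟩]
    norm_num
  have hpath {a b : Fin (N + 1)} (ha : π a ∈ ({π u, π v, π w} : Finset (Fin (N + 1))))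
      (hb : π b ∈ ({π u, π v, π w} : Finset (Fin (N + 1)))) :
      IsPathContraction ((skelDrawing hf π).edge a b) p (planeHomeo y)
        (homotopyTrack H (boundaryEdge hcard ha hb)) := by
    refine (isPathContraction_homotopyTrack H (continuous_boundaryEdge hcard ha hb)).congr
      fun t ht => ?_
    rw [hg, coe_boundaryEdge hcard ha hb ht, skelDrawing]
  have h0 : (0 : ℝ) ∈ Set.Icc (0 : ℝ) 1 := Set.left_mem_Icc.mpr zero_le_one
  have h1 : (1 : ℝ) ∈ Set.Icc (0 : ℝ) 1 := Set.right_mem_Icc.mpr zero_le_one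
  refine ⟨planeHomeo y, _, _, _, hpath (by simp) (by simp), hpath (by simp) (by simp),
    hpath (by simp) (by simp), fun s _ => ⟨?_, ?_, ?_⟩⟩ <;>
    refine congrArg (fun x => planeHomeo (H (Set.projIcc 0 1 zero_le_one s, x)))
      (Subtype.ext ?_) <;>
    simp only [coe_boundaryEdge, h0, h1, edgePt_zero, edgePt_one]

lemma windsAround_vertex (h : (skelDrawing hf π).WindsAround p (Sum.inl v)) :
    planeHomeo.symm p ∈ f '' simpFace {π v} :=
  ⟨Pi.single (π v) 1, edgePt_zero (π v) (π v) ▸ edgePt_mem_simpFace (by simp) (by simp) (by simp),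
    planeHomeo.eq_symm_apply.mpr h.symm⟩

lemma windsAround_edge {b : Bool}
    (h : (skelDrawing hf π).WindsAround p (Sum.inr (Sum.inl (b, u, v)))) :
    planeHomeo.symm p ∈ f '' simpFace {π u, π v} := by
  obtain ⟨-, t, ht, hpt⟩ := h
  exact ⟨edgePt (π u) (π v) t, edgePt_mem_simpFace (by simp) (by simp) ht,
    planeHomeo.eq_symm_apply.mpr hpt⟩

lemma isWinding_of_windsAround {T : GridTerm (Fin (N + 1))}
    (h : (skelDrawing hf π).WindsAround p T) :
    ((T.verts.map π.toEmbedding).card ≤ 2 →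
      planeHomeo.symm p ∈ f '' simpFace (T.verts.map π.toEmbedding)) ∧
    ((T.verts.map π.toEmbedding).card = 3 →
      InWne 2 f (T.verts.map π.toEmbedding) (planeHomeo.symm p)) := by
  rcases T with v | ⟨b, u, v⟩ | ⟨u, v, w⟩
  · exact ⟨fun _ => by simpa [GridTerm.verts] using windsAround_vertex h,
      fun hcard => by simp [GridTerm.verts] at hcard⟩
  · refine ⟨fun _ => by simpa [GridTerm.verts] using windsAround_edge h, fun hcard => ?_⟩
    have hle : ({u, v} : Finset (Fin (N + 1))).card ≤ 2 := Finset.card_le_two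
    rw [Finset.card_map, GridTerm.verts] at hcard
    omega
  · have hT : GridTerm.verts (Sum.inr (Sum.inr (u, v, w))) = {u, v, w} := rfl
    refine ⟨fun hcard => ?_, fun _ => ?_⟩
    · rw [Finset.card_map, hT, Finset.card_eq_three.mpr
        ⟨u, v, w, h.1.1.ne, (h.1.1.trans h.1.2).ne, h.1.2.ne, rfl⟩] at hcard
      omega
    · simpa [hT] using inWne_of_not_isTriContractible h.1.1 h.1.2 h.2

end SkelDrawing

/-- `P` covers all vertices and its members contain at most one vertex of every color. -/
structure IsRainbowCover {V C : Type*} (χ : V → C) (P : Finset (Finset V)) : Prop where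
  cover : ∀ v, ∃ S ∈ P, v ∈ S
  injOn : ∀ S ∈ P, Set.InjOn χ S

section Rainbow

lemma GridTerm.verts_nonempty {V : Type*} [DecidableEq V] (T : GridTerm V) : T.verts.Nonempty := by
  rcases T with v | ⟨b, u, v⟩ | ⟨u, v, w⟩ <;> simp [GridTerm.verts]

lemma GridTerm.card_verts_le_three {V : Type*} [DecidableEq V] (T : GridTerm V) :
    T.verts.card ≤ 3 := by
  rcases T with v | ⟨b, u, v⟩ | ⟨u, v, w⟩
  · simp [GridTerm.verts]
  · exact Finset.card_le_two.trans (by norm_num)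
  · exact Finset.card_le_three

lemma injective_of_nonempty_of_disjoint {ι V : Type*} {P : ι → Finset V}
    (hne : ∀ i, (P i).Nonempty) (hP : ∀ i j, i ≠ j → Disjoint (P i) (P j)) :
    Function.Injective P := fun i j hij => by
  by_contra h
  exact (hne j).ne_empty (disjoint_self.mp (hij ▸ hP i j h))

variable {V : Type*} [DecidableEq V] {q : ℕ} [NeZero q] {P : ZMod q → Finset V}

lemma isRainbowCover_image {col : V → Option (Fin 3)} (hP : IsColorful col P)
    (π : Equiv.Perm V) :
    IsRainbowCover (col ∘ π.symm) (Finset.univ.image fun i => (P i).map π.toEmbedding) where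
  cover v := by
    obtain ⟨i, hi⟩ := hP.cover (π.symm v)
    exact ⟨_, Finset.mem_image_of_mem _ (Finset.mem_univ i), by simpa using hi⟩
  injOn := by
    simp only [Finset.mem_image, Finset.mem_univ, true_and, forall_exists_index,
      forall_apply_eq_imp_iff]
    intro i u hu v hv huv
    by_contra hne
    simp only [Finset.coe_map, Equiv.coe_toEmbedding, Equiv.image_eq_preimage_symm,
      Set.mem_preimage, Finset.mem_coe] at hu hv
    exact hP.rainbow i _ hu _ hv (fun h => hne (π.symm.injective h)) huv

end Rainbow

theorem exists_isWindingPartition_isRainbowCover {m q : ℕ} (hq : q.Prime) (hm : m + 1 = q)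
    {f : (Fin (3 * m + 1) → ℝ) → Euc 2} (hf : ContinuousOn f (skel (3 * m) 1))
    (π : Equiv.Perm (Fin (3 * m + 1))) :
    ∃ P, IsWindingPartition 2 q f P ∧ IsRainbowCover (baseCol m ∘ π.symm) P := by
  have : NeZero q := ⟨hq.ne_zero⟩
  obtain ⟨p, S, hcol, hS⟩ := PlaneDrawing.exists_windsAround hq hm (skelDrawing hf π)
  have hne (i : ZMod q) : ((S i).verts.map π.toEmbedding).Nonempty :=
    (GridTerm.verts_nonempty _).map
  have hdis (i j : ZMod q) (hij : i ≠ j) :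
      Disjoint ((S i).verts.map π.toEmbedding) ((S j).verts.map π.toEmbedding) :=
    (Finset.disjoint_map _).mpr (hcol.disjoint i j hij)
  refine ⟨_, ⟨?_, ?_, ?_, ?_, planeHomeo.symm p, ?_⟩, isRainbowCover_image hcol π⟩
  · rw [Finset.card_image_of_injective _ (injective_of_nonempty_of_disjoint hne hdis),
      Finset.card_univ, ZMod.card]
  all_goals simp only [Finset.mem_image, Finset.mem_univ, true_and, forall_exists_index,
    forall_apply_eq_imp_iff]
  · exact hne
  · exact fun i => (Finset.card_map _).trans_le (GridTerm.card_verts_le_three _)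
  · exact fun i j hij => hdis i j fun h => hij (by rw [h])
  · exact fun i => isWinding_of_windsAround (hS i)

/-! ### Counting winding partitions -/

section PermutationCount

open Nat

variable {m q : ℕ}

lemma card_filter_perm_comp_symm_le {V C : Type*} [Fintype V] [DecidableEq V] [DecidableEq C]
    (χ₀ χ : V → C) :
    (Finset.univ.filter fun π : Equiv.Perm V => χ₀ ∘ π.symm = χ).card ≤
      Fintype.card {g : Equiv.Perm V // χ₀ ∘ g = χ₀} := by
  obtain h | ⟨π₀, hπ₀⟩ :=
    (Finset.univ.filter fun π : Equiv.Perm V => χ₀ ∘ π.symm = χ).eq_empty_or_nonempty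
  · simp [h]
  rw [Finset.mem_filter] at hπ₀
  rw [Fintype.card_subtype]
  refine Finset.card_le_card_of_injOn (fun π => π₀.trans π.symm) (fun π hπ => ?_) fun π _ π' _ h =>
    Equiv.symm_bijective.injective ?_
  · simp only [Finset.coe_filter, Finset.mem_univ, true_and, Set.mem_ofPred_eq] at hπ ⊢
    rw [Equiv.coe_trans, ← Function.comp_assoc, hπ, ← hπ₀.2, Function.comp_assoc,
      Equiv.symm_comp_self, Function.comp_id]
  · ext v
    simpa using Equiv.congr_fun h (π₀.symm v)

lemma card_perm_baseCol_comp (m : ℕ) :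
    Fintype.card {g : Equiv.Perm (Fin (3 * m + 1)) // baseCol m ∘ g = baseCol m} = m ! ^ 3 := by
  have hnone : Fintype.card {v // baseCol m v = none} = 1 :=
    Fintype.card_eq_one_iff.mpr ⟨⟨baseApex m, baseCol_eq_none.mpr rfl⟩, fun v =>
      Subtype.ext (baseCol_eq_none.mp v.2)⟩
  have hsome (c : Fin 3) : Fintype.card {v // baseCol m v = some c} = m :=
    (Fintype.card_subtype _).trans (card_baseClass m c)
  rw [DomMulAct.stabilizer_card, Fintype.prod_option]
  simp [hnone, hsome]

lemma descFactorial_three_le (k : ℕ) : Nat.descFactorial 3 k ≤ 6 := by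
  rcases le_or_gt k 3 with h | h
  · interval_cases k <;> decide
  · simp [Nat.descFactorial_of_lt h]

lemma card_isRainbowCover_le {V : Type*} [Finite V] (P : Finset (Finset V)) (s : V) :
    Nat.card {χ : V → Option (Fin 3) // (∀ v, χ v = none ↔ v = s) ∧ IsRainbowCover χ P} ≤
      6 ^ P.card := by
  classical
  have := Fintype.ofFinite V
  let colors : {χ : V → Option (Fin 3) // (∀ v, χ v = none ↔ v = s) ∧ IsRainbowCover χ P} →
      ∀ S : P, {v // v ∈ S.1 ∧ v ≠ s} ↪ Fin 3 := fun χ S =>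
    { toFun := fun v => (χ.1 v.1).get
        (Option.isSome_iff_ne_none.mpr fun h => v.2.2 ((χ.2.1 v.1).mp h))
      inj' := fun v w h =>
        Subtype.ext (χ.2.2.injOn S.1 S.2 v.2.1 w.2.1 (Option.get_inj.mp h)) }
  have hcolors : Function.Injective colors := fun χ χ' h => Subtype.ext (funext fun v => by
    by_cases hv : v = s
    · rw [(χ.2.1 v).mpr hv, (χ'.2.1 v).mpr hv]
    · obtain ⟨S, hS, hvS⟩ := χ.2.2.cover v
      exact Option.get_inj.mp (DFunLike.congr_fun (congrFun h ⟨S, hS⟩) ⟨v, hvS, hv⟩))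
  calc _ ≤ ∏ S : P, Nat.card ({v // v ∈ S.1 ∧ v ≠ s} ↪ Fin 3) :=
        (Nat.card_le_card_of_injective colors hcolors).trans_eq Nat.card_pi
    _ ≤ ∏ _S : P, 6 := by
        refine Finset.prod_le_prod' fun S _ => ?_
        rw [Nat.card_eq_fintype_card, Fintype.card_embedding_eq, Fintype.card_fin]
        exact descFactorial_three_le _
    _ = 6 ^ P.card := by simp

lemma card_image_baseCol_comp_symm_le (P : Finset (Finset (Fin (3 * m + 1))))
    {A : Finset (Equiv.Perm (Fin (3 * m + 1)))}
    (hA : ∀ π ∈ A, IsRainbowCover (baseCol m ∘ π.symm) P) :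
    (A.image fun π => baseCol m ∘ π.symm).card ≤ (3 * m + 1) * 6 ^ P.card := by
  classical
  have hsub : (A.image fun π => baseCol m ∘ π.symm) ⊆
      Finset.univ.biUnion fun s => Finset.univ.filter fun χ : Fin (3 * m + 1) → Option (Fin 3) =>
        (∀ v, χ v = none ↔ v = s) ∧ IsRainbowCover χ P := by
    refine Finset.image_subset_iff.mpr fun π hπ => ?_
    simp only [Finset.mem_biUnion, Finset.mem_univ, true_and, Finset.mem_filter]
    exact ⟨π (baseApex m), fun v => baseCol_eq_none.trans π.symm_apply_eq, hA π hπ⟩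
  refine (Finset.card_le_card hsub).trans ((Finset.card_biUnion_le_card_mul _ _ (6 ^ P.card)
    fun s _ => ?_).trans_eq (by simp))
  rw [← Fintype.card_subtype, ← Nat.card_eq_fintype_card]
  exact card_isRainbowCover_le P s

lemma card_perm_isRainbowCover_le (P : Finset (Finset (Fin (3 * m + 1))))
    {A : Finset (Equiv.Perm (Fin (3 * m + 1)))}
    (hA : ∀ π ∈ A, IsRainbowCover (baseCol m ∘ π.symm) P) :
    A.card ≤ m ! ^ 3 * ((3 * m + 1) * 6 ^ P.card) := by
  refine (Finset.card_le_mul_card_image (f := fun π => baseCol m ∘ π.symm) A (m ! ^ 3)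
    fun χ _ => ?_).trans (Nat.mul_le_mul_left _ (card_image_baseCol_comp_symm_le P hA))
  exact (Finset.card_le_card (Finset.filter_subset_filter _ (Finset.subset_univ _))).trans
    ((card_filter_perm_comp_symm_le _ χ).trans_eq (card_perm_baseCol_comp m))

lemma factorial_le_ncard_isWindingPartition_mul (hq : q.Prime) (hm : m + 1 = q)
    {f : (Fin (3 * m + 1) → ℝ) → Euc 2} (hf : ContinuousOn f (skel (3 * m) 1)) :
    (3 * m + 1)! ≤ {P | IsWindingPartition 2 q f P}.ncard *
      (m ! ^ 3 * ((3 * m + 1) * 6 ^ (m + 1))) := by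
  classical
  have hsub : (Finset.univ : Finset (Equiv.Perm (Fin (3 * m + 1)))) ⊆
      {P | IsWindingPartition 2 q f P}.toFinset.biUnion fun P =>
        Finset.univ.filter fun π => IsRainbowCover (baseCol m ∘ π.symm) P := fun π _ => by
    obtain ⟨P, hP, hcov⟩ := exists_isWindingPartition_isRainbowCover hq hm hf π
    simp only [Finset.mem_biUnion, Set.mem_toFinset, Set.mem_ofPred_eq, Finset.mem_filter,
      Finset.mem_univ, true_and]
    exact ⟨P, hP, hcov⟩
  rw [Set.ncard_eq_toFinset_card' {P | IsWindingPartition 2 q f P}]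
  calc (3 * m + 1)! = (Finset.univ : Finset (Equiv.Perm (Fin (3 * m + 1)))).card := by
        rw [Finset.card_univ, Fintype.card_perm, Fintype.card_fin]
    _ ≤ _ := (Finset.card_le_card hsub).trans (Finset.card_biUnion_le_card_mul _ _ _ fun P hP => by
        have hcard : P.card = m + 1 := (Set.mem_toFinset.mp hP).1.trans hm.symm
        exact hcard ▸ card_perm_isRainbowCover_le P fun π hπ => (Finset.mem_filter.mp hπ).2)

end PermutationCount

section Estimate

open Nat

variable {m T : ℕ}

lemma factorial_mul_pow_le {i : ℕ} (hi : i ≤ m) :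
    m ! * (3 * m * (m + 1)) ^ i * (3 * m - i)! ≤ (m + i)! * (3 * m)! := by
  induction i with
  | zero => simp
  | succ i ih =>
    have hfac : (3 * m - i)! = (3 * m - i) * (3 * m - (i + 1))! := by
      rw [show 3 * m - i = 3 * m - (i + 1) + 1 by omega, Nat.factorial_succ]
    have hstep : 3 * m * (m + 1) ≤ (m + i + 1) * (3 * m - i) := by
      obtain ⟨k, rfl⟩ := Nat.exists_eq_add_of_le hi
      rw [show 3 * (i + 1 + k) - i = 2 * (i + 1 + k) + k + 1 by omega]
      nlinarith [Nat.zero_le (i * k), Nat.zero_le (i * i)]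
    calc m ! * (3 * m * (m + 1)) ^ (i + 1) * (3 * m - (i + 1))!
        = (3 * m * (m + 1)) * (m ! * (3 * m * (m + 1)) ^ i * (3 * m - (i + 1))!) := by ring
      _ ≤ ((m + i + 1) * (3 * m - i)) * (m ! * (3 * m * (m + 1)) ^ i * (3 * m - (i + 1))!) :=
          Nat.mul_le_mul_right _ hstep
      _ = (m + i + 1) * (m ! * (3 * m * (m + 1)) ^ i * (3 * m - i)!) := by rw [hfac]; ring
      _ ≤ (m + i + 1) * ((m + i)! * (3 * m)!) := Nat.mul_le_mul_left _ (ih (by omega))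
      _ = (m + (i + 1))! * (3 * m)! := by rw [← Nat.add_assoc, Nat.factorial_succ]; ring

lemma pow_le_mul_of_factorial_le (h : (3 * m + 1)! ≤ T * (m ! ^ 3 * ((3 * m + 1) * 6 ^ (m + 1)))) :
    (3 * m * (m + 1)) ^ m ≤ T * (m ! ^ 2 * 6 ^ (m + 1)) := by
  have hpow : m ! * (3 * m * (m + 1)) ^ m ≤ (3 * m)! := by
    have h := factorial_mul_pow_le (le_refl m)
    rw [show 3 * m - m = m + m by omega, mul_comm (m + m)!] at h
    exact Nat.le_of_mul_le_mul_right h (Nat.factorial_pos _)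
  refine Nat.le_of_mul_le_mul_left (c := (3 * m + 1) * m !) ?_ (by positivity)
  calc (3 * m + 1) * m ! * (3 * m * (m + 1)) ^ m
      = (3 * m + 1) * (m ! * (3 * m * (m + 1)) ^ m) := mul_assoc _ _ _
    _ ≤ (3 * m + 1) * (3 * m)! := Nat.mul_le_mul_left _ hpow
    _ = (3 * m + 1)! := (Nat.factorial_succ _).symm
    _ ≤ T * (m ! ^ 3 * ((3 * m + 1) * 6 ^ (m + 1))) := h
    _ = (3 * m + 1) * m ! * (T * (m ! ^ 2 * 6 ^ (m + 1))) := by ring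

lemma six_mul_pow_le (hm : 4 ≤ m) : 6 * ((m : ℝ) + 1) ^ m ≤ (2 * m) ^ m := by
  have hm' : (4 : ℝ) ≤ m := by exact_mod_cast hm
  have hsix : (6 : ℝ) ≤ (8 / 5) ^ m :=
    le_trans (by norm_num) (pow_le_pow_right₀ (by norm_num : (1 : ℝ) ≤ 8 / 5) hm)
  calc 6 * ((m : ℝ) + 1) ^ m ≤ (8 / 5) ^ m * ((m : ℝ) + 1) ^ m := by gcongr
    _ = (8 / 5 * ((m : ℝ) + 1)) ^ m := (mul_pow _ _ _).symm
    _ ≤ (2 * m) ^ m := pow_le_pow_left₀ (by positivity) (by linarith) m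

lemma half_pow_mul_le (hm : 4 ≤ m) :
    (((m : ℝ) + 1) / 2) ^ (2 * m) * 6 ^ (m + 1) ≤ (3 * m * (m + 1)) ^ m := by
  calc (((m : ℝ) + 1) / 2) ^ (2 * m) * 6 ^ (m + 1)
      = ((((m : ℝ) + 1) / 2) ^ 2 * 6) ^ m * 6 := by rw [mul_pow, ← pow_mul, pow_succ, mul_assoc]
    _ = (3 / 2 * ((m : ℝ) + 1) * (m + 1)) ^ m * 6 := by congr 2; ring
    _ = (3 / 2 * ((m : ℝ) + 1)) ^ m * (6 * ((m : ℝ) + 1) ^ m) := by rw [mul_pow]; ring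
    _ ≤ (3 / 2 * ((m : ℝ) + 1)) ^ m * (2 * m) ^ m := by gcongr ?_ * ?_; exact six_mul_pow_le hm
    _ = (3 * m * (m + 1)) ^ m := by rw [← mul_pow]; ring

lemma bound_of_factorial_le (hm : 4 ≤ m)
    (h : (3 * m + 1)! ≤ T * (m ! ^ 3 * ((3 * m + 1) * 6 ^ (m + 1)))) :
    1 / (m ! : ℝ) ^ 2 * (((m + 1 : ℕ) : ℝ) / 2) ^ (2 * m) ≤ T := by
  have hT : ((3 : ℝ) * m * (m + 1)) ^ m ≤ T * ((m ! : ℝ) ^ 2 * 6 ^ (m + 1)) := by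
    exact_mod_cast pow_le_mul_of_factorial_le h
  rw [one_div_mul_eq_div, div_le_iff₀ (by positivity), Nat.cast_succ]
  refine le_of_mul_le_mul_right ((half_pow_mul_le hm).trans (hT.trans_eq ?_))
    (by positivity : (0 : ℝ) < 6 ^ (m + 1))
  exact (mul_assoc _ _ _).symm

end Estimate

section TwoPartitions

variable {m q : ℕ} {f : (Fin (3 * m + 1) → ℝ) → Euc 2}

lemma one_le_ncard_isWindingPartition (hq : q.Prime) (hm : m + 1 = q)
    (hf : ContinuousOn f (skel (3 * m) 1)) : 1 ≤ {P | IsWindingPartition 2 q f P}.ncard := by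
  obtain ⟨P, hP, -⟩ := exists_isWindingPartition_isRainbowCover hq hm hf 1
  exact Nat.one_le_iff_ne_zero.mpr (Set.ncard_ne_zero_of_mem hP (Set.toFinite _))

lemma exists_one_lt_card_of_cover {V : Type*} [Fintype V] {P : Finset (Finset V)}
    (hcov : ∀ v, ∃ S ∈ P, v ∈ S) (hP : P.card < Fintype.card V) : ∃ S ∈ P, 1 < S.card := by
  classical
  by_contra! h
  have huniv : Finset.univ ⊆ P.biUnion id := fun v _ => Finset.mem_biUnion.mpr (hcov v)
  have hcard := (Finset.card_le_card huniv).trans (Finset.card_biUnion_le_card_mul _ _ 1 h)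
  rw [Finset.card_univ] at hcard
  omega

lemma two_le_ncard_isWindingPartition (hq : q.Prime) (hm : m + 1 = q) (h2 : 2 ≤ m)
    (hf : ContinuousOn f (skel (3 * m) 1)) : 2 ≤ {P | IsWindingPartition 2 q f P}.ncard := by
  obtain ⟨P, hP, hcov⟩ := exists_isWindingPartition_isRainbowCover hq hm hf 1
  obtain ⟨S, hS, hcard⟩ := exists_one_lt_card_of_cover hcov.cover
    (by rw [hP.1, Fintype.card_fin]; omega)
  obtain ⟨u, hu, v, hv, huv⟩ := Finset.one_lt_card.mp hcard
  -- Give two vertices of one member of `P` the same color: then `P` is no longer rainbow.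
  obtain ⟨π, hπu, hπv⟩ := MulAction.is_two_pretransitive_iff.mp
    (Equiv.Perm.isMultiplyPretransitive (Fin (3 * m + 1)) 2)
    (show (⟨0, by omega⟩ : Fin (3 * m + 1)) ≠ ⟨1, by omega⟩ by simp) huv
  obtain ⟨P', hP', hcov'⟩ := exists_isWindingPartition_isRainbowCover hq hm hf π
  have hne : P ≠ P' := by
    rintro rfl
    refine huv (hcov'.injOn S hS hu hv ?_)
    rw [Function.comp_apply, Function.comp_apply, ← hπu, ← hπv, Equiv.Perm.smul_def,
      Equiv.Perm.smul_def, Equiv.symm_apply_apply, Equiv.symm_apply_apply,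
      baseCol_eq_some_zero.mpr (show 0 < m by omega),
      baseCol_eq_some_zero.mpr (show 1 < m by omega)]
  exact (Set.ncard_pair hne).symm.le.trans
    (Set.ncard_le_ncard (Set.pair_subset hP hP') (Set.toFinite _))

end TwoPartitions

/-- For prime `q`, every continuous map `Δ_1^{3(q-1)} → ℝ²` has at least
`(1/((q-1)!)²) · (q/2)^{2(q-1)}` winding partitions. -/
theorem winding_count_dim_two (q : ℕ) (hq : q.Prime)
    (f : (Fin (3*(q-1)+1) → ℝ) → Euc 2)
    (hf : ContinuousOn f (skel (3*(q-1)) 1)) :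
    (1 / ((Nat.factorial (q-1) : ℝ))^2) * ((q : ℝ)/2)^(2*(q-1)) ≤
      (({P : Finset (Finset (Fin (3*(q-1)+1))) |
          IsWindingPartition 2 q f P}.ncard : ℕ) : ℝ) := by
  have hm : q - 1 + 1 = q := Nat.sub_add_cancel hq.one_le
  obtain h4 | hge : q < 4 ∨ 4 ≤ q := Nat.lt_or_ge q 4
  · obtain rfl | rfl : q = 2 ∨ q = 3 := by have := hq.two_le; omega
    · refine le_trans (by norm_num) (Nat.one_le_cast.mpr (one_le_ncard_isWindingPartition hq hm hf))
    · refine le_trans ?_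
        (Nat.ofNat_le_cast.mpr (two_le_ncard_isWindingPartition hq hm le_rfl hf))
      norm_num [Nat.factorial]
  · have h4 : q ≠ 4 := fun h => absurd (h ▸ hq) (by decide)
    have hbound :=
      bound_of_factorial_le (by omega) (factorial_le_ncard_isWindingPartition_mul hq hm hf)
    rwa [hm] at hbound
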